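/- arXiv:2511.13085 — 3 statements merged into one kernel-verified Lean document; each statement's English description precedes it below -/
import Mathlib

section
/- Under Assumption 1, there exists a constant η₀ ∈ (0,1) depending only on m and L such that for every step size η ∈ (0, η₀), the PRLMC Markov chain (X̃_n)_{n≥0} admits a unique stationary distribution π_η, and its second moment satisfies ∫_{ℝ^d} |x|² π_η(dx) ≤ (d/m)·{2 + 4η²L²(2 − 1/K) + L²(1 − 1/K)}. -/
open MeasureTheory ProbabilityTheory Filter
open scoped ENNReal NNReal RealInnerProductSpace Topology BigOperators

noncomputable section

/-- Euclidean space `ℝ^d`. -/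
abbrev Euc (d : ℕ) : Type := EuclideanSpace ℝ (Fin d)

/-- Assumption 1: `U` is `C¹`, `m`-strongly convex and `L`-gradient Lipschitz
(expressed through the two-sided quadratic bound), with `∇U(0) = 0`. -/
def StrongAssumption {d : ℕ} (U : Euc d → ℝ) (m L : ℝ) : Prop :=
  ContDiff ℝ 1 U ∧ 0 < m ∧ m ≤ L ∧
  (∀ x y : Euc d,
    m / 2 * ‖x - y‖ ^ 2 ≤ U y - U x - ⟪gradient U x, y - x⟫ ∧
    U y - U x - ⟪gradient U x, y - x⟫ ≤ L / 2 * ‖x - y‖ ^ 2) ∧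
  gradient U 0 = 0

/-- Assumption 3: `U` is `C³` with third derivative uniformly bounded by `Lt`. -/
def ThirdDerivBounded {d : ℕ} (U : Euc d → ℝ) (Lt : ℝ) : Prop :=
  ContDiff ℝ 3 U ∧ ∀ x : Euc d, ‖iteratedFDeriv ℝ 3 U x‖ ≤ Lt

/-- The standard Gaussian measure on `ℝ^d`. -/
def stdGaussian (d : ℕ) : Measure (Euc d) :=
  (Measure.pi fun _ : Fin d => ProbabilityTheory.gaussianReal 0 1).map
    ⇑(EuclideanSpace.equiv (Fin d) ℝ).symm

/-- Bernoulli(p) distribution on `ℝ`, giving mass `p` to `1` and `1-p` to `0`. -/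
def bern (p : ℝ≥0∞) : Measure ℝ :=
  p • Measure.dirac (1 : ℝ) + (1 - p) • Measure.dirac (0 : ℝ)

/-- The `i`-th PRLMC midpoint. -/
def prlmcMid {d : ℕ} (U : Euc d → ℝ) (η : ℝ) (K : ℕ) (x : Euc d)
    (g : Fin K → Euc d) (i : Fin K) : Euc d :=
  x - (((i : ℝ) * η / (K : ℝ)) • gradient U x) + Real.sqrt (2 * (i : ℝ) * η / (K : ℝ)) • g i

/-- One step of the PRLMC scheme with step size `η`, Bernoulli variables `h`,
midpoint Gaussians `g` and driving Gaussian `z`. -/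
def prlmcStep {d : ℕ} (U : Euc d → ℝ) (η : ℝ) (K : ℕ) (x : Euc d)
    (h : Fin K → ℝ) (g : Fin K → Euc d) (z : Euc d) : Euc d :=
  x - η • gradient U x
    + η • ∑ i : Fin K, h i • (gradient U x - gradient U (prlmcMid U η K x g i))
    + Real.sqrt (2 * η) • z

/-- The law of the randomness used at a single step of the PRLMC scheme:
`K` i.i.d. Bernoulli(1/K) variables, `K` i.i.d. standard Gaussians for the midpoints
and one standard Gaussian. -/
def prlmcNoise (d K : ℕ) : Measure ((Fin K → ℝ) × (Fin K → Euc d) × Euc d) :=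
  (Measure.pi fun _ : Fin K => bern (K : ℝ≥0∞)⁻¹).prod
    ((Measure.pi fun _ : Fin K => stdGaussian d).prod (stdGaussian d))

/-- The one-step transition kernel `Q_η` of the PRLMC chain. -/
def prlmcKernel {d : ℕ} (U : Euc d → ℝ) (η : ℝ) (K : ℕ) (x : Euc d) : Measure (Euc d) :=
  (prlmcNoise d K).map fun r => prlmcStep U η K x r.1 r.2.1 r.2.2

/-- The law of the PRLMC chain after `n` steps, started from the distribution `μ`. -/
def prlmcIter {d : ℕ} (U : Euc d → ℝ) (η : ℝ) (K : ℕ) (μ : Measure (Euc d)) :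
    ℕ → Measure (Euc d)
  | 0 => μ
  | n + 1 => (prlmcIter U η K μ n).bind (prlmcKernel U η K)

/-- The law of the decreasing-step PRLMC chain after `n` steps (the `(k+1)`-th step uses
step size `γ (k+1)`), started from the distribution `μ`. -/
def prlmcIterVar {d : ℕ} (U : Euc d → ℝ) (K : ℕ) (γ : ℕ → ℝ) (μ : Measure (Euc d)) :
    ℕ → Measure (Euc d)
  | 0 => μ
  | n + 1 => (prlmcIterVar U K γ μ n).bind (prlmcKernel U (γ (n + 1)) K)

/-- Total variation distance. -/
def dTV {d : ℕ} (μ ν : Measure (Euc d)) : ℝ≥0∞ :=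
  ⨆ (A : Set (Euc d)) (_ : MeasurableSet A), max (μ A - ν A) (ν A - μ A)

/-- 2-Wasserstein distance. -/
def W2 {d : ℕ} (μ ν : Measure (Euc d)) : ℝ≥0∞ :=
  ⨅ (π : Measure (Euc d × Euc d)) (_ : π.map Prod.fst = μ ∧ π.map Prod.snd = ν),
    (∫⁻ p, ((‖p.1 - p.2‖₊ : ℝ≥0∞)) ^ 2 ∂π) ^ (1 / 2 : ℝ)

/-- The Gibbs measure `π(dx) ∝ exp(-U(x)) dx`. -/
def gibbs {d : ℕ} (U : Euc d → ℝ) : Measure (Euc d) :=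
  (∫⁻ x, ENNReal.ofReal (Real.exp (-U x)) ∂(volume : Measure (Euc d)))⁻¹ •
    (volume : Measure (Euc d)).withDensity fun x => ENNReal.ofReal (Real.exp (-U x))

/-- Membership in the functional class `𝒢`: `C²` functions with bounded gradient and
bounded Hessian. -/
def MemG {d : ℕ} (h : Euc d → ℝ) : Prop :=
  ContDiff ℝ 2 h ∧ (∃ M, ∀ x, ‖gradient h x‖ ≤ M) ∧
    (∃ M, ∀ x, ‖iteratedFDeriv ℝ 2 h x‖ ≤ M)

/-- The distance `d_𝒢`. -/
def dG {d : ℕ} (μ ν : Measure (Euc d)) : ℝ :=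
  sSup { r : ℝ | ∃ h : Euc d → ℝ, MemG h ∧ r = (∫ x, h x ∂μ) - ∫ x, h x ∂ν }

/-- `B` is a standard `d`-dimensional Brownian motion on `(Ω, P)`. -/
def IsBrownianMotion {Ω : Type} [MeasurableSpace Ω] {d : ℕ} (P : Measure Ω)
    (B : ℝ → Ω → Euc d) : Prop :=
  (∀ t, Measurable (B t)) ∧
  (∀ᵐ ω ∂P, B 0 ω = 0 ∧ Continuous fun t => B t ω) ∧
  (∀ s t : ℝ, 0 ≤ s → s ≤ t →
    Measure.map (fun ω => B t ω - B s ω) P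
      = Measure.map (fun z => Real.sqrt (t - s) • z) (stdGaussian d)) ∧
  (∀ τ : ℕ → ℝ, Monotone τ → 0 ≤ τ 0 →
    iIndepFun (fun i ω => B (τ (i + 1)) ω - B (τ i) ω) P)

/-- `X` is a solution of the Langevin SDE `dX_t = -∇U(X_t) dt + √2 dB_t` started at `x`. -/
def SolvesLangevin {Ω : Type} [MeasurableSpace Ω] {d : ℕ} (U : Euc d → ℝ) (P : Measure Ω)
    (B X : ℝ → Ω → Euc d) (x : Euc d) : Prop :=
  (∀ t, Measurable (X t)) ∧
  ∀ᵐ ω ∂P, (Continuous fun t => X t ω) ∧ ∀ t, 0 ≤ t →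
    X t ω = x - (∫ s in (0:ℝ)..t, gradient U (X s ω)) + Real.sqrt 2 • B t ω

/-- `κ = 2mL/(m+L)`. -/
def kap (m L : ℝ) : ℝ := 2 * m * L / (m + L)

/-- Cumulative times `t_n = γ_1 + ⋯ + γ_n`. -/
def tseq (γ : ℕ → ℝ) (n : ℕ) : ℝ := ∑ k ∈ Finset.Icc 1 n, γ k
namespace PRLMC

lemma grad_lip {d : ℕ} {U : Euc d → ℝ} {m L : ℝ} (h : StrongAssumption U m L) (x y : Euc d) :
    ‖gradient U x - gradient U y‖ ≤ L * ‖x - y‖ := by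
  obtain ⟨-, hm, hmL, hq, -⟩ := h
  have hL : 0 < L := lt_of_lt_of_le hm hmL
  have key : ∀ x y : Euc d, U x + ⟪gradient U x, y - x⟫
      + 1 / (2 * L) * ‖gradient U y - gradient U x‖ ^ 2 ≤ U y := by
    intro x y
    set D := gradient U y - gradient U x with hD
    set z := y - (1 / L) • D with hz
    have h1 := (hq x z).1
    have h2 := (hq y z).2
    have h3 : 0 ≤ m / 2 * ‖x - z‖ ^ 2 := by positivity
    have e1 : y - z = (1 / L) • D := by rw [hz]; abel
    have e2 : z - y = -((1 / L) • D) := by rw [hz]; abel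
    have e3 : z - x = (y - x) - (1 / L) • D := by rw [hz]; abel
    rw [e1, e2, inner_neg_right, inner_smul_right, norm_smul, mul_pow, Real.norm_eq_abs, sq_abs] at h2
    rw [e3, inner_sub_right, inner_smul_right] at h1
    have e4 : ‖D‖ ^ 2 = ⟪gradient U y, D⟫ - ⟪gradient U x, D⟫ := by
      rw [← inner_sub_left, ← hD, real_inner_self_eq_norm_sq]
    have e5 : L / 2 * ((1 / L) ^ 2 * ‖D‖ ^ 2) = 1 / (2 * L) * ‖D‖ ^ 2 := by field_simp
    have e6 : 1 / L * ‖D‖ ^ 2 = 1 / L * ⟪gradient U y, D⟫ - 1 / L * ⟪gradient U x, D⟫ := by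
      rw [e4]; ring
    have e7 : 1 / L * ‖D‖ ^ 2 = 2 * (1 / (2 * L) * ‖D‖ ^ 2) := by field_simp
    linarith
  have k1 := key x y
  have k2 := key y x
  set D := gradient U x - gradient U y with hD
  rw [← norm_neg, neg_sub, ← hD] at k1
  have e : ⟪gradient U x, y - x⟫ + ⟪gradient U y, x - y⟫ = - ⟪D, x - y⟫ := by
    rw [hD, inner_sub_left, ← neg_sub x y, inner_neg_right]; ring
  have e7 : 1 / L * ‖D‖ ^ 2 = 2 * (1 / (2 * L) * ‖D‖ ^ 2) := by field_simp
  have h1 : 1 / L * ‖D‖ ^ 2 ≤ ‖D‖ * ‖x - y‖ :=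
    le_trans (by linarith) (real_inner_le_norm D (x - y))
  have h2 : ‖D‖ ^ 2 ≤ L * (‖D‖ * ‖x - y‖) := by
    calc ‖D‖ ^ 2 = L * (1 / L * ‖D‖ ^ 2) := by field_simp
      _ ≤ _ := by gcongr
  by_cases h0 : ‖D‖ = 0
  · rw [h0]; positivity
  · have : 0 < ‖D‖ := lt_of_le_of_ne (norm_nonneg _) (Ne.symm h0)
    nlinarith

lemma grad_mono {d : ℕ} {U : Euc d → ℝ} {m L : ℝ} (h : StrongAssumption U m L) (x y : Euc d) :
    m * ‖x - y‖ ^ 2 ≤ ⟪gradient U x - gradient U y, x - y⟫ := by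
  obtain ⟨-, hm, hmL, hq, -⟩ := h
  have h1 := (hq x y).1
  have h2 := (hq y x).1
  rw [norm_sub_rev] at h2
  have e : ⟪gradient U x, y - x⟫ + ⟪gradient U y, x - y⟫
      = - ⟪gradient U x - gradient U y, x - y⟫ := by
    rw [inner_sub_left, ← neg_sub x y, inner_neg_right]; ring
  linarith

lemma det_core {E : Type*} [NormedAddCommGroup E] [InnerProductSpace ℝ E] {m L η s : ℝ}
    (hm : 0 < m) (hmL : m ≤ L) (hη : 0 < η) (hηL : η * L ≤ 1) (hs : 0 ≤ s) (hsη : s ≤ η)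
    (u w e t : E) (ht : t = u - s • w) (hw : ‖w‖ ≤ L * ‖u‖) (he : ‖e‖ ≤ L * ‖t‖)
    (hmono : m * ‖t‖ ^ 2 ≤ ⟪e, t⟫) :
    ‖u - η • e‖ ^ 2 ≤ (1 - 2 * m * η + 12 * L ^ 2 * η ^ 2) * ‖u‖ ^ 2 ∧ ‖w - e‖ ≤ 3 * L * ‖u‖ := by
  have hL : 0 < L := lt_of_lt_of_le hm hmL
  have hu := norm_nonneg u
  have hsw : ‖s • w‖ ≤ η * L * ‖u‖ := by
    rw [norm_smul, Real.norm_eq_abs, abs_of_nonneg hs, mul_assoc]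
    gcongr
  have ht2 : ‖t‖ ≤ 2 * ‖u‖ := by
    rw [ht]
    refine (norm_sub_le _ _).trans ?_
    nlinarith
  have he2 : ‖e‖ ≤ 2 * L * ‖u‖ := by
    refine he.trans ?_
    nlinarith
  have htl : (1 - 2 * (η * L)) * ‖u‖ ^ 2 ≤ ‖t‖ ^ 2 := by
    rw [ht, norm_sub_sq_real]
    have := real_inner_le_norm u (s • w)
    have h3 : ‖u‖ * ‖s • w‖ ≤ ‖u‖ * (η * L * ‖u‖) := by gcongr
    nlinarith [sq_nonneg ‖s • w‖]
  have hwe : -(η * (2 * L ^ 2 * ‖u‖ ^ 2)) ≤ s * ⟪w, e⟫ := by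
    have h1 := abs_le.1 (abs_real_inner_le_norm w e)
    have h2 : ‖w‖ * ‖e‖ ≤ (L * ‖u‖) * (2 * L * ‖u‖) := by gcongr
    have h3 : s * (‖w‖ * ‖e‖) ≤ η * ((L * ‖u‖) * (2 * L * ‖u‖)) := by gcongr
    nlinarith [h1.1]
  have hue : ⟪u, e⟫ = ⟪e, t⟫ + s * ⟪w, e⟫ := by
    have : u = t + s • w := by rw [ht]; abel
    conv_lhs => rw [this]
    rw [inner_add_left, real_inner_smul_left, real_inner_comm]
  have hee : ‖e‖ ^ 2 ≤ 4 * L ^ 2 * ‖u‖ ^ 2 := by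
    calc ‖e‖ ^ 2 ≤ (2 * L * ‖u‖) ^ 2 := by gcongr
      _ = _ := by ring
  refine ⟨?_, ?_⟩
  · rw [norm_sub_sq_real, inner_smul_right, norm_smul, mul_pow, Real.norm_eq_abs, sq_abs, hue]
    have h1 : m * ((1 - 2 * (η * L)) * ‖u‖ ^ 2) ≤ ⟪e, t⟫ := le_trans (by gcongr) hmono
    have h2 : η ^ 2 * ‖e‖ ^ 2 ≤ η ^ 2 * (4 * L ^ 2 * ‖u‖ ^ 2) := by gcongr
    have h3 : 2 * η * (m * ((1 - 2 * (η * L)) * ‖u‖ ^ 2) - (η * (2 * L ^ 2 * ‖u‖ ^ 2)))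
      ≤ 2 * η * (⟪e, t⟫ + s * ⟪w, e⟫) := by gcongr; linarith
    have h4 : m * (4 * η ^ 2 * L * ‖u‖ ^ 2) ≤ L * (4 * η ^ 2 * L * ‖u‖ ^ 2) := by gcongr
    nlinarith
  · refine (norm_sub_le _ _).trans ?_
    linarith

lemma eval_int {K : ℕ} {μ : Measure ℝ} [IsProbabilityMeasure μ] (i : Fin K) (f : ℝ → ℝ)
    (hf : Integrable f μ) :
    Integrable (fun h : Fin K → ℝ => f (h i)) (Measure.pi fun _ : Fin K => μ) :=
  integrable_comp_eval (μ := fun _ : Fin K => μ) (i := i) hf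

lemma bern_prob {K : ℕ} (hK : 1 ≤ K) : IsProbabilityMeasure (bern (K : ℝ≥0∞)⁻¹) := by
  constructor
  have h1 : (K : ℝ≥0∞)⁻¹ ≤ 1 := by
    rw [ENNReal.inv_le_one]; exact_mod_cast hK
  simp [bern, h1]

lemma bern_integrable {K : ℕ} (hK : 1 ≤ K) (f : ℝ → ℝ) :
    Integrable f (bern (K : ℝ≥0∞)⁻¹) := by
  have h1 : (K : ℝ≥0∞)⁻¹ ≠ ⊤ := by
    simp; omega
  unfold bern
  refine Integrable.add_measure ?_ ?_
  · exact (integrable_dirac (by simp)).smul_measure h1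
  · exact (integrable_dirac (by simp)).smul_measure (by simp)

lemma bern_integral {K : ℕ} (hK : 1 ≤ K) (f : ℝ → ℝ) :
    ∫ x, f x ∂(bern (K : ℝ≥0∞)⁻¹) = (1 / K : ℝ) * f 1 + (1 - 1 / K : ℝ) * f 0 := by
  have h0 : (K : ℝ≥0∞)⁻¹ ≤ 1 := by
    rw [ENNReal.inv_le_one]; exact_mod_cast hK
  have h1 : (K : ℝ≥0∞)⁻¹ ≠ ⊤ := by
    simp; omega
  unfold bern
  rw [integral_add_measure, integral_smul_measure, integral_smul_measure, integral_dirac,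
    integral_dirac, ENNReal.toReal_sub_of_le h0 (by simp)]
  · simp
  · exact (integrable_dirac (by simp)).smul_measure h1
  · exact (integrable_dirac (by simp)).smul_measure (by simp)

lemma bern_mul_integrable {K : ℕ} (hK : 1 ≤ K) (i j : Fin K) :
    Integrable (fun h : Fin K → ℝ => h i * h j)
      (Measure.pi fun _ : Fin K => bern (K : ℝ≥0∞)⁻¹) := by
  have := bern_prob hK
  by_cases hij : i = j
  · subst hij
    exact eval_int i (fun x : ℝ => x * x) (bern_integrable hK _)
  · have hind := (iIndepFun_pi (μ := fun _ : Fin K => bern (K : ℝ≥0∞)⁻¹)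
      (X := fun _ => id) (fun _ => aemeasurable_id)).indepFun hij
    exact hind.integrable_mul (eval_int i (fun x : ℝ => x) (bern_integrable hK _))
      (eval_int j (fun x : ℝ => x) (bern_integrable hK _))

lemma bern_mul_integral {K : ℕ} (hK : 1 ≤ K) (i j : Fin K) :
    ∫ h : Fin K → ℝ, h i * h j ∂(Measure.pi fun _ : Fin K => bern (K : ℝ≥0∞)⁻¹)
      = (1 / K : ℝ) ^ 2 + if i = j then (1 / K : ℝ) - (1 / K : ℝ) ^ 2 else 0 := by
  have := bern_prob hK
  by_cases hij : i = j
  · subst hij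
    rw [integral_comp_eval (μ := fun _ : Fin K => bern (K : ℝ≥0∞)⁻¹)
      (f := fun x : ℝ => x * x) (by fun_prop), bern_integral hK]
    simp
  · have hind := (iIndepFun_pi (μ := fun _ : Fin K => bern (K : ℝ≥0∞)⁻¹)
      (X := fun _ => id) (fun _ => aemeasurable_id)).indepFun hij
    have := hind.integral_fun_mul_eq_mul_integral
      (measurable_pi_apply i).aestronglyMeasurable (measurable_pi_apply j).aestronglyMeasurable
    simp only [id] at this
    rw [this, integral_comp_eval (μ := fun _ : Fin K => bern (K : ℝ≥0∞)⁻¹)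
      (f := fun x : ℝ => x) (by fun_prop), integral_comp_eval (μ := fun _ : Fin K => bern (K : ℝ≥0∞)⁻¹)
      (f := fun x : ℝ => x) (by fun_prop), bern_integral hK]
    simp [hij]; ring

lemma bern_avg {E : Type*} [NormedAddCommGroup E] [InnerProductSpace ℝ E] {K : ℕ} (hK : 1 ≤ K)
    (A : E) (D : Fin K → E) :
    ∫⁻ h : Fin K → ℝ, ENNReal.ofReal (‖A + ∑ i, h i • D i‖ ^ 2)
      ∂(Measure.pi fun _ : Fin K => bern (K : ℝ≥0∞)⁻¹)
      ≤ ENNReal.ofReal ((1 / K : ℝ) * ∑ i, (‖A + D i‖ ^ 2 + ‖D i‖ ^ 2)) := by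
  have := bern_prob hK
  set P := (Measure.pi fun _ : Fin K => bern (K : ℝ≥0∞)⁻¹) with hP
  have hexp : ∀ h : Fin K → ℝ, ‖A + ∑ i, h i • D i‖ ^ 2
      = ‖A‖ ^ 2 + (∑ i, h i * (2 * ⟪A, D i⟫)) + ∑ i, ∑ j, (h i * h j) * ⟪D i, D j⟫ := by
    intro h
    rw [norm_add_sq_real, ← real_inner_self_eq_norm_sq (∑ i, h i • D i), inner_sum, sum_inner,
      Finset.mul_sum]
    congr 1
    · congr 1
      refine Finset.sum_congr rfl fun i _ => ?_
      rw [inner_smul_right]; ring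
    · refine Finset.sum_congr rfl fun i _ => ?_
      rw [inner_sum]
      refine Finset.sum_congr rfl fun j _ => ?_
      rw [inner_smul_right, real_inner_smul_left]; ring
  have i1 : ∀ i : Fin K, Integrable (fun h : Fin K → ℝ => h i * (2 * ⟪A, D i⟫)) P := fun i =>
    (eval_int i (fun x : ℝ => x) (bern_integrable hK _)).mul_const _
  have i2 : ∀ i j : Fin K, Integrable (fun h : Fin K → ℝ => (h i * h j) * ⟪D i, D j⟫) P :=
    fun i j => (bern_mul_integrable hK i j).mul_const _
  have I1 : Integrable (fun h : Fin K → ℝ => ∑ i, h i * (2 * ⟪A, D i⟫)) P :=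
    integrable_finsetSum _ fun i _ => i1 i
  have I2' : ∀ i : Fin K, Integrable (fun h : Fin K → ℝ => ∑ j, (h i * h j) * ⟪D i, D j⟫) P :=
    fun i => integrable_finsetSum _ fun j _ => i2 i j
  have I2 : Integrable (fun h : Fin K → ℝ => ∑ i, ∑ j, (h i * h j) * ⟪D i, D j⟫) P :=
    integrable_finsetSum _ fun i _ => I2' i
  have I0 : Integrable (fun h : Fin K → ℝ => ‖A‖ ^ 2 + ∑ i, h i * (2 * ⟪A, D i⟫)) P :=
    (integrable_const _).add I1
  have I : Integrable (fun h : Fin K → ℝ => ‖A + ∑ i, h i • D i‖ ^ 2) P := by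
    simp_rw [hexp]; exact I0.add I2
  rw [← ofReal_integral_eq_lintegral_ofReal I (Eventually.of_forall fun h => by positivity)]
  apply ENNReal.ofReal_le_ofReal
  have hKpos : (0 : ℝ) < K := by exact_mod_cast hK
  have hval : ∫ h : Fin K → ℝ, ‖A + ∑ i, h i • D i‖ ^ 2 ∂P
      = ‖A‖ ^ 2 + (∑ i, (1 / K : ℝ) * (2 * ⟪A, D i⟫)) + ((1 / K : ℝ) ^ 2 * ‖∑ i, D i‖ ^ 2
        + ((1 / K : ℝ) - (1 / K : ℝ) ^ 2) * ∑ i, ‖D i‖ ^ 2) := by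
    simp_rw [hexp]
    rw [integral_add I0 I2, integral_add (integrable_const _) I1,
      integral_finsetSum _ (fun i _ => i1 i), integral_finsetSum _ (fun i _ => I2' i)]
    congr 1
    · congr 1
      · simp
      · refine Finset.sum_congr rfl fun i _ => ?_
        rw [integral_mul_const, hP, integral_comp_eval (μ := fun _ : Fin K => bern (K : ℝ≥0∞)⁻¹)
          (f := fun x : ℝ => x) (by fun_prop), bern_integral hK]
        simp
    · rw [← real_inner_self_eq_norm_sq (∑ i, D i), sum_inner, Finset.mul_sum, Finset.mul_sum,
        ← Finset.sum_add_distrib]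
      refine Finset.sum_congr rfl fun i _ => ?_
      rw [integral_finsetSum _ (fun j _ => i2 i j), inner_sum, Finset.mul_sum]
      have : ∀ j, ∫ h : Fin K → ℝ, (h i * h j) * ⟪D i, D j⟫ ∂P = (1 / K : ℝ) ^ 2 * ⟪D i, D j⟫
          + if i = j then ((1 / K : ℝ) - (1 / K : ℝ) ^ 2) * ‖D i‖ ^ 2 else 0 := by
        intro j
        rw [integral_mul_const, hP, bern_mul_integral hK]
        by_cases hij : i = j
        · subst hij; simp only [if_true, real_inner_self_eq_norm_sq]; ring
        · simp [hij]
      simp_rw [this, Finset.sum_add_distrib]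
      simp
  rw [hval]
  have hcs : ‖∑ i, D i‖ ^ 2 ≤ K * ∑ i, ‖D i‖ ^ 2 := by
    have h1 : ‖∑ i, D i‖ ^ 2 ≤ (∑ i, ‖D i‖) ^ 2 := by gcongr; exact norm_sum_le _ _
    refine h1.trans ?_
    have := sq_sum_le_card_mul_sum_sq (s := (Finset.univ : Finset (Fin K))) (f := fun i => ‖D i‖)
    simpa using this
  have hA : ‖A‖ ^ 2 = (1 / K : ℝ) * ∑ i : Fin K, ‖A‖ ^ 2 := by
    simp; field_simp
  have hs : ∑ i, (‖A + D i‖ ^ 2 + ‖D i‖ ^ 2)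
      = (∑ i : Fin K, ‖A‖ ^ 2) + (∑ i, (2 * ⟪A, D i⟫)) + 2 * ∑ i, ‖D i‖ ^ 2 := by
    rw [Finset.mul_sum, ← Finset.sum_add_distrib, ← Finset.sum_add_distrib]
    refine Finset.sum_congr rfl fun i _ => ?_
    rw [norm_add_sq_real]; ring
  rw [hs, mul_add, mul_add, ← hA, ← Finset.mul_sum]
  have h3 : (1 / K : ℝ) ^ 2 * ‖∑ i, D i‖ ^ 2 ≤ (1 / K : ℝ) * ∑ i, ‖D i‖ ^ 2 := by
    calc (1 / K : ℝ) ^ 2 * ‖∑ i, D i‖ ^ 2 ≤ (1 / K : ℝ) ^ 2 * (K * ∑ i, ‖D i‖ ^ 2) := by gcongr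
      _ = _ := by field_simp
  have h4 : 0 ≤ (1 / K : ℝ) ^ 2 * ∑ i, ‖D i‖ ^ 2 := by positivity
  linarith

lemma gauss_prob (d : ℕ) : IsProbabilityMeasure (_root_.stdGaussian d) := by
  unfold _root_.stdGaussian
  exact Measure.isProbabilityMeasure_map (by fun_prop)

lemma gauss_shift (d : ℕ) (w : Euc d) (σ : ℝ) :
    ∫⁻ z, ENNReal.ofReal (‖w + σ • z‖ ^ 2) ∂(_root_.stdGaussian d)
      = ENNReal.ofReal (‖w‖ ^ 2 + σ ^ 2 * d) := by
  unfold _root_.stdGaussian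
  rw [lintegral_map (by fun_prop) (by fun_prop)]
  have hexp : ∀ z : Fin d → ℝ, ‖w + σ • (EuclideanSpace.equiv (Fin d) ℝ).symm z‖ ^ 2
      = ∑ i, (w i + σ * z i) ^ 2 := by
    intro z
    rw [EuclideanSpace.norm_sq_eq]
    simp
  have hid : MemLp (fun x : ℝ => x) 2 (gaussianReal 0 1) := memLp_id_gaussianReal 2
  have hi1 : Integrable (fun x : ℝ => x) (gaussianReal 0 1) := hid.integrable (by norm_num)
  have hi2 : Integrable (fun x : ℝ => x ^ 2) (gaussianReal 0 1) := hid.integrable_sq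
  have hv : ∫ x : ℝ, x ^ 2 ∂(gaussianReal 0 1) = 1 := by
    have h := variance_fun_id_gaussianReal (μ := 0) (v := 1)
    rw [variance_eq_sub hid] at h
    simpa using h
  have hm0 : ∫ x : ℝ, x ∂(gaussianReal 0 1) = 0 := integral_id_gaussianReal
  have hint : ∀ c : ℝ, Integrable (fun x : ℝ => (c + σ * x) ^ 2) (gaussianReal 0 1) := by
    intro c
    have : (fun x : ℝ => (c + σ * x) ^ 2) = fun x => (c ^ 2 + (2 * c * σ) * x) + σ ^ 2 * x ^ 2 := by
      ext x; ring
    rw [this]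
    exact ((integrable_const _).add (hi1.const_mul _)).add (hi2.const_mul _)
  have hval : ∀ c : ℝ, ∫ x : ℝ, (c + σ * x) ^ 2 ∂(gaussianReal 0 1) = c ^ 2 + σ ^ 2 := by
    intro c
    have : (fun x : ℝ => (c + σ * x) ^ 2) = fun x => (c ^ 2 + (2 * c * σ) * x) + σ ^ 2 * x ^ 2 := by
      ext x; ring
    have hc : Integrable (fun x : ℝ => c ^ 2 + (2 * c * σ) * x) (gaussianReal 0 1) :=
      (integrable_const _).add (hi1.const_mul _)
    rw [this, integral_add hc (hi2.const_mul _),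
      integral_add (integrable_const _) (hi1.const_mul _), integral_const_mul, integral_const_mul,
      hv, hm0]
    simp
  simp_rw [hexp]
  have hI : ∀ i : Fin d, Integrable (fun z : Fin d → ℝ => (w i + σ * z i) ^ 2)
      (Measure.pi fun _ : Fin d => gaussianReal 0 1) := fun i =>
    eval_int i (fun x : ℝ => (w i + σ * x) ^ 2) (hint _)
  rw [← ofReal_integral_eq_lintegral_ofReal (integrable_finsetSum _ fun i _ => hI i)
    (Eventually.of_forall fun h => Finset.sum_nonneg fun i _ => by positivity),
    integral_finsetSum _ fun i _ => hI i]
  congr 1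
  have : ∀ i : Fin d, ∫ z : Fin d → ℝ, (w i + σ * z i) ^ 2
      ∂(Measure.pi fun _ : Fin d => gaussianReal 0 1) = (w i) ^ 2 + σ ^ 2 := fun i => by
    rw [integral_comp_eval (μ := fun _ : Fin d => gaussianReal 0 1)
      (f := fun x : ℝ => (w i + σ * x) ^ 2) (by fun_prop), hval]
  simp_rw [this, Finset.sum_add_distrib, EuclideanSpace.norm_sq_eq]
  simp; ring

lemma grad_cont {d : ℕ} {U : Euc d → ℝ} {m L : ℝ} (h : StrongAssumption U m L) :
    Continuous (gradient U) := by
  have hL : 0 ≤ L := h.2.1.le.trans h.2.2.1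
  refine LipschitzWith.continuous (K := ⟨L, hL⟩) (LipschitzWith.of_dist_le_mul fun x y => ?_)
  rw [dist_eq_norm, dist_eq_norm]
  exact grad_lip h x y

lemma step_cont {d : ℕ} {U : Euc d → ℝ} {m L : ℝ} (h : StrongAssumption U m L) (η : ℝ) (K : ℕ) :
    Continuous fun q : Euc d × ((Fin K → ℝ) × (Fin K → Euc d) × Euc d) =>
      prlmcStep U η K q.1 q.2.1 q.2.2.1 q.2.2.2 := by
  have hc := grad_cont h
  unfold prlmcStep prlmcMid
  fun_prop

lemma noise_prob {d K : ℕ} (hK : 1 ≤ K) : IsProbabilityMeasure (prlmcNoise d K) := by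
  have := bern_prob hK
  have := gauss_prob d
  unfold prlmcNoise
  infer_instance

lemma mid_time {K : ℕ} {η : ℝ} (hη : 0 < η) (i : Fin K) :
    0 ≤ (i : ℝ) * η / K ∧ (i : ℝ) * η / K ≤ η * (1 - 1 / K) ∧ (i : ℝ) * η / K ≤ η := by
  have hK : (0 : ℝ) < K := by exact_mod_cast (Nat.lt_of_le_of_lt (Nat.zero_le _) i.2)
  have hi : (i : ℝ) + 1 ≤ K := by exact_mod_cast i.2
  have h2 : (i : ℝ) * η / K ≤ η * (1 - 1 / K) := by
    have : η * (1 - 1 / K) = (K - 1) * η / K := by field_simp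
    rw [this]
    gcongr
    linarith
  refine ⟨by positivity, h2, h2.trans ?_⟩
  have : 0 ≤ η * (1 / K) := by positivity
  nlinarith

lemma step_contract {d K : ℕ} (hK : 1 ≤ K) {U : Euc d → ℝ} {m L η : ℝ}
    (h : StrongAssumption U m L) (hη : 0 < η) (hη3 : 100 * L ^ 2 * η ≤ m) (x y : Euc d) :
    ∫⁻ r, ENNReal.ofReal (‖prlmcStep U η K x r.1 r.2.1 r.2.2
        - prlmcStep U η K y r.1 r.2.1 r.2.2‖ ^ 2) ∂(prlmcNoise d K)
      ≤ ENNReal.ofReal ((1 - m * η) * ‖x - y‖ ^ 2) := by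
  have hm := h.2.1
  have hmL := h.2.2.1
  have hL : 0 < L := hm.trans_le hmL
  have hηL : η * L ≤ 1 := by nlinarith
  have hKpos : (0 : ℝ) < K := by exact_mod_cast hK
  have := bern_prob hK
  have := gauss_prob d
  have hc := step_cont h η K
  have hmeas : Measurable fun r : (Fin K → ℝ) × (Fin K → Euc d) × Euc d =>
      ENNReal.ofReal (‖prlmcStep U η K x r.1 r.2.1 r.2.2
        - prlmcStep U η K y r.1 r.2.1 r.2.2‖ ^ 2) := by
    have hx : Continuous fun r : (Fin K → ℝ) × (Fin K → Euc d) × Euc d =>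
      prlmcStep U η K x r.1 r.2.1 r.2.2 := hc.comp (Continuous.prodMk_right x)
    have hy : Continuous fun r : (Fin K → ℝ) × (Fin K → Euc d) × Euc d =>
      prlmcStep U η K y r.1 r.2.1 r.2.2 := hc.comp (Continuous.prodMk_right y)
    exact ((hx.sub hy).norm.pow 2).measurable.ennreal_ofReal
  unfold prlmcNoise
  rw [lintegral_prod_symm _ hmeas.aemeasurable]
  have hb : ∀ q : (Fin K → Euc d) × Euc d,
      ∫⁻ k, ENNReal.ofReal (‖prlmcStep U η K x k q.1 q.2 - prlmcStep U η K y k q.1 q.2‖ ^ 2)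
        ∂(Measure.pi fun _ : Fin K => bern (K : ℝ≥0∞)⁻¹)
      ≤ ENNReal.ofReal ((1 - m * η) * ‖x - y‖ ^ 2) := by
    rintro ⟨g, z⟩
    set b := gradient U with hbdef
    set u := x - y with hu
    set w := b x - b y with hw
    set e : Fin K → Euc d := fun i => b (prlmcMid U η K x g i) - b (prlmcMid U η K y g i) with he
    have hdiff : ∀ k : Fin K → ℝ, prlmcStep U η K x k g z - prlmcStep U η K y k g z
        = (u - η • w) + ∑ i, k i • (η • (w - e i)) := by
      intro k
      have h1 : ∑ i, k i • (η • (w - e i)) = η • (∑ i, k i • (b x - b (prlmcMid U η K x g i))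
          - ∑ i, k i • (b y - b (prlmcMid U η K y g i))) := by
        rw [← Finset.sum_sub_distrib, Finset.smul_sum]
        refine Finset.sum_congr rfl fun i _ => ?_
        rw [← smul_sub, smul_comm]
        congr 2
        simp only [hw, he]; abel
      rw [h1]
      simp only [prlmcStep, ← hbdef, hu, hw, smul_sub]
      abel
    simp only [hdiff]
    refine (bern_avg hK _ _).trans (ENNReal.ofReal_le_ofReal ?_)
    have hterm : ∀ i : Fin K, ‖(u - η • w) + η • (w - e i)‖ ^ 2 + ‖η • (w - e i)‖ ^ 2
        ≤ (1 - m * η) * ‖u‖ ^ 2 := by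
      intro i
      obtain ⟨hs0, -, hs1⟩ := mid_time hη i
      have ht : prlmcMid U η K x g i - prlmcMid U η K y g i = u - ((i : ℝ) * η / K) • w := by
        simp only [prlmcMid, ← hbdef, hu, hw, smul_sub]; abel
      have hcore := det_core hm hmL hη hηL hs0 hs1 u w (e i) _ ht (grad_lip h x y)
        (grad_lip h _ _) (grad_mono h _ _)
      have e1 : (u - η • w) + η • (w - e i) = u - η • e i := by rw [smul_sub η w (e i)]; abel
      rw [e1, norm_smul, mul_pow, Real.norm_eq_abs, sq_abs]
      have h2 : ‖w - e i‖ ^ 2 ≤ (3 * L * ‖u‖) ^ 2 := by gcongr; exact hcore.2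
      have h3 : η ^ 2 * ‖w - e i‖ ^ 2 ≤ η ^ 2 * (3 * L * ‖u‖) ^ 2 := by gcongr
      have h4 : 100 * L ^ 2 * η * (η * ‖u‖ ^ 2) ≤ m * (η * ‖u‖ ^ 2) := by gcongr
      have h5 : 0 ≤ L ^ 2 * η ^ 2 * ‖u‖ ^ 2 := by positivity
      nlinarith [hcore.1]
    calc (1 / K : ℝ) * ∑ i, (‖(u - η • w) + η • (w - e i)‖ ^ 2 + ‖η • (w - e i)‖ ^ 2)
        ≤ (1 / K : ℝ) * ∑ i : Fin K, (1 - m * η) * ‖u‖ ^ 2 := by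
          gcongr with i _; exact hterm i
      _ = _ := by simp; field_simp
  refine (lintegral_mono hb).trans ?_
  simp

lemma step_meas {d : ℕ} {U : Euc d → ℝ} {m L : ℝ} (h : StrongAssumption U m L) (η : ℝ) (K : ℕ)
    (x : Euc d) (k : Fin K → ℝ) : Measurable fun q : (Fin K → Euc d) × Euc d =>
        ENNReal.ofReal (‖prlmcStep U η K x k q.1 q.2‖ ^ 2) := by
  have hc := grad_cont h
  have hs : Continuous fun q : (Fin K → Euc d) × Euc d => prlmcStep U η K x k q.1 q.2 := by
    unfold prlmcStep prlmcMid
    fun_prop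
  exact (hs.norm.pow 2).measurable.ennreal_ofReal

set_option maxHeartbeats 4000000 in
lemma step_drift {d K : ℕ} (hK : 1 ≤ K) {U : Euc d → ℝ} {m L η : ℝ}
    (h : StrongAssumption U m L) (hη : 0 < η) (hη1 : η ≤ 1 / 4) (hη2 : 16 * η ≤ m)
    (hη3 : 100 * L ^ 2 * η ≤ m) (x : Euc d) :
    ∫⁻ r, ENNReal.ofReal (‖prlmcStep U η K x r.1 r.2.1 r.2.2‖ ^ 2) ∂(prlmcNoise d K)
      ≤ ENNReal.ofReal ((1 - m * η) * ‖x‖ ^ 2)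
        + ENNReal.ofReal (η * d * (2 + L ^ 2 * (1 - 1 / K))) := by
  have hm := h.2.1
  have hmL := h.2.2.1
  have hL : 0 < L := hm.trans_le hmL
  have hηL : η * L ≤ 1 / 100 := by
    have : L * (η * L) ≤ L * (1 / 100) := by nlinarith
    exact le_of_mul_le_mul_left this hL
  have hmη : m * η ≤ 1 := by nlinarith
  have hKpos : (0 : ℝ) < K := by exact_mod_cast hK
  have hK1 : (0 : ℝ) ≤ 1 - 1 / K := by
    have : (1 : ℝ) / K ≤ 1 := by
      rw [div_le_one hKpos]; exact_mod_cast hK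
    linarith
  have := bern_prob hK
  have := gauss_prob d
  have hbc := grad_cont h
  have hc := step_cont h η K
  have hx : Continuous fun r : (Fin K → ℝ) × (Fin K → Euc d) × Euc d =>
      prlmcStep U η K x r.1 r.2.1 r.2.2 := hc.comp (Continuous.prodMk_right x)
  have hmeas : Measurable fun r : (Fin K → ℝ) × (Fin K → Euc d) × Euc d =>
      ENNReal.ofReal (‖prlmcStep U η K x r.1 r.2.1 r.2.2‖ ^ 2) :=
    (hx.norm.pow 2).measurable.ennreal_ofReal
  have hmk0 := step_meas h η K x
  set b := gradient U with hbdef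
  set D : (Fin K → Euc d) → Fin K → Euc d := fun g i =>
    η • (b x - b (prlmcMid U η K x g i)) with hD
  have hstep : ∀ k g z, prlmcStep U η K x k g z
      = ((x - η • b x) + ∑ i, k i • D g i) + Real.sqrt (2 * η) • z := by
    intro k g z
    simp only [prlmcStep, ← hbdef, hD, Finset.smul_sum]
    congr 2
    refine Finset.sum_congr rfl fun i _ => ?_
    rw [smul_comm]
  have hz : ∀ k g, ∫⁻ z, ENNReal.ofReal (‖prlmcStep U η K x k g z‖ ^ 2) ∂(_root_.stdGaussian d)
      = ENNReal.ofReal (‖(x - η • b x) + ∑ i, k i • D g i‖ ^ 2) + ENNReal.ofReal (2 * η * d) := by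
    intro k g
    simp only [hstep]
    rw [gauss_shift, Real.sq_sqrt (by positivity), ENNReal.ofReal_add (by positivity) (by positivity)]
  have hterm : ∀ (g : Fin K → Euc d) (i : Fin K), ‖(x - η • b x) + D g i‖ ^ 2 + ‖D g i‖ ^ 2
      ≤ (1 - m * η) * ‖x‖ ^ 2 + η * L ^ 2 * (1 - 1 / K) * ‖g i‖ ^ 2 := by
    intro g i
    obtain ⟨hs0, hs2, hs1⟩ := mid_time hη i
    set s := (i : ℝ) * η / K with hs
    have hb0 : b 0 = 0 := h.2.2.2.2
    have lip0 : ∀ v, ‖b v‖ ≤ L * ‖v‖ := fun v => by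
      have := grad_lip h v 0
      rw [← hbdef] at this
      simpa [hb0] using this
    have mono0 : ∀ v, m * ‖v‖ ^ 2 ≤ ⟪b v, v⟫ := fun v => by
      have := grad_mono h v 0
      rw [← hbdef] at this
      simpa [hb0] using this
    set p := x - s • b x with hp
    set σ := Real.sqrt (2 * (i : ℝ) * η / K) with hσ
    have hσ2 : σ ^ 2 = 2 * s := by
      rw [hσ, Real.sq_sqrt (by positivity), hs]; ring
    have hmid : prlmcMid U η K x g i = p + σ • g i := rfl
    have hcore := (det_core hm hmL hη (by linarith) hs0 hs1 x (b x) (b p) p rfl (lip0 x)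
      (lip0 p) (mono0 p)).1
    set c := b (p + σ • g i) - b p with hcdef
    have hcn : ‖c‖ ^ 2 ≤ L ^ 2 * (2 * s * ‖g i‖ ^ 2) := by
      have h1 := grad_lip h (p + σ • g i) p
      rw [add_sub_cancel_left, norm_smul] at h1
      calc ‖c‖ ^ 2 ≤ (L * (‖σ‖ * ‖g i‖)) ^ 2 := by gcongr
        _ = L ^ 2 * (σ ^ 2 * ‖g i‖ ^ 2) := by rw [mul_pow, mul_pow, Real.norm_eq_abs, sq_abs]
        _ = _ := by rw [hσ2]
    set G := η * (1 - 1 / K) * ‖g i‖ ^ 2 with hG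
    have hG0 : 0 ≤ G := by positivity
    have hcn2 : ‖c‖ ^ 2 ≤ 2 * L ^ 2 * G := by
      refine hcn.trans ?_
      have : s * ‖g i‖ ^ 2 ≤ G := by rw [hG]; gcongr
      have h9 : L ^ 2 * (2 * (s * ‖g i‖ ^ 2)) ≤ L ^ 2 * (2 * G) := by gcongr
      linarith
    have hxp : ‖b x - b p‖ ≤ η * L ^ 2 * ‖x‖ := by
      have h1 := grad_lip h x p
      rw [hp, sub_sub_cancel, norm_smul, Real.norm_eq_abs, abs_of_nonneg hs0] at h1
      refine h1.trans ?_
      calc L * (s * ‖b x‖) ≤ L * (η * (L * ‖x‖)) := by gcongr; exact lip0 x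
        _ = _ := by ring
    have e1 : (x - η • b x) + D g i = (x - η • b p) - η • c := by
      simp only [hD, hmid, hcdef, smul_sub]; abel
    have e2 : D g i = η • ((b x - b p) - c) := by
      simp only [hD, hmid, hcdef]; congr 1; abel
    rw [e1, e2]
    have young : ∀ v v' : Euc d, ‖v - v'‖ ^ 2
        ≤ (1 + m * η / 4) * ‖v‖ ^ 2 + (1 + 4 / (m * η)) * ‖v'‖ ^ 2 := by
      intro v v'
      have h1 : ‖v - v'‖ ^ 2 ≤ (‖v‖ + ‖v'‖) ^ 2 := by gcongr; exact norm_sub_le _ _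
      refine h1.trans ?_
      have h2 : 0 ≤ (4 / (m * η)) * (m * η / 4 * ‖v‖ - ‖v'‖) ^ 2 := by positivity
      have h3 : (4 / (m * η)) * (m * η / 4 * ‖v‖ - ‖v'‖) ^ 2
        = m * η / 4 * ‖v‖ ^ 2 - 2 * ‖v‖ * ‖v'‖ + 4 / (m * η) * ‖v'‖ ^ 2 := by field_simp; ring
      nlinarith
    have young2 : ∀ v v' : Euc d, ‖v - v'‖ ^ 2 ≤ 2 * ‖v‖ ^ 2 + 2 * ‖v'‖ ^ 2 := by
      intro v v'
      have h1 : ‖v - v'‖ ^ 2 ≤ (‖v‖ + ‖v'‖) ^ 2 := by gcongr; exact norm_sub_le _ _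
      nlinarith [sq_nonneg (‖v‖ - ‖v'‖)]
    have hy1 := young (x - η • b p) (η • c)
    have hy2 := young2 (b x - b p) c
    rw [norm_smul, mul_pow, Real.norm_eq_abs, sq_abs] at hy1
    rw [norm_smul η (b x - b p - c), mul_pow, Real.norm_eq_abs, sq_abs]
    set X := ‖x‖ ^ 2 with hX
    have hX0 : 0 ≤ X := by positivity
    have hxp2 : ‖b x - b p‖ ^ 2 ≤ (η * L ^ 2) ^ 2 * X := by
      calc ‖b x - b p‖ ^ 2 ≤ (η * L ^ 2 * ‖x‖) ^ 2 := by gcongr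
        _ = _ := by ring
    -- the `x` part
    have f1 : (1 + m * η / 4) * ‖x - η • b p‖ ^ 2
        ≤ (1 + m * η / 4) * ((1 - 2 * m * η + 12 * L ^ 2 * η ^ 2) * X) := by gcongr
    have f2 : η ^ 2 * ‖b x - b p - c‖ ^ 2
        ≤ η ^ 2 * (2 * ((η * L ^ 2) ^ 2 * X) + 2 * (2 * L ^ 2 * G)) := by gcongr; linarith
    have f3 : (1 + 4 / (m * η)) * (η ^ 2 * ‖c‖ ^ 2)
        ≤ (1 + 4 / (m * η)) * (η ^ 2 * (2 * L ^ 2 * G)) := by gcongr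
    have f4 : (1 + 4 / (m * η)) * (η ^ 2 * (2 * L ^ 2 * G))
        = (η ^ 2 + 4 * (η / m)) * (2 * L ^ 2 * G) := by field_simp
    have ηm : η / m ≤ 1 / 16 := by rw [div_le_iff₀ hm]; linarith
    have f5 : (η ^ 2 + 4 * (η / m) + 2 * η ^ 2) * (2 * L ^ 2 * G) ≤ (1 / 2) * (2 * L ^ 2 * G) := by
      gcongr
      nlinarith
    have f6 : (1 + m * η / 4) * (1 - 2 * m * η + 12 * L ^ 2 * η ^ 2) + 2 * η ^ 2 * (η * L ^ 2) ^ 2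
        ≤ 1 - m * η := by
      have a0 : 0 < m * η := by positivity
      have a1 : L ^ 2 * η ^ 2 ≤ m * η / 100 := by nlinarith
      have a2 : 0 ≤ L ^ 2 * η ^ 2 := by positivity
      have a3 : L ^ 2 * η ^ 2 ≤ 1 := by nlinarith
      have a4 : 2 * η ^ 2 * (η * L ^ 2) ^ 2 = 2 * (L ^ 2 * η ^ 2) * (L ^ 2 * η ^ 2) := by ring
      rw [a4]
      have a5 : 2 * (L ^ 2 * η ^ 2) * (L ^ 2 * η ^ 2) ≤ 2 * (m * η / 100) * 1 := by gcongr
      have a6 : (1 + m * η / 4) * (1 - 2 * m * η + 12 * L ^ 2 * η ^ 2)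
        ≤ (1 + m * η / 4) * (1 - 188 / 100 * (m * η)) := by gcongr; linarith
      nlinarith
    have f7 : ((1 + m * η / 4) * (1 - 2 * m * η + 12 * L ^ 2 * η ^ 2)
      + 2 * η ^ 2 * (η * L ^ 2) ^ 2) * X ≤ (1 - m * η) * X := by gcongr
    have f8 : η * L ^ 2 * (1 - 1 / K) * ‖g i‖ ^ 2 = L ^ 2 * G := by rw [hG]; ring
    rw [f8]
    linarith
  have hbd : ∀ g : Fin K → Euc d,
      ∫⁻ k : Fin K → ℝ, ENNReal.ofReal (‖(x - η • b x) + ∑ i, k i • D g i‖ ^ 2)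
        ∂(Measure.pi fun _ : Fin K => bern (K : ℝ≥0∞)⁻¹)
      ≤ ENNReal.ofReal ((1 - m * η) * ‖x‖ ^ 2)
        + ∑ i, ENNReal.ofReal (1 / K * (η * L ^ 2 * (1 - 1 / K))) * ENNReal.ofReal (‖g i‖ ^ 2) := by
    intro g
    refine (bern_avg hK _ _).trans ?_
    have h1 : (1 / K : ℝ) * ∑ i, (‖(x - η • b x) + D g i‖ ^ 2 + ‖D g i‖ ^ 2)
        ≤ (1 - m * η) * ‖x‖ ^ 2 + ∑ i, 1 / K * (η * L ^ 2 * (1 - 1 / K)) * ‖g i‖ ^ 2 := by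
      calc _ ≤ (1 / K : ℝ) * ∑ i, ((1 - m * η) * ‖x‖ ^ 2
              + η * L ^ 2 * (1 - 1 / K) * ‖g i‖ ^ 2) := by
            exact mul_le_mul_of_nonneg_left (Finset.sum_le_sum fun i _ => hterm g i) (by positivity)
        _ = _ := by
            rw [Finset.sum_add_distrib, mul_add, Finset.mul_sum]
            congr 1
            · simp; field_simp
            · rw [Finset.mul_sum]
              refine Finset.sum_congr rfl fun i _ => ?_
              ring
    refine (ENNReal.ofReal_le_ofReal h1).trans ?_
    rw [ENNReal.ofReal_add (mul_nonneg (by linarith) (by positivity))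
      (Finset.sum_nonneg fun i _ => by positivity),
      ENNReal.ofReal_sum_of_nonneg (fun i _ => by positivity)]
    gcongr with i _
    rw [ENNReal.ofReal_mul (by positivity)]
  have hgi : ∀ i : Fin K, ∫⁻ g : Fin K → Euc d, ENNReal.ofReal (‖g i‖ ^ 2)
      ∂(Measure.pi fun _ : Fin K => _root_.stdGaussian d) = ENNReal.ofReal d := by
    intro i
    have hmp := measurePreserving_eval (fun _ : Fin K => _root_.stdGaussian d) i
    have h1 := hmp.lintegral_comp (f := fun v : Euc d => ENNReal.ofReal (‖v‖ ^ 2)) (by fun_prop)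
    have h2 := gauss_shift d 0 1
    simp only [zero_add, one_smul, norm_zero] at h2
    simp only [Function.eval] at h1
    rw [h1, h2]; simp
  have hmeas2 : Measurable fun q : (Fin K → ℝ) × (Fin K → Euc d) =>
      ENNReal.ofReal (‖(x - η • b x) + ∑ i, q.1 i • D q.2 i‖ ^ 2) := by
    refine Measurable.ennreal_ofReal (Continuous.measurable ?_)
    simp only [hD]
    unfold prlmcMid
    fun_prop
  unfold prlmcNoise
  rw [lintegral_prod _ hmeas.aemeasurable]
  have hstep1 : ∀ k : Fin K → ℝ,
      ∫⁻ q : (Fin K → Euc d) × Euc d, ENNReal.ofReal (‖prlmcStep U η K x k q.1 q.2‖ ^ 2)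
        ∂((Measure.pi fun _ : Fin K => _root_.stdGaussian d).prod (_root_.stdGaussian d))
      = (∫⁻ g, ENNReal.ofReal (‖(x - η • b x) + ∑ i, k i • D g i‖ ^ 2)
        ∂(Measure.pi fun _ : Fin K => _root_.stdGaussian d)) + ENNReal.ofReal (2 * η * d) := by
    intro k
    have hmk : Measurable fun q : (Fin K → Euc d) × Euc d =>
        ENNReal.ofReal (‖prlmcStep U η K x k q.1 q.2‖ ^ 2) := hmk0 k
    rw [lintegral_prod _ hmk.aemeasurable]
    simp only [hz]
    rw [lintegral_add_right _ measurable_const]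
    simp
  simp only [hstep1]
  rw [lintegral_add_right _ measurable_const, lintegral_lintegral_swap hmeas2.aemeasurable]
  have hfin : ∫⁻ g, ∫⁻ k : Fin K → ℝ, ENNReal.ofReal (‖(x - η • b x) + ∑ i, k i • D g i‖ ^ 2)
        ∂(Measure.pi fun _ : Fin K => bern (K : ℝ≥0∞)⁻¹)
        ∂(Measure.pi fun _ : Fin K => _root_.stdGaussian d)
      ≤ ENNReal.ofReal ((1 - m * η) * ‖x‖ ^ 2)
        + ENNReal.ofReal (η * d * (L ^ 2 * (1 - 1 / K))) := by
    refine (lintegral_mono hbd).trans ?_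
    rw [lintegral_add_left measurable_const, lintegral_finsetSum _ (fun i _ => by fun_prop)]
    simp_rw [lintegral_const_mul' _ _ ENNReal.ofReal_ne_top, hgi]
    refine le_of_eq ?_
    congr 1
    · simp
    · rw [← ENNReal.ofReal_mul (by positivity), Finset.sum_const, nsmul_eq_mul]
      rw [← ENNReal.ofReal_natCast, ← ENNReal.ofReal_mul (by positivity)]
      congr 1
      simp; field_simp
  refine (add_le_add_left hfin _).trans (le_of_eq ?_)
  rw [add_assoc]
  congr 1
  rw [lintegral_const, measure_univ, mul_one, ← ENNReal.ofReal_add (by positivity) (by positivity)]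
  congr 1
  ring

section Markov

variable {E : Type*} [NormedAddCommGroup E] [ProperSpace E] [MeasurableSpace E] [BorelSpace E]
  [SecondCountableTopology E] {Ω : Type*} [MeasurableSpace Ω]

/-- Bounded Lipschitz functions. -/
def BL (B l : ℝ) (f : E → ℝ) : Prop := (∀ x, |f x| ≤ B) ∧ ∀ x y, |f x - f y| ≤ l * ‖x - y‖

lemma BL.cont {B l : ℝ} {f : E → ℝ} (h : BL B l f) (hl : 0 ≤ l) : Continuous f := by
  refine LipschitzWith.continuous (K := ⟨l, hl⟩) (LipschitzWith.of_dist_le_mul fun x y => ?_)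
  rw [dist_eq_norm, dist_eq_norm]
  exact h.2 x y

lemma bdd_int {X : Type*} [MeasurableSpace X] {B : ℝ} {f : X → ℝ} (h : ∀ x, |f x| ≤ B)
    (hm : Measurable f) (μ : Measure X) [IsFiniteMeasure μ] : Integrable f μ :=
  Integrable.of_bound hm.aestronglyMeasurable B (Eventually.of_forall h)

/-- The Markov operator on functions. -/
def Top (P : Measure Ω) (F : E → Ω → E) (f : E → ℝ) (x : E) : ℝ := ∫ r, f (F x r) ∂P

/-- The Markov operator on measures. -/
def Mop (P : Measure Ω) (F : E → Ω → E) (μ : Measure E) : Measure E :=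
  (μ.prod P).map (Function.uncurry F)

lemma bind_eq {P : Measure Ω} [IsProbabilityMeasure P] {F : E → Ω → E}
    (hF : Measurable (Function.uncurry F)) (μ : Measure E) [SFinite μ] :
    μ.bind (fun x => P.map (F x)) = Mop P F μ := by
  have hFx : ∀ x, Measurable (F x) := fun x => hF.comp measurable_prodMk_left
  have hQ : Measurable fun x => P.map (F x) := by
    refine Measure.measurable_of_measurable_coe _ fun s hs => ?_
    simp_rw [Measure.map_apply (hFx _) hs]
    exact measurable_measure_prodMk_left (hF hs)
  ext s hs
  rw [Measure.bind_apply hs hQ.aemeasurable, Mop, Measure.map_apply hF hs,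
    Measure.prod_apply (hF hs)]
  refine lintegral_congr fun x => ?_
  rw [Measure.map_apply (hFx _) hs]
  rfl

lemma Mop_prob {P : Measure Ω} [IsProbabilityMeasure P] {F : E → Ω → E}
    (hF : Measurable (Function.uncurry F)) (μ : Measure E) [IsProbabilityMeasure μ] :
    IsProbabilityMeasure (Mop P F μ) :=
  Measure.isProbabilityMeasure_map hF.aemeasurable

lemma Top_BL {P : Measure Ω} [IsProbabilityMeasure P] {F : E → Ω → E}
    (hF : Measurable (Function.uncurry F)) {ρ : ℝ} (hρ : 0 ≤ ρ)
    (hc : ∀ x y, ∫⁻ r, ENNReal.ofReal (‖F x r - F y r‖ ^ 2) ∂P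
      ≤ ENNReal.ofReal (ρ * ‖x - y‖ ^ 2)) {B l : ℝ} (hl : 0 ≤ l) {f : E → ℝ} (hf : BL B l f) :
    BL B (Real.sqrt ρ * l) (Top P F f) := by
  have hFx : ∀ x, Measurable (F x) := fun x => hF.comp measurable_prodMk_left
  have hfm : Measurable f := (hf.cont hl).measurable
  have hint : ∀ x, Integrable (fun r => f (F x r)) P := fun x =>
    bdd_int (fun r => hf.1 _) (hfm.comp (hFx x)) P
  refine ⟨fun x => ?_, fun x y => ?_⟩
  · have := norm_integral_le_of_norm_le_const (μ := P) (f := fun r => f (F x r)) (C := B)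
      (Eventually.of_forall fun r => hf.1 _)
    simpa [Top] using this
  · set φ : Ω → ℝ := fun r => ‖F x r - F y r‖ with hφ
    have hφm : Measurable φ := ((hFx x).sub (hFx y)).norm
    have hφ2 : Integrable (fun r => φ r ^ 2) P := by
      refine ⟨(hφm.pow_const 2).aestronglyMeasurable, ?_⟩
      rw [hasFiniteIntegral_iff_ofReal (Eventually.of_forall fun r => by positivity)]
      exact (hc x y).trans_lt ENNReal.ofReal_lt_top
    have hφL : MemLp φ 2 P := (memLp_two_iff_integrable_sq hφm.aestronglyMeasurable).2 hφ2
    have hφ1 : Integrable φ P := hφL.integrable (by norm_num)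
    have h2 : ∫ r, φ r ^ 2 ∂P ≤ ρ * ‖x - y‖ ^ 2 := by
      have h := hc x y
      rw [← ofReal_integral_eq_lintegral_ofReal hφ2
        (Eventually.of_forall fun r => by positivity)] at h
      exact (ENNReal.ofReal_le_ofReal_iff (by positivity)).1 h
    have h3 : (∫ r, φ r ∂P) ^ 2 ≤ ∫ r, φ r ^ 2 ∂P := by
      have h := variance_nonneg φ P
      rw [variance_eq_sub hφL] at h
      simpa using h
    have h4 : ∫ r, φ r ∂P ≤ Real.sqrt ρ * ‖x - y‖ := by
      refine le_of_sq_le_sq ?_ (by positivity)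
      rw [mul_pow, Real.sq_sqrt hρ]
      linarith
    calc |Top P F f x - Top P F f y| = ‖∫ r, (f (F x r) - f (F y r)) ∂P‖ := by
          rw [integral_sub (hint x) (hint y)]; rfl
      _ ≤ ∫ r, l * φ r ∂P :=
          norm_integral_le_of_norm_le (hφ1.const_mul l) (Eventually.of_forall fun r => hf.2 _ _)
      _ = l * ∫ r, φ r ∂P := integral_const_mul _ _
      _ ≤ l * (Real.sqrt ρ * ‖x - y‖) := by gcongr
      _ = _ := by ring

lemma Top_iter_BL {P : Measure Ω} [IsProbabilityMeasure P] {F : E → Ω → E}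
    (hF : Measurable (Function.uncurry F)) {ρ : ℝ} (hρ : 0 ≤ ρ)
    (hc : ∀ x y, ∫⁻ r, ENNReal.ofReal (‖F x r - F y r‖ ^ 2) ∂P
      ≤ ENNReal.ofReal (ρ * ‖x - y‖ ^ 2)) {B l : ℝ} (hl : 0 ≤ l) {f : E → ℝ} (hf : BL B l f)
    (n : ℕ) : BL B (Real.sqrt ρ ^ n * l) ((Top P F)^[n] f) := by
  induction n with
  | zero => simpa using hf
  | succ n ih =>
    rw [Function.iterate_succ_apply', pow_succ', mul_assoc]
    exact Top_BL hF hρ hc (by positivity) ih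

lemma Top_dual {P : Measure Ω} [IsProbabilityMeasure P] {F : E → Ω → E}
    (hF : Measurable (Function.uncurry F)) {B l : ℝ} (hl : 0 ≤ l) {f : E → ℝ} (hf : BL B l f)
    (μ : Measure E) [IsProbabilityMeasure μ] :
    ∫ x, f x ∂(Mop P F μ) = ∫ x, Top P F f x ∂μ := by
  have hfm : Measurable f := (hf.cont hl).measurable
  rw [Mop, integral_map hF.aemeasurable hfm.aestronglyMeasurable, integral_prod]
  · rfl
  · exact bdd_int (fun r => hf.1 _) (hfm.comp hF) _

lemma Mop_iter_prob {P : Measure Ω} [IsProbabilityMeasure P] {F : E → Ω → E}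
    (hF : Measurable (Function.uncurry F)) (μ : Measure E) [IsProbabilityMeasure μ] (n : ℕ) :
    IsProbabilityMeasure ((Mop P F)^[n] μ) := by
  induction n with
  | zero => simpa
  | succ n ih =>
    rw [Function.iterate_succ_apply']
    exact Mop_prob hF _

lemma Top_iter_dual {P : Measure Ω} [IsProbabilityMeasure P] {F : E → Ω → E}
    (hF : Measurable (Function.uncurry F)) {ρ : ℝ} (hρ : 0 ≤ ρ)
    (hc : ∀ x y, ∫⁻ r, ENNReal.ofReal (‖F x r - F y r‖ ^ 2) ∂P
      ≤ ENNReal.ofReal (ρ * ‖x - y‖ ^ 2)) {B : ℝ}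
    (μ : Measure E) [IsProbabilityMeasure μ] (n : ℕ) :
    ∀ (l : ℝ) (_ : 0 ≤ l) (f : E → ℝ) (_ : BL B l f),
    ∫ x, f x ∂((Mop P F)^[n] μ) = ∫ x, (Top P F)^[n] f x ∂μ := by
  induction n with
  | zero => intros; rfl
  | succ n ih =>
    intro l hl f hf
    have := Mop_iter_prob (P := P) hF μ n
    rw [Function.iterate_succ_apply', Function.iterate_succ_apply, Top_dual hF hl hf]
    exact ih _ (by positivity) _ (Top_BL hF hρ hc hl hf)

lemma Top_iter_tendsto {P : Measure Ω} [IsProbabilityMeasure P] {F : E → Ω → E}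
    (hF : Measurable (Function.uncurry F)) {ρ : ℝ} (hρ : 0 ≤ ρ) (hρ1 : ρ < 1)
    (hc : ∀ x y, ∫⁻ r, ENNReal.ofReal (‖F x r - F y r‖ ^ 2) ∂P
      ≤ ENNReal.ofReal (ρ * ‖x - y‖ ^ 2)) {B l : ℝ} (hl : 0 ≤ l) {f : E → ℝ} (hf : BL B l f)
    (μ : Measure E) [IsProbabilityMeasure μ] :
    Tendsto (fun n => ∫ x, (Top P F)^[n] f x ∂μ - (Top P F)^[n] f 0) atTop (𝓝 0) := by
  have hBL := Top_iter_BL hF hρ hc hl hf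
  have hcont : ∀ n, Continuous ((Top P F)^[n] f) := fun n => (hBL n).cont (by positivity)
  have hint : ∀ n, Integrable ((Top P F)^[n] f) μ := fun n =>
    bdd_int (hBL n).1 (hcont n).measurable μ
  have heq : ∀ n, ∫ x, (Top P F)^[n] f x ∂μ - (Top P F)^[n] f 0
      = ∫ x, ((Top P F)^[n] f x - (Top P F)^[n] f 0) ∂μ := by
    intro n
    rw [integral_sub (hint n) (integrable_const _)]; simp
  simp_rw [heq]
  have h0 : (0 : ℝ) = ∫ x : E, (0 : ℝ) ∂μ := by simp
  rw [h0]
  refine tendsto_integral_of_dominated_convergence (fun _ => 2 * B) (fun n => ?_)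
    (integrable_const _) (fun n => Eventually.of_forall fun x => ?_)
    (Eventually.of_forall fun x => ?_)
  · exact ((hcont n).sub continuous_const).aestronglyMeasurable
  · refine (norm_sub_le _ _).trans ?_
    have h1 := (hBL n).1 x
    have h2 := (hBL n).1 0
    simp only [Real.norm_eq_abs]
    linarith
  · refine squeeze_zero_norm (fun n => (hBL n).2 x 0) ?_
    have hs : Real.sqrt ρ < 1 := by
      rw [Real.sqrt_lt' one_pos]; simpa using hρ1
    have := ((tendsto_pow_atTop_nhds_zero_of_lt_one (Real.sqrt_nonneg ρ) hs).mul_const l).mul_const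
      ‖x - 0‖
    simpa using this

lemma ext_BL (μ ν : Measure E) [hμ : IsProbabilityMeasure μ] [hν : IsProbabilityMeasure ν]
    (h : ∀ (B l : ℝ) (_ : 0 ≤ l) (f : E → ℝ), BL B l f → ∫ x, f x ∂μ = ∫ x, f x ∂ν) : μ = ν := by
  let μ' : ProbabilityMeasure E := ⟨μ, hμ⟩
  let ν' : ProbabilityMeasure E := ⟨ν, hν⟩
  have ht : Tendsto (fun _ : ℕ => μ') atTop (𝓝 ν') := by
    rw [tendsto_iff_forall_lipschitz_integral_tendsto]
    rintro f ⟨C, hC⟩ ⟨l, hl⟩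
    have hf : BL (|f 0| + C) l f := by
      refine ⟨fun x => ?_, fun x y => ?_⟩
      · have h1 := hC x 0
        rw [Real.dist_eq] at h1
        have h2 := abs_sub_abs_le_abs_sub (f x) (f 0)
        linarith
      · have := hl.dist_le_mul x y
        rwa [dist_eq_norm, dist_eq_norm] at this
    have := h _ _ l.2 f hf
    change Tendsto (fun _ : ℕ => ∫ x, f x ∂μ) atTop (𝓝 (∫ x, f x ∂ν))
    rw [this]
    exact tendsto_const_nhds
  have := tendsto_nhds_unique ht tendsto_const_nhds
  exact (congrArg (fun p : ProbabilityMeasure E => (p : Measure E)) this).symm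

lemma moment_iter {P : Measure Ω} [IsProbabilityMeasure P] {F : E → Ω → E}
    (hF : Measurable (Function.uncurry F)) {a c : ℝ} (ha : 0 ≤ a) (ha1 : a < 1) (hc0 : 0 ≤ c)
    (hd : ∀ x, ∫⁻ r, ENNReal.ofReal (‖F x r‖ ^ 2) ∂P
      ≤ ENNReal.ofReal (a * ‖x‖ ^ 2) + ENNReal.ofReal c) (n : ℕ) :
    ∫⁻ x, ENNReal.ofReal (‖x‖ ^ 2) ∂((Mop P F)^[n] (Measure.dirac 0))
      ≤ ENNReal.ofReal (c / (1 - a)) := by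
  have h1a : 0 < 1 - a := by linarith
  induction n with
  | zero => simp
  | succ n ih =>
    rw [Function.iterate_succ_apply']
    have := Mop_iter_prob (P := P) hF (Measure.dirac (0 : E)) n
    set μ := (Mop P F)^[n] (Measure.dirac (0 : E))
    have hm : Measurable fun x : E => ENNReal.ofReal (‖x‖ ^ 2) := by fun_prop
    have hm2 : Measurable fun q : E × Ω => ENNReal.ofReal (‖Function.uncurry F q‖ ^ 2) :=
      hm.comp hF
    rw [Mop, lintegral_map hm hF, lintegral_prod _ hm2.aemeasurable]
    calc _ ≤ ∫⁻ x, (ENNReal.ofReal (a * ‖x‖ ^ 2) + ENNReal.ofReal c) ∂μ := lintegral_mono hd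
      _ = ENNReal.ofReal a * ∫⁻ x, ENNReal.ofReal (‖x‖ ^ 2) ∂μ + ENNReal.ofReal c := by
          rw [lintegral_add_right _ measurable_const]
          simp_rw [ENNReal.ofReal_mul ha]
          rw [lintegral_const_mul _ hm]
          simp
      _ ≤ ENNReal.ofReal a * ENNReal.ofReal (c / (1 - a)) + ENNReal.ofReal c := by gcongr
      _ = _ := by
          rw [← ENNReal.ofReal_mul ha, ← ENNReal.ofReal_add (by positivity) hc0]
          congr 1
          field_simp
          ring

theorem markov_main {P : Measure Ω} [IsProbabilityMeasure P] {F : E → Ω → E}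
    (hF : Measurable (Function.uncurry F)) {ρ : ℝ} (hρ : 0 ≤ ρ) (hρ1 : ρ < 1)
    (hc : ∀ x y, ∫⁻ r, ENNReal.ofReal (‖F x r - F y r‖ ^ 2) ∂P
      ≤ ENNReal.ofReal (ρ * ‖x - y‖ ^ 2)) {a c : ℝ} (ha : 0 ≤ a) (ha1 : a < 1) (hc0 : 0 ≤ c)
    (hd : ∀ x, ∫⁻ r, ENNReal.ofReal (‖F x r‖ ^ 2) ∂P
      ≤ ENNReal.ofReal (a * ‖x‖ ^ 2) + ENNReal.ofReal c) :
    ∃ μ : Measure E, IsProbabilityMeasure μ ∧ μ.bind (fun x => P.map (F x)) = μ ∧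
      (∀ ν : Measure E, IsProbabilityMeasure ν → ν.bind (fun x => P.map (F x)) = ν → ν = μ) ∧
      ∫⁻ x, ENNReal.ofReal (‖x‖ ^ 2) ∂μ ≤ ENNReal.ofReal (c / (1 - a)) := by
  have h1a : 0 < 1 - a := by linarith
  set R := c / (1 - a) with hR
  have hR0 : 0 ≤ R := by positivity
  set ν : ℕ → Measure E := fun n => (Mop P F)^[n] (Measure.dirac 0) with hν
  have hνp : ∀ n, IsProbabilityMeasure (ν n) := fun n => Mop_iter_prob hF _ n
  have hνs : ∀ n, ν (n + 1) = Mop P F (ν n) := fun n => Function.iterate_succ_apply' _ _ _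
  have hmom : ∀ n, ∫⁻ x, ENNReal.ofReal (‖x‖ ^ 2) ∂(ν n) ≤ ENNReal.ofReal R :=
    moment_iter hF ha ha1 hc0 hd
  let ν' : ℕ → ProbabilityMeasure E := fun n => ⟨ν n, hνp n⟩
  -- tightness
  let u : ℕ → ℝ≥0 := fun n => R.toNNReal * ((1 / ((n : ℝ≥0) + 1)))
  have hu : Tendsto u atTop (𝓝 0) := by
    have := (tendsto_one_div_add_atTop_nhds_zero_nat (𝕜 := ℝ≥0)).const_mul R.toNNReal
    simpa [u] using this
  have hcomp := isCompact_setOfPred_probabilityMeasure_mass_eq_compl_isCompact_le (E := E)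
    (K := fun n : ℕ => Metric.closedBall (0 : E) (n + 1)) hu
    (fun n => isCompact_closedBall _ _) (Or.inl inferInstance)
  have hmem : ∀ k, ∀ n : ℕ, ν' k (Metric.closedBall (0 : E) (n + 1))ᶜ ≤ u n := by
    intro k n
    have hm : Measurable fun x : E => ENNReal.ofReal (‖x‖ ^ 2) := by fun_prop
    have hn : (0 : ℝ) < n + 1 := by positivity
    have h1 := mul_meas_ge_le_lintegral (μ := ν k) hm (ENNReal.ofReal (n + 1))
    have hsub : (Metric.closedBall (0 : E) (n + 1))ᶜ
        ⊆ {x : E | ENNReal.ofReal (n + 1) ≤ ENNReal.ofReal (‖x‖ ^ 2)} := by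
      intro x hx
      have hx' : (n : ℝ) + 1 < ‖x‖ := by simpa using hx
      refine ENNReal.ofReal_le_ofReal ?_
      nlinarith
    have h2 : ν k (Metric.closedBall (0 : E) (n + 1))ᶜ ≤ u n := by
      have h3 : ENNReal.ofReal (n + 1) * ν k (Metric.closedBall (0 : E) (n + 1))ᶜ
          ≤ ENNReal.ofReal R := by
        refine le_trans ?_ (h1.trans (hmom k))
        gcongr
      have h4 : (u n : ℝ≥0∞) = ENNReal.ofReal R / ENNReal.ofReal (n + 1) := by
        have : (u n : ℝ≥0∞) = ENNReal.ofReal (u n : ℝ) := (ENNReal.ofReal_coe_nnreal).symm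
        rw [this, ← ENNReal.ofReal_div_of_pos hn]
        congr 1
        simp [u, hR0, div_eq_mul_inv]
      rw [h4, ENNReal.le_div_iff_mul_le (Or.inl (by simpa using hn)) (Or.inl (by simp)), mul_comm]
      exact h3
    have h5 : ((ν' k (Metric.closedBall (0 : E) (n + 1))ᶜ : ℝ≥0) : ℝ≥0∞)
        = ν k (Metric.closedBall (0 : E) (n + 1))ᶜ :=
      ProbabilityMeasure.ennreal_coeFn_eq_coeFn_toMeasure _ _
    rw [← h5] at h2
    exact_mod_cast h2
  obtain ⟨π', -, hπ'⟩ := hcomp.ultrafilter_le_nhds ((hyperfilter ℕ).map ν') (by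
    rw [le_principal_iff]
    exact Filter.mem_map.2 (Filter.univ_mem' fun k => hmem k))
  have htend : Tendsto ν' (hyperfilter ℕ : Filter ℕ) (𝓝 π') := hπ'
  rw [ProbabilityMeasure.tendsto_iff_forall_integral_tendsto] at htend
  have hle : (hyperfilter ℕ : Filter ℕ) ≤ atTop := Nat.hyperfilter_le_atTop
  set μ : Measure E := (π' : Measure E) with hμ
  have hμp : IsProbabilityMeasure μ := π'.2
  have hlim : ∀ (f : E → ℝ) (B : ℝ), Continuous f → (∀ x, |f x| ≤ B) →
      Tendsto (fun n => ∫ x, f x ∂(ν n)) (hyperfilter ℕ : Filter ℕ) (𝓝 (∫ x, f x ∂μ)) := by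
    intro f B hf hB
    exact htend (BoundedContinuousFunction.ofNormedAddCommGroup f hf B hB)
  have hMp : IsProbabilityMeasure (Mop P F μ) := Mop_prob hF μ
  have hinv : Mop P F μ = μ := by
    refine ext_BL _ _ fun B l hl f hf => ?_
    rw [Top_dual hF hl hf]
    have hT := Top_BL hF hρ hc hl hf
    have t1 := hlim _ B (hT.cont (by positivity)) hT.1
    have t2 := hlim f B (hf.cont hl) hf.1
    have hM0 : IsProbabilityMeasure (Mop P F (Measure.dirac (0 : E))) := Mop_prob hF _
    have t3 := (Top_iter_tendsto hF hρ hρ1 hc hl hf (Mop P F (Measure.dirac (0 : E)))).mono_left hle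
    have t4 := t2.add t3
    rw [add_zero] at t4
    refine tendsto_nhds_unique t1 (t4.congr fun n => ?_)
    have e1 : ∫ x, f x ∂(ν n) = (Top P F)^[n] f 0 := by
      have := Top_iter_dual hF hρ hc (Measure.dirac (0 : E)) n l hl f hf
      rw [this, integral_dirac]
    have e2 : ∫ x, Top P F f x ∂(ν n) = ∫ x, (Top P F)^[n] f x ∂(Mop P F (Measure.dirac (0 : E))) := by
      have := hνp n
      rw [← Top_dual hF hl hf, ← hνs, ← Top_iter_dual hF hρ hc _ n l hl f hf]
      rfl
    rw [e1, e2]; ring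
  refine ⟨μ, hμp, ?_, ?_, ?_⟩
  · rw [bind_eq hF, hinv]
  · intro κ hκ hκinv
    rw [bind_eq hF] at hκinv
    refine ext_BL _ _ fun B l hl f hf => ?_
    have key : ∀ κ : Measure E, IsProbabilityMeasure κ → Mop P F κ = κ →
        Tendsto (fun n => (Top P F)^[n] f 0) atTop (𝓝 (∫ x, f x ∂κ)) := by
      intro κ hκ hκinv
      have h1 := Top_iter_tendsto hF hρ hρ1 hc hl hf κ
      have h2 : ∀ n, ∫ x, (Top P F)^[n] f x ∂κ = ∫ x, f x ∂κ := by
        intro n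
        rw [← Top_iter_dual hF hρ hc κ n l hl f hf, Function.iterate_fixed hκinv]
      simp_rw [h2] at h1
      have h3 := (tendsto_const_nhds (x := ∫ x, f x ∂κ)).sub h1
      simpa using h3
    exact tendsto_nhds_unique (key κ hκ hκinv) (key μ hμp hinv)
  · have hmono := lintegral_tendsto_of_tendsto_of_monotone (μ := μ)
      (f := fun (N : ℕ) (x : E) => ENNReal.ofReal (min (‖x‖ ^ 2) N))
      (F := fun x : E => ENNReal.ofReal (‖x‖ ^ 2)) (fun N => by fun_prop)
      (Eventually.of_forall fun x N N' h => ENNReal.ofReal_le_ofReal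
        (min_le_min le_rfl (by exact_mod_cast h)))
      (Eventually.of_forall fun x => by
        refine tendsto_const_nhds.congr' ?_
        obtain ⟨N0, hN0⟩ := exists_nat_ge (‖x‖ ^ 2)
        filter_upwards [eventually_ge_atTop N0] with N hN
        rw [min_eq_left]
        exact hN0.trans (by exact_mod_cast hN))
    refine le_of_tendsto' hmono fun N => ?_
    have hcN : Continuous fun x : E => min (‖x‖ ^ 2) (N : ℝ) := by fun_prop
    have h0 : ∀ x : E, 0 ≤ min (‖x‖ ^ 2) (N : ℝ) := fun x => by positivity
    have hB : ∀ x : E, |min (‖x‖ ^ 2) (N : ℝ)| ≤ N := fun x => by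
      rw [abs_of_nonneg (h0 x)]; exact min_le_right _ _
    have hi : ∀ κ : Measure E, IsProbabilityMeasure κ →
        Integrable (fun x : E => min (‖x‖ ^ 2) (N : ℝ)) κ := fun κ _ =>
      bdd_int hB hcN.measurable κ
    rw [← ofReal_integral_eq_lintegral_ofReal (hi μ hμp) (Eventually.of_forall h0)]
    refine ENNReal.ofReal_le_ofReal ?_
    refine le_of_tendsto' (hlim _ N hcN hB) fun n => ?_
    rw [← ENNReal.ofReal_le_ofReal_iff hR0,
      ofReal_integral_eq_lintegral_ofReal (hi _ (hνp n)) (Eventually.of_forall h0)]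
    refine le_trans (lintegral_mono fun x => ?_) (hmom n)
    exact ENNReal.ofReal_le_ofReal (min_le_left _ _)

end Markov

end PRLMC

/-- Under Assumption 1 there is a threshold `η₀ ∈ (0,1)` depending only on
`m` and `L` such that for every `η ∈ (0, η₀)` the PRLMC chain admits a unique stationary
distribution `π_η`, whose second moment is bounded by
`(d/m) (2 + 4η²L²(2 − 1/K) + L²(1 − 1/K))`. -/
theorem stmt0 (m L : ℝ) (hm : 0 < m) (hmL : m ≤ L) :
    ∃ η₀ : ℝ, η₀ ∈ Set.Ioo (0 : ℝ) 1 ∧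
      ∀ (d K : ℕ), 1 ≤ K → ∀ U : Euc d → ℝ, StrongAssumption U m L →
        ∀ η : ℝ, η ∈ Set.Ioo (0 : ℝ) η₀ →
          ∃ πη : Measure (Euc d), IsProbabilityMeasure πη ∧
            πη.bind (prlmcKernel U η K) = πη ∧
            (∀ μ : Measure (Euc d), IsProbabilityMeasure μ →
              μ.bind (prlmcKernel U η K) = μ → μ = πη) ∧
            ∫⁻ x, (‖x‖₊ : ℝ≥0∞) ^ 2 ∂πη ≤
              ENNReal.ofReal (((d : ℝ) / m) *
                (2 + 4 * η ^ 2 * L ^ 2 * (2 - 1 / (K : ℝ)) + L ^ 2 * (1 - 1 / (K : ℝ)))) := by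
  have hL : 0 < L := hm.trans_le hmL
  refine ⟨min (1 / 4) (min (m / 16) (m / (100 * L ^ 2))), ⟨by positivity, ?_⟩, ?_⟩
  · exact (min_le_left _ _).trans_lt (by norm_num)
  intro d K hK U h η ⟨hη, hη'⟩
  obtain ⟨q1, q2⟩ := lt_min_iff.1 hη'
  obtain ⟨q2, q3⟩ := lt_min_iff.1 q2
  have q2' : 16 * η ≤ m := by linarith
  have q3' : 100 * L ^ 2 * η ≤ m := by
    rw [lt_div_iff₀ (by positivity)] at q3
    linarith
  have hmη0 : 0 < m * η := by positivity
  have hmη : m * η ≤ 1 := by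
    have a1 : L * (100 * (L * η)) ≤ L * 1 := by nlinarith
    have a2 := le_of_mul_le_mul_left a1 hL
    have a3 : m * η ≤ L * η := by gcongr
    linarith
  have hKpos : (0 : ℝ) < K := by exact_mod_cast hK
  have hK1 : (1 : ℝ) / K ≤ 1 := by
    rw [div_le_one hKpos]; exact_mod_cast hK
  have hK2 : (0 : ℝ) ≤ 1 - 1 / K := by linarith
  have := PRLMC.noise_prob (d := d) hK
  obtain ⟨μ, h1, h2, h3, h4⟩ := PRLMC.markov_main (P := prlmcNoise d K)
    (F := fun x r => prlmcStep U η K x r.1 r.2.1 r.2.2) (PRLMC.step_cont h η K).measurable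
    (ρ := 1 - m * η) (by linarith) (by linarith) (PRLMC.step_contract hK h hη q3')
    (a := 1 - m * η) (c := η * d * (2 + L ^ 2 * (1 - 1 / K))) (by linarith) (by linarith)
    (by positivity) (PRLMC.step_drift hK h hη q1.le q2' q3')
  refine ⟨μ, h1, h2, h3, ?_⟩
  have e : ∀ x : Euc d, (‖x‖₊ : ℝ≥0∞) ^ 2 = ENNReal.ofReal (‖x‖ ^ 2) := fun x => by
    rw [ENNReal.ofReal_pow (norm_nonneg _), ofReal_norm_eq_enorm]
    rfl
  simp_rw [e]
  refine h4.trans (ENNReal.ofReal_le_ofReal ?_)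
  have e2 : η * d * (2 + L ^ 2 * (1 - 1 / K)) / (1 - (1 - m * η))
      = (d : ℝ) / m * (2 + L ^ 2 * (1 - 1 / K)) := by
    rw [sub_sub_cancel]
    field_simp
  rw [e2]
  have h5 : 0 ≤ 4 * η ^ 2 * L ^ 2 * (2 - 1 / (K : ℝ)) :=
    mul_nonneg (by positivity) (by linarith)
  gcongr
  linarith

end
end

section
/- Under Assumption 1, for any step size η ∈ (0, η₀) (where η₀ ∈ (0,1) is the threshold below which the PRLMC chain has a unique stationary distribution π_η) and any initial state X̃_0 = x ∈ ℝ^d, there exists a constant δ > 1 depending on η such that Σ_{n=1}^∞ δ^n · d_TV(L(X̃_n), π_η) < ∞; consequently the total variation distance satisfies d_TV(L(X̃_n), π_η) = o(δ^{−n}) as n → ∞. -/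
open MeasureTheory ProbabilityTheory Filter
open scoped ENNReal NNReal RealInnerProductSpace Topology BigOperators

noncomputable section

/-! ### Abstract part: contraction plus smoothing gives geometric ergodicity -/

section Abstract

variable {d : ℕ}

/-- Integrals of functions with values in `[0,1]` are controlled by the set distance. -/
lemma lintegral_le_of_sets (μ ν : Measure (Euc d)) (ε : ℝ≥0∞)
    (h : ∀ A, MeasurableSet A → μ A ≤ ν A + ε) (f : Euc d → ℝ) (hf : Measurable f)
    (h0 : ∀ x, 0 ≤ f x) (h1 : ∀ x, f x ≤ 1) :
    ∫⁻ x, ENNReal.ofReal (f x) ∂μ ≤ ∫⁻ x, ENNReal.ofReal (f x) ∂ν + ε := by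
  rw [lintegral_eq_lintegral_meas_lt μ (Eventually.of_forall h0) hf.aemeasurable,
    lintegral_eq_lintegral_meas_lt ν (Eventually.of_forall h0) hf.aemeasurable]
  have key : ∀ t : ℝ, μ {a | t < f a} ≤ ν {a | t < f a} + (Set.Iio (1 : ℝ)).indicator
      (fun _ => ε) t := by
    intro t
    by_cases ht : t < 1
    · simpa [Set.indicator, ht] using h _ (measurableSet_lt measurable_const hf)
    · have : {a | t < f a} = ∅ := by
        ext a
        simp only [Set.mem_ofPred_eq, Set.mem_empty_iff_false, iff_false, not_lt]
        exact (h1 a).trans (not_lt.1 ht)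
      simp [this]
  calc _ ≤ ∫⁻ t in Set.Ioi (0 : ℝ), (ν {a | t < f a} + (Set.Iio (1 : ℝ)).indicator
      (fun _ => ε) t) := lintegral_mono key
    _ = (∫⁻ t in Set.Ioi (0 : ℝ), ν {a | t < f a}) + ε := by
      rw [lintegral_add_right _ (measurable_const.indicator measurableSet_Iio),
        lintegral_indicator measurableSet_Iio]
      congr 1
      rw [lintegral_const, Measure.restrict_restrict measurableSet_Iio,
        Measure.restrict_apply_univ, Set.inter_comm, Set.Ioi_inter_Iio]
      simp

/-- Uniform setwise limits of probability measures are probability measures. -/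
lemma exists_limit_measure (μ : ℕ → Measure (Euc d)) [∀ n, IsProbabilityMeasure (μ n)]
    (C ρ : ℝ) (hρ0 : 0 ≤ ρ) (hρ1 : ρ < 1)
    (h : ∀ A, MeasurableSet A → ∀ n, |(μ (n + 1)).real A - (μ n).real A| ≤ C * ρ ^ n) :
    ∃ π : Measure (Euc d), IsProbabilityMeasure π ∧
      ∀ A, MeasurableSet A → ∀ n, |(μ n).real A - π.real A| ≤ C / (1 - ρ) * ρ ^ n := by
  classical
  have hd : ∀ A, MeasurableSet A → ∀ n, dist ((μ n).real A) ((μ (n + 1)).real A) ≤ C * ρ ^ n := by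
    intro A hA n
    rw [dist_comm, Real.dist_eq]
    exact h A hA n
  have hlim : ∀ A, MeasurableSet A → ∃ l, Tendsto (fun n => (μ n).real A) atTop (𝓝 l) := by
    intro A hA
    exact cauchySeq_tendsto_of_complete (cauchySeq_of_le_geometric ρ C hρ1 (hd A hA))
  choose l hl using hlim
  have hrate : ∀ A hA n, |(μ n).real A - l A hA| ≤ C / (1 - ρ) * ρ ^ n := by
    intro A hA n
    have := dist_le_of_le_geometric_of_tendsto ρ C hρ1 (hd A hA) (hl A hA) n
    rw [Real.dist_eq] at this
    calc _ ≤ _ := this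
      _ = _ := by ring
  have hl0 : ∀ A hA, 0 ≤ l A hA := fun A hA =>
    ge_of_tendsto' (hl A hA) fun n => measureReal_nonneg
  have hrate0 : Tendsto (fun n : ℕ => C / (1 - ρ) * ρ ^ n) atTop (𝓝 0) := by
    simpa using (tendsto_pow_atTop_nhds_zero_of_lt_one hρ0 hρ1).const_mul (C / (1 - ρ))
  have hlempty : l ∅ MeasurableSet.empty = 0 := by
    refine tendsto_nhds_unique (hl _ _) ?_
    simp
  have hluniv : l Set.univ MeasurableSet.univ = 1 := by
    refine tendsto_nhds_unique (hl _ _) ?_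
    simp
  have hsum : ∀ ⦃f : ℕ → Set (Euc d)⦄ (hf : ∀ i, MeasurableSet (f i)),
      Pairwise (Function.onFun Disjoint f) →
      HasSum (fun i => l (f i) (hf i)) (l (⋃ i, f i) (MeasurableSet.iUnion hf)) := by
    intro f hf hdisj
    rw [hasSum_iff_tendsto_nat_of_nonneg (fun i => hl0 _ _)]
    -- partial sums
    have hpart : ∀ n, Tendsto (fun N => ∑ i ∈ Finset.range N, (μ n).real (f i)) atTop
        (𝓝 ((μ n).real (⋃ i, f i))) := by
      intro n
      have := (hasSum_iff_tendsto_nat_of_nonneg (f := fun i => (μ n).real (f i))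
        (fun i => measureReal_nonneg) ((μ n).real (⋃ i, f i))).1 ?_
      · exact this
      · have hne : ∑' i, (μ n) (f i) ≠ ∞ := by
          rw [← measure_iUnion hdisj hf]
          exact measure_ne_top _ _
        have := ENNReal.hasSum_toReal hne
        rw [← ENNReal.tsum_toReal_eq (fun i => measure_ne_top _ _),
          ← measure_iUnion hdisj hf] at this
        exact this
    have hfin : ∀ n N, |∑ i ∈ Finset.range N, (μ n).real (f i)
        - ∑ i ∈ Finset.range N, l (f i) (hf i)| ≤ C / (1 - ρ) * ρ ^ n := by
      intro n N
      have hm : MeasurableSet (⋃ i ∈ Finset.range N, f i) :=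
        Finset.measurableSet_biUnion _ fun i _ => hf i
      have e : ∀ n, ∑ i ∈ Finset.range N, (μ n).real (f i)
          = (μ n).real (⋃ i ∈ Finset.range N, f i) := by
        intro n
        rw [measureReal_biUnion_finset (fun i _ j _ hij => hdisj hij) (fun i _ => hf i)]
      have e2 : ∑ i ∈ Finset.range N, l (f i) (hf i) = l _ hm := by
        refine tendsto_nhds_unique (tendsto_finsetSum _ fun i _ => hl (f i) (hf i)) ?_
        simp_rw [e]
        exact hl _ hm
      rw [e, e2]
      exact hrate _ hm n
    rw [Metric.tendsto_atTop]
    intro ε hε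
    obtain ⟨n, hn⟩ := ((tendsto_order.1 hrate0).2 (ε / 3) (by positivity)).exists
    obtain ⟨N0, hN0⟩ := Metric.tendsto_atTop.1 (hpart n) (ε / 3) (by positivity)
    refine ⟨N0, fun N hN => ?_⟩
    have h1 := hN0 N hN
    have h2 := hfin n N
    have h3 := hrate _ (MeasurableSet.iUnion hf) n
    rw [Real.dist_eq] at h1 ⊢
    rw [abs_lt] at *
    rw [abs_le] at *
    constructor <;> linarith
  let π : Measure (Euc d) := Measure.ofMeasurable (fun A hA => ENNReal.ofReal (l A hA))
    (by simp [hlempty]) (by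
      intro f hf hdisj
      have := hsum hf hdisj
      rw [← this.tsum_eq, ENNReal.ofReal_tsum_of_nonneg (fun i => hl0 _ _) this.summable])
  have hπ : ∀ A hA, π A = ENNReal.ofReal (l A hA) := fun A hA => Measure.ofMeasurable_apply A hA
  refine ⟨π, ⟨by rw [hπ _ MeasurableSet.univ, hluniv, ENNReal.ofReal_one]⟩, fun A hA n => ?_⟩
  rw [measureReal_def π, hπ A hA, ENNReal.toReal_ofReal (hl0 A hA)]
  exact hrate A hA n

variable {U : Euc d → ℝ} {η : ℝ} {K : ℕ}

lemma iter_prob (hQm : Measurable (prlmcKernel U η K))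
    (hQp : ∀ x, IsProbabilityMeasure (prlmcKernel U η K x))
    (μ : Measure (Euc d)) [IsProbabilityMeasure μ] (n : ℕ) :
    IsProbabilityMeasure (prlmcIter U η K μ n) := by
  induction n with
  | zero => exact ‹_›
  | succ n ih =>
    constructor
    rw [prlmcIter, Measure.bind_apply MeasurableSet.univ hQm.aemeasurable]
    simp

lemma iter_dirac_measurable (hQm : Measurable (prlmcKernel U η K)) (n : ℕ) :
    Measurable fun y => prlmcIter U η K (Measure.dirac y) n := by
  induction n with
  | zero => exact Measure.measurable_dirac
  | succ n ih => exact (Measure.measurable_bind' hQm).comp ih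

lemma iter_eq_bind (hQm : Measurable (prlmcKernel U η K)) (μ : Measure (Euc d)) (n : ℕ) :
    prlmcIter U η K μ n = μ.bind fun y => prlmcIter U η K (Measure.dirac y) n := by
  induction n with
  | zero => exact Measure.bind_dirac.symm
  | succ n ih =>
    rw [prlmcIter, ih, Measure.bind_bind (iter_dirac_measurable hQm n).aemeasurable
      hQm.aemeasurable]
    rfl

lemma iter_succ_left (hQm : Measurable (prlmcKernel U η K)) (μ : Measure (Euc d)) (n : ℕ) :
    prlmcIter U η K μ (n + 1) = prlmcIter U η K (μ.bind (prlmcKernel U η K)) n := by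
  induction n with
  | zero => rfl
  | succ n ih => rw [prlmcIter, ih, prlmcIter]

lemma iter_real_eq (hQm : Measurable (prlmcKernel U η K))
    (hQp : ∀ x, IsProbabilityMeasure (prlmcKernel U η K x)) (μ : Measure (Euc d)) (n : ℕ)
    {A : Set (Euc d)} (hA : MeasurableSet A) :
    (prlmcIter U η K μ n).real A
      = ∫ y, (prlmcIter U η K (Measure.dirac y) n).real A ∂μ := by
  have hm := iter_dirac_measurable hQm n
  have := fun y => iter_prob hQm hQp (Measure.dirac y) n
  rw [measureReal_def, iter_eq_bind hQm, Measure.bind_apply hA hm.aemeasurable]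
  simp only [measureReal_def]
  exact (integral_toReal (f := fun y => prlmcIter U η K (Measure.dirac y) n A) ((Measure.measurable_coe hA).comp hm).aemeasurable
    (Eventually.of_forall fun y => measure_lt_top _ _)).symm

lemma measurable_iter_real (hQm : Measurable (prlmcKernel U η K)) (n : ℕ)
    {A : Set (Euc d)} (hA : MeasurableSet A) :
    Measurable fun y => (prlmcIter U η K (Measure.dirac y) n).real A :=
  ((Measure.measurable_coe hA).comp (iter_dirac_measurable hQm n)).ennreal_toReal

lemma iter_dirac_succ_real (hQm : Measurable (prlmcKernel U η K))
    (hQp : ∀ x, IsProbabilityMeasure (prlmcKernel U η K x)) (x : Euc d) (n : ℕ)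
    {A : Set (Euc d)} (hA : MeasurableSet A) :
    (prlmcIter U η K (Measure.dirac x) (n + 1)).real A
      = ∫ y, (prlmcIter U η K (Measure.dirac y) n).real A ∂(prlmcKernel U η K x) := by
  rw [iter_succ_left hQm, Measure.dirac_bind hQm, iter_real_eq hQm hQp _ _ hA]

lemma dTV_le_of (μ ν : Measure (Euc d)) [IsProbabilityMeasure μ] [IsProbabilityMeasure ν]
    (c : ℝ) (h : ∀ A, MeasurableSet A → |μ.real A - ν.real A| ≤ c) :
    dTV μ ν ≤ ENNReal.ofReal c := by
  refine iSup₂_le fun A hA => ?_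
  have h1 := abs_le.1 (h A hA)
  have e1 : μ A = ENNReal.ofReal (μ.real A) := (ofReal_measureReal).symm
  have e2 : ν A = ENNReal.ofReal (ν.real A) := (ofReal_measureReal).symm
  rw [e1, e2, ← ENNReal.ofReal_sub _ measureReal_nonneg,
    ← ENNReal.ofReal_sub _ measureReal_nonneg]
  exact max_le (ENNReal.ofReal_le_ofReal (by linarith)) (ENNReal.ofReal_le_ofReal (by linarith))

/-- Wasserstein-type contraction plus one-step smoothing gives geometric ergodicity. -/
theorem abstract_main (hQm : Measurable (prlmcKernel U η K))
    (hQp : ∀ x, IsProbabilityMeasure (prlmcKernel U η K x))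
    (ρ C : ℝ) (hρ0 : 0 < ρ) (hρ1 : ρ < 1) (hC0 : 0 ≤ C)
    (hA : ∀ c, 0 ≤ c → ∀ g : Euc d → ℝ, Measurable g → (∀ x, 0 ≤ g x) → (∀ x, g x ≤ 1) →
      (∀ x y, |g x - g y| ≤ c * ‖x - y‖) → ∀ x y,
      |∫ z, g z ∂(prlmcKernel U η K x) - ∫ z, g z ∂(prlmcKernel U η K y)| ≤ c * ρ * ‖x - y‖)
    (hB : ∀ A, MeasurableSet A → ∀ x y,
      |(prlmcKernel U η K x).real A - (prlmcKernel U η K y).real A| ≤ C * ‖x - y‖)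
    (hC : ∀ x, Integrable (fun y => ‖y - x‖) (prlmcKernel U η K x)) :
    ∃ πη : Measure (Euc d), IsProbabilityMeasure πη ∧
            πη.bind (prlmcKernel U η K) = πη ∧
            (∀ μ : Measure (Euc d), IsProbabilityMeasure μ →
              μ.bind (prlmcKernel U η K) = μ → μ = πη) ∧
            ∃ δ : ℝ, 1 < δ ∧ ∀ x : Euc d,
              (∑' n : ℕ, ENNReal.ofReal (δ ^ n) *
                  dTV (prlmcIter U η K (Measure.dirac x) n) πη) < ⊤ ∧
              Tendsto (fun n : ℕ => ENNReal.ofReal (δ ^ n) *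
                  dTV (prlmcIter U η K (Measure.dirac x) n) πη) atTop (𝓝 0) := by
  have hP : ∀ x n, IsProbabilityMeasure (prlmcIter U η K (Measure.dirac x) n) :=
    fun x n => iter_prob hQm hQp _ n
  -- Lipschitz bounds
  have hLip : ∀ n A, MeasurableSet A → ∀ x y,
      |(prlmcIter U η K (Measure.dirac x) (n + 1)).real A
        - (prlmcIter U η K (Measure.dirac y) (n + 1)).real A| ≤ C * ρ ^ n * ‖x - y‖ := by
    intro n
    induction n with
    | zero =>
      intro A hAm x y
      have : ∀ z, prlmcIter U η K (Measure.dirac z) (0 + 1) = prlmcKernel U η K z := by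
        intro z
        exact Measure.dirac_bind hQm z
      rw [this, this]
      simpa using hB A hAm x y
    | succ n ih =>
      intro A hAm x y
      rw [iter_dirac_succ_real hQm hQp x _ hAm, iter_dirac_succ_real hQm hQp y _ hAm]
      refine (hA (C * ρ ^ n) (by positivity) _ (measurable_iter_real hQm _ hAm)
        (fun _ => measureReal_nonneg) (fun _ => measureReal_le_one) (ih A hAm) x y).trans
        (le_of_eq (by ring))
  -- one step differences
  set M : ℝ := ∫ y, ‖y - 0‖ ∂(prlmcKernel U η K 0) with hM
  have hM0 : 0 ≤ M := integral_nonneg fun _ => norm_nonneg _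
  have hstep : ∀ A, MeasurableSet A → ∀ n,
      |(prlmcIter U η K (Measure.dirac 0) (n + 1 + 1)).real A
        - (prlmcIter U η K (Measure.dirac 0) (n + 1)).real A| ≤ (C * M) * ρ ^ n := by
    intro A hAm n
    rw [iter_dirac_succ_real hQm hQp 0 _ hAm]
    have hint : Integrable (fun y => (prlmcIter U η K (Measure.dirac y) (n + 1)).real A)
        (prlmcKernel U η K 0) := by
      refine Integrable.of_bound (measurable_iter_real hQm _ hAm).aestronglyMeasurable 1 ?_
      refine Eventually.of_forall fun y => ?_
      rw [Real.norm_eq_abs, abs_of_nonneg measureReal_nonneg]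
      exact measureReal_le_one
    have e : (prlmcIter U η K (Measure.dirac 0) (n + 1)).real A
        = ∫ _y, (prlmcIter U η K (Measure.dirac 0) (n + 1)).real A ∂(prlmcKernel U η K 0) := by
      simp
    rw [e, ← integral_sub hint (integrable_const _)]
    refine abs_integral_le_integral_abs.trans ?_
    calc _ ≤ ∫ y, C * ρ ^ n * ‖y - 0‖ ∂(prlmcKernel U η K 0) := by
          refine integral_mono (hint.sub (integrable_const _)).abs ((hC 0).const_mul _) ?_
          intro y
          exact hLip n A hAm y 0
      _ = _ := by rw [integral_const_mul]; ring
  obtain ⟨π, hπp, hπ⟩ := exists_limit_measure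
    (fun n => prlmcIter U η K (Measure.dirac 0) (n + 1)) (C * M) ρ hρ0.le hρ1 hstep
  have h1ρ : 0 < 1 - ρ := by linarith
  -- rate from every starting point
  have hrate : ∀ x A, MeasurableSet A → ∀ n,
      |(prlmcIter U η K (Measure.dirac x) (n + 1)).real A - π.real A|
        ≤ (C * ‖x‖ + C * M / (1 - ρ)) * ρ ^ n := by
    intro x A hAm n
    have h1 := hLip n A hAm x 0
    have h2 := hπ A hAm n
    rw [sub_zero] at h1
    refine (abs_sub_le _ _ _).trans ((add_le_add h1 h2).trans (le_of_eq (by ring)))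
  have hpow : ∀ c : ℝ, Tendsto (fun n : ℕ => c * ρ ^ n) atTop (𝓝 0) := by
    intro c
    simpa using (tendsto_pow_atTop_nhds_zero_of_lt_one hρ0.le hρ1).const_mul c
  have hconv : ∀ x A, MeasurableSet A → Tendsto
      (fun n => (prlmcIter U η K (Measure.dirac x) (n + 1)).real A) atTop (𝓝 (π.real A)) := by
    intro x A hAm
    rw [tendsto_iff_norm_sub_tendsto_zero]
    exact squeeze_zero (fun _ => norm_nonneg _) (fun n => hrate x A hAm n) (hpow _)
  refine ⟨π, hπp, ?_, ?_, ?_⟩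
  · -- invariance
    have hle : ∀ A, MeasurableSet A → (π.bind (prlmcKernel U η K)) A ≤ π A := by
      intro A hAm
      rw [Measure.bind_apply hAm hQm.aemeasurable]
      have e : ∀ y, prlmcKernel U η K y A = ENNReal.ofReal ((prlmcKernel U η K y).real A) :=
        fun y => (ofReal_measureReal).symm
      have hbd : ∀ n, ∫⁻ y, prlmcKernel U η K y A ∂π
          ≤ ENNReal.ofReal ((prlmcIter U η K (Measure.dirac 0) (n + 1 + 1)).real A
            + C * M / (1 - ρ) * ρ ^ n) := by
        intro n
        have hc : 0 ≤ C * M / (1 - ρ) * ρ ^ n := by positivity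
        have := lintegral_le_of_sets π (prlmcIter U η K (Measure.dirac 0) (n + 1))
          (ENNReal.ofReal (C * M / (1 - ρ) * ρ ^ n)) (by
            intro B hBm
            have h1 := abs_le.1 (hπ B hBm n)
            have e1 : π B = ENNReal.ofReal (π.real B) := (ofReal_measureReal).symm
            have e2 : prlmcIter U η K (Measure.dirac 0) (n + 1) B
              = ENNReal.ofReal ((prlmcIter U η K (Measure.dirac 0) (n + 1)).real B) :=
              (ofReal_measureReal).symm
            rw [e1, e2, ← ENNReal.ofReal_add measureReal_nonneg hc]
            exact ENNReal.ofReal_le_ofReal (by linarith))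
          (fun y => (prlmcKernel U η K y).real A)
          ((Measure.measurable_coe hAm).comp hQm).ennreal_toReal
          (fun _ => measureReal_nonneg) (fun _ => measureReal_le_one)
        simp_rw [← e] at this
        rw [ENNReal.ofReal_add measureReal_nonneg hc, ofReal_measureReal]
        rw [← Measure.bind_apply (m := prlmcIter U η K (Measure.dirac 0) (n + 1)) hAm
          hQm.aemeasurable] at this
        exact this
      have hl : Tendsto (fun n => ENNReal.ofReal
          ((prlmcIter U η K (Measure.dirac 0) (n + 1 + 1)).real A
            + C * M / (1 - ρ) * ρ ^ n)) atTop (𝓝 (ENNReal.ofReal (π.real A + 0))) := by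
        refine ENNReal.tendsto_ofReal (Tendsto.add ?_ (hpow _))
        exact (hconv 0 A hAm).comp (tendsto_add_atTop_nat 1)
      rw [add_zero, ofReal_measureReal] at hl
      exact ge_of_tendsto' hl hbd
    have hbp : IsProbabilityMeasure (π.bind (prlmcKernel U η K)) := by
      constructor
      rw [Measure.bind_apply MeasurableSet.univ hQm.aemeasurable]
      simp
    exact Measure.eq_of_le_of_isProbabilityMeasure (Measure.le_iff.2 hle)
  · -- uniqueness
    intro μ hμ hinv
    have hit : ∀ n, prlmcIter U η K μ n = μ := by
      intro n
      induction n with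
      | zero => rfl
      | succ n ih => rw [prlmcIter, ih, hinv]
    ext A hAm
    have h1 : Tendsto (fun n => ∫ y, (prlmcIter U η K (Measure.dirac y) (n + 1)).real A ∂μ) atTop
        (𝓝 (∫ _y, π.real A ∂μ)) := by
      refine tendsto_integral_of_dominated_convergence (fun _ => 1) ?_ (integrable_const _) ?_ ?_
      · exact fun n => (measurable_iter_real hQm _ hAm).aestronglyMeasurable
      · intro n
        refine Eventually.of_forall fun y => ?_
        rw [Real.norm_eq_abs, abs_of_nonneg measureReal_nonneg]
        exact measureReal_le_one
      · exact Eventually.of_forall fun y => hconv y A hAm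
    simp_rw [← iter_real_eq hQm hQp μ _ hAm, hit] at h1
    have h2 := tendsto_nhds_unique h1 tendsto_const_nhds
    simp only [integral_const, probReal_univ, smul_eq_mul, one_mul] at h2
    rw [← ofReal_measureReal (μ := μ) (s := A), ← ofReal_measureReal (μ := π) (s := A), h2]
  · -- rate
    refine ⟨2 / (1 + ρ), by rw [lt_div_iff₀ (by linarith)]; linarith, fun x => ?_⟩
    set δ : ℝ := 2 / (1 + ρ) with hδ
    have hδ0 : 0 < δ := by positivity
    have hδρ : δ * ρ < 1 := by
      rw [hδ, div_mul_eq_mul_div, div_lt_one (by linarith)]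
      linarith
    set B : ℝ := 1 + (C * ‖x‖ + C * M / (1 - ρ)) / ρ with hB'
    have hB0 : 0 ≤ B := by positivity
    have hterm : ∀ n, ENNReal.ofReal (δ ^ n) * dTV (prlmcIter U η K (Measure.dirac x) n) π
        ≤ ENNReal.ofReal (B * (δ * ρ) ^ n) := by
      intro n
      have : dTV (prlmcIter U η K (Measure.dirac x) n) π ≤ ENNReal.ofReal (B * ρ ^ n) := by
        have := hP x n
        refine dTV_le_of _ _ _ fun A hAm => ?_
        rcases n with _ | n
        · have h1 : 1 ≤ B := by
            rw [hB']
            have : 0 ≤ (C * ‖x‖ + C * M / (1 - ρ)) / ρ := by positivity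
            linarith
          have a1 := measureReal_nonneg (μ := prlmcIter U η K (Measure.dirac x) 0) (s := A)
          have a2 := measureReal_nonneg (μ := π) (s := A)
          have a3 := measureReal_le_one (μ := prlmcIter U η K (Measure.dirac x) 0) (s := A)
          have a4 := measureReal_le_one (μ := π) (s := A)
          rw [pow_zero, abs_le]
          constructor <;> linarith
        · refine (hrate x A hAm n).trans ?_
          have : B * ρ ^ (n + 1) = ρ ^ (n + 1) + (C * ‖x‖ + C * M / (1 - ρ)) * ρ ^ n := by
            rw [hB']
            field_simp
            ring
          rw [this]
          have : 0 ≤ ρ ^ (n + 1) := by positivity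
          linarith
      calc _ ≤ ENNReal.ofReal (δ ^ n) * ENNReal.ofReal (B * ρ ^ n) := by gcongr
        _ = _ := by
          rw [← ENNReal.ofReal_mul (by positivity), mul_pow]
          congr 1
          ring
    have hfin : (∑' n : ℕ, ENNReal.ofReal (δ ^ n) *
                  dTV (prlmcIter U η K (Measure.dirac x) n) π) < ⊤ := by
      refine (ENNReal.tsum_le_tsum hterm).trans_lt ?_
      rw [← ENNReal.ofReal_tsum_of_nonneg (fun n => by positivity)]
      · exact ENNReal.ofReal_lt_top
      · exact (summable_geometric_of_lt_one (by positivity) hδρ).mul_left _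
    exact ⟨hfin, ENNReal.tendsto_atTop_zero_of_tsum_ne_top hfin.ne⟩

end Abstract

/-! ### Gaussian shifts -/

section GaussianShift

lemma sq_integral_le {α : Type*} [MeasurableSpace α] (μ : Measure α) [IsProbabilityMeasure μ]
    (f : α → ℝ) (hf : Integrable f μ) (hf2 : Integrable (fun z => f z ^ 2) μ) :
    (∫ z, f z ∂μ) ^ 2 ≤ ∫ z, f z ^ 2 ∂μ := by
  set c := ∫ z, f z ∂μ with hc
  have h0 : 0 ≤ ∫ z, (f z - c) ^ 2 ∂μ := integral_nonneg fun _ => sq_nonneg _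
  have e : (fun z => (f z - c) ^ 2) = fun z => (f z ^ 2 - (2 * c) * f z) + c ^ 2 := by
    ext z
    ring
  have h3 : Integrable (fun z => f z ^ 2 - (2 * c) * f z) μ := hf2.sub (hf.const_mul _)
  rw [e, integral_add h3 (integrable_const _), integral_sub hf2 (hf.const_mul _),
    integral_const_mul] at h0
  simp only [integral_const, probReal_univ, smul_eq_mul, one_mul] at h0
  rw [← hc] at h0
  nlinarith

lemma gaussian_shift_one (a : ℝ) :
    gaussianReal a 1 = (gaussianReal 0 1).withDensity
      fun t => ENNReal.ofReal (Real.exp (a * t - a ^ 2 / 2)) := by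
  rw [gaussianReal_of_var_ne_zero _ one_ne_zero, gaussianReal_of_var_ne_zero _ one_ne_zero,
    ← withDensity_mul _ (measurable_gaussianPDF 0 1) (by fun_prop)]
  congr 1
  ext t
  simp only [Pi.mul_apply, gaussianPDF]
  rw [← ENNReal.ofReal_mul (gaussianPDFReal_nonneg _ _ _)]
  congr 1
  simp only [gaussianPDFReal]
  rw [mul_assoc (√(2 * Real.pi * _))⁻¹, ← Real.exp_add]
  congr 2
  simp
  ring

instance stdGaussian_prob (d : ℕ) : IsProbabilityMeasure (_root_.stdGaussian d) := by
  unfold _root_.stdGaussian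
  exact Measure.isProbabilityMeasure_map (by fun_prop)

lemma pi_gaussian_shift (d : ℕ) (w : Fin d → ℝ) :
    (Measure.pi fun _ : Fin d => gaussianReal 0 1).map (fun z => z + w)
      = (Measure.pi fun _ : Fin d => gaussianReal 0 1).withDensity
        fun z => ENNReal.ofReal (Real.exp (∑ i, (w i * z i - w i ^ 2 / 2))) := by
  have h1 : (Measure.pi fun _ : Fin d => gaussianReal 0 1).map (fun z => z + w)
      = Measure.pi fun i : Fin d => gaussianReal (w i) 1 := by
    have := Measure.pi_map_pi (μ := fun _ : Fin d => gaussianReal 0 1)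
      (f := fun i t => t + w i) (fun i => by fun_prop)
    simp_rw [gaussianReal_map_add_const, zero_add] at this
    exact this
  rw [h1]
  refine Measure.pi_eq fun s hs => ?_
  rw [withDensity_apply _ (MeasurableSet.univ_pi hs)]
  rw [← lintegral_indicator (MeasurableSet.univ_pi hs)]
  have e : ∀ z : Fin d → ℝ, (Set.univ.pi s).indicator
      (fun z => ENNReal.ofReal (Real.exp (∑ i, (w i * z i - w i ^ 2 / 2)))) z
      = ∏ i, (s i).indicator (fun t => ENNReal.ofReal (Real.exp (w i * t - w i ^ 2 / 2))) (z i) := by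
    intro z
    by_cases hz : z ∈ Set.univ.pi s
    · rw [Set.indicator_of_mem hz, Real.exp_sum,
        ENNReal.ofReal_prod_of_nonneg (fun i _ => (Real.exp_pos _).le)]
      refine Finset.prod_congr rfl fun i _ => ?_
      rw [Set.indicator_of_mem (hz i (Set.mem_univ i))]
    · rw [Set.indicator_of_notMem hz]
      simp only [Set.mem_pi, Set.mem_univ, true_imp_iff, not_forall] at hz
      obtain ⟨i, hi⟩ := hz
      exact (Finset.prod_eq_zero (Finset.mem_univ i) (Set.indicator_of_notMem hi _)).symm
  simp_rw [e]
  have hmeas : ∀ i, Measurable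
      ((s i).indicator (fun t => ENNReal.ofReal (Real.exp (w i * t - w i ^ 2 / 2)))) :=
    fun i => Measurable.indicator (by fun_prop) (hs i)
  have hind := iIndepFun_pi (μ := fun _ : Fin d => gaussianReal 0 1)
    (X := fun i => (s i).indicator (fun t => ENNReal.ofReal (Real.exp (w i * t - w i ^ 2 / 2))))
    (fun i => (hmeas i).aemeasurable)
  rw [lintegral_prod_eq_prod_lintegral_of_indepFun Finset.univ _ hind
    (fun i => (hmeas i).comp (measurable_pi_apply i))]
  refine Finset.prod_congr rfl fun i _ => ?_
  have := lintegral_map (μ := Measure.pi fun _ : Fin d => gaussianReal 0 1) (hmeas i)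
    (measurable_pi_apply i)
  rw [← this, (measurePreserving_eval (fun _ : Fin d => gaussianReal 0 1) i).map_eq,
    lintegral_indicator (hs i), gaussian_shift_one (w i), withDensity_apply _ (hs i)]

/-- The density of the shifted standard Gaussian. -/
def shiftDens {d : ℕ} (w : Fin d → ℝ) (z : Fin d → ℝ) : ℝ :=
  Real.exp (∑ i, (w i * z i - w i ^ 2 / 2))

lemma shiftDens_nonneg {d : ℕ} (w z : Fin d → ℝ) : 0 ≤ shiftDens w z := (Real.exp_pos _).le

lemma shiftDens_measurable {d : ℕ} (w : Fin d → ℝ) : Measurable (shiftDens w) := by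
  unfold shiftDens
  fun_prop

lemma lintegral_shiftDens {d : ℕ} (w : Fin d → ℝ) :
    ∫⁻ z, ENNReal.ofReal (shiftDens w z) ∂(Measure.pi fun _ : Fin d => gaussianReal 0 1) = 1 := by
  have := congrArg (fun μ => μ Set.univ) (pi_gaussian_shift d w)
  simp only [withDensity_apply _ MeasurableSet.univ, Measure.restrict_univ] at this
  have hp : IsProbabilityMeasure ((Measure.pi fun _ : Fin d => gaussianReal 0 1).map
    (fun z => z + w)) := Measure.isProbabilityMeasure_map (by fun_prop)
  rw [measure_univ] at this
  exact this.symm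

lemma integrable_shiftDens {d : ℕ} (w : Fin d → ℝ) :
    Integrable (shiftDens w) (Measure.pi fun _ : Fin d => gaussianReal 0 1) := by
  refine ⟨(shiftDens_measurable w).aestronglyMeasurable, ?_⟩
  rw [hasFiniteIntegral_iff_ofReal (Eventually.of_forall fun z => shiftDens_nonneg w z),
    lintegral_shiftDens]
  exact ENNReal.one_lt_top

lemma integral_shiftDens {d : ℕ} (w : Fin d → ℝ) :
    ∫ z, shiftDens w z ∂(Measure.pi fun _ : Fin d => gaussianReal 0 1) = 1 := by
  rw [integral_eq_lintegral_of_nonneg_ae (Eventually.of_forall fun z => shiftDens_nonneg w z)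
    (shiftDens_measurable w).aestronglyMeasurable, lintegral_shiftDens]
  simp

lemma shiftDens_sq {d : ℕ} (w z : Fin d → ℝ) :
    shiftDens w z ^ 2 = Real.exp (∑ i, w i ^ 2) * shiftDens (fun i => 2 * w i) z := by
  unfold shiftDens
  rw [← Real.exp_nat_mul, ← Real.exp_add, Finset.mul_sum, ← Finset.sum_add_distrib]
  congr 1
  refine Finset.sum_congr rfl fun i _ => ?_
  push_cast
  ring

lemma integral_abs_shiftDens_sub_one {d : ℕ} (w : Fin d → ℝ) :
    ∫ z, |shiftDens w z - 1| ∂(Measure.pi fun _ : Fin d => gaussianReal 0 1)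
      ≤ Real.sqrt (Real.exp (∑ i, w i ^ 2) - 1) := by
  set γ := Measure.pi fun _ : Fin d => gaussianReal 0 1 with hγ
  have hi := integrable_shiftDens w
  have hi2 : Integrable (fun z => Real.exp (∑ i, w i ^ 2) * shiftDens (fun i => 2 * w i) z) γ :=
    (integrable_shiftDens _).const_mul _
  have hi3 : Integrable (fun z => Real.exp (∑ i, w i ^ 2) * shiftDens (fun i => 2 * w i) z
      - 2 * shiftDens w z) γ := hi2.sub (hi.const_mul 2)
  have hsqi : Integrable (fun z => (shiftDens w z - 1) ^ 2) γ := by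
    have : (fun z => (shiftDens w z - 1) ^ 2) = fun z =>
      Real.exp (∑ i, w i ^ 2) * shiftDens (fun i => 2 * w i) z - 2 * shiftDens w z + 1 := by
      ext z
      rw [← shiftDens_sq]
      ring
    rw [this]
    exact (hi2.sub (hi.const_mul 2)).add (integrable_const _)
  have hsq : ∫ z, (shiftDens w z - 1) ^ 2 ∂γ = Real.exp (∑ i, w i ^ 2) - 1 := by
    have : (fun z => (shiftDens w z - 1) ^ 2) = fun z =>
      (Real.exp (∑ i, w i ^ 2) * shiftDens (fun i => 2 * w i) z - 2 * shiftDens w z) + 1 := by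
      ext z
      rw [← shiftDens_sq]
      ring
    rw [this, integral_add hi3 (integrable_const _), integral_sub hi2 (hi.const_mul 2),
      integral_const_mul, integral_const_mul, integral_shiftDens, integral_shiftDens]
    simp
    ring
  have habs : Integrable (fun z => |shiftDens w z - 1|) γ := (hi.sub (integrable_const _)).abs
  refine Real.le_sqrt_of_sq_le ?_
  rw [← hsq]
  have := sq_integral_le γ (fun z => |shiftDens w z - 1|) habs (by simpa only [sq_abs] using hsqi)
  simpa only [sq_abs] using this

lemma pi_shift_bound {d : ℕ} (w : Fin d → ℝ) (B : Set (Fin d → ℝ)) (hB : MeasurableSet B) :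
    |((Measure.pi fun _ : Fin d => gaussianReal 0 1).map (fun z => z + w)).real B
      - (Measure.pi fun _ : Fin d => gaussianReal 0 1).real B|
      ≤ 2 * Real.sqrt (∑ i, w i ^ 2) := by
  set γ := Measure.pi fun _ : Fin d => gaussianReal 0 1 with hγ
  have hp : IsProbabilityMeasure (γ.map (fun z => z + w)) :=
    Measure.isProbabilityMeasure_map (by fun_prop)
  set s := ∑ i, w i ^ 2 with hs
  have hs0 : 0 ≤ s := Finset.sum_nonneg fun i _ => sq_nonneg _
  by_cases h1 : 1 ≤ s
  · have a1 := measureReal_nonneg (μ := γ.map (fun z => z + w)) (s := B)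
    have a2 := measureReal_nonneg (μ := γ) (s := B)
    have a3 := measureReal_le_one (μ := γ.map (fun z => z + w)) (s := B)
    have a4 := measureReal_le_one (μ := γ) (s := B)
    have : 1 ≤ Real.sqrt s := Real.one_le_sqrt.2 h1
    rw [abs_le]
    constructor <;> linarith
  · have hi := integrable_shiftDens w
    have e1 : (γ.map (fun z => z + w)).real B = ∫ z in B, shiftDens w z ∂γ := by
      rw [measureReal_def, hγ, pi_gaussian_shift, withDensity_apply _ hB]
      rw [integral_eq_lintegral_of_nonneg_ae (Eventually.of_forall fun z => shiftDens_nonneg w z)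
        (shiftDens_measurable w).aestronglyMeasurable]
      rfl
    have e2 : γ.real B = ∫ z in B, (1 : ℝ) ∂γ := by simp
    rw [e1, e2, ← integral_sub hi.integrableOn (integrable_const _).integrableOn]
    refine abs_integral_le_integral_abs.trans ?_
    refine (setIntegral_le_integral (hi.sub (integrable_const _)).abs
      (Eventually.of_forall fun z => abs_nonneg _)).trans ?_
    refine (integral_abs_shiftDens_sub_one w).trans ?_
    have h4 : 2 * Real.sqrt s = Real.sqrt (4 * s) := by
      rw [Real.sqrt_mul (by norm_num), show (4 : ℝ) = 2 ^ 2 by norm_num, Real.sqrt_sq (by norm_num)]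
    rw [h4]
    refine Real.sqrt_le_sqrt ?_
    have := Real.abs_exp_sub_one_le (x := s) (by rw [abs_of_nonneg hs0]; linarith)
    rw [abs_of_nonneg hs0] at this
    have := (abs_le.1 this).2
    linarith

/-- Total variation between two Gaussians with the same covariance. -/
lemma gaussian_tv {d : ℕ} (σ : ℝ) (hσ : 0 < σ) (u v : Euc d) (A : Set (Euc d))
    (hA : MeasurableSet A) :
    |(_root_.stdGaussian d).real {z | u + σ • z ∈ A} - (_root_.stdGaussian d).real {z | v + σ • z ∈ A}|
      ≤ 2 / σ * ‖u - v‖ := by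
  set γ := Measure.pi fun _ : Fin d => gaussianReal 0 1 with hγ
  set T : (Fin d → ℝ) → Euc d := ⇑(EuclideanSpace.equiv (Fin d) ℝ).symm with hT
  have hTm : Measurable T := by rw [hT]; fun_prop
  have hst : ∀ u : Euc d, (_root_.stdGaussian d).real {z | u + σ • z ∈ A}
      = γ.real {z | u + σ • T z ∈ A} := by
    intro u
    have hm : MeasurableSet {z : Euc d | u + σ • z ∈ A} :=
      (show Measurable fun z : Euc d => u + σ • z by fun_prop) hA
    rw [_root_.stdGaussian, map_measureReal_apply hTm hm]
    rfl
  rw [hst, hst]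
  set w : Fin d → ℝ := fun i => (u i - v i) / σ with hw
  have hB : MeasurableSet {z : Fin d → ℝ | v + σ • T z ∈ A} :=
    (show Measurable fun z : Fin d → ℝ => v + σ • T z by fun_prop) hA
  have h := pi_shift_bound w _ hB
  rw [map_measureReal_apply (by fun_prop) hB] at h
  have e : (fun z => z + w) ⁻¹' {z : Fin d → ℝ | v + σ • T z ∈ A} = {z | u + σ • T z ∈ A} := by
    ext z
    have : v + σ • T (z + w) = u + σ • T z := by
      ext i
      simp [hT, hw]
      field_simp
      ring
    simp [this]
  rw [e] at h
  refine h.trans (le_of_eq ?_)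
  have : ∑ i, w i ^ 2 = (‖u - v‖ / σ) ^ 2 := by
    rw [div_pow, EuclideanSpace.real_norm_sq_eq, Finset.sum_div]
    simp [hw, div_pow]
  rw [this, Real.sqrt_sq (by positivity)]
  ring

end GaussianShift

/-! ### Bernoulli noise -/

section Bern

lemma bern_prob {p : ℝ≥0∞} (hp : p ≤ 1) : IsProbabilityMeasure (bern p) := by
  constructor
  simp [bern, hp]

lemma bern_ae (p : ℝ≥0∞) : ∀ᵐ t ∂(bern p), 0 ≤ t ∧ t ≤ 1 := by
  unfold bern
  rw [ae_add_measure_iff]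
  refine ⟨Measure.ae_smul_measure ?_ _, Measure.ae_smul_measure ?_ _⟩ <;>
  · rw [ae_dirac_iff (by measurability)]
    norm_num

lemma bern_integral {p : ℝ≥0∞} (hp : p ≤ 1) (f : ℝ → ℝ) :
    ∫ t, f t ∂(bern p) = p.toReal * f 1 + (1 - p).toReal * f 0 := by
  unfold bern
  have hp' : p ≠ ⊤ := ne_top_of_le_ne_top ENNReal.one_ne_top hp
  have hq' : 1 - p ≠ ⊤ := ne_top_of_le_ne_top ENNReal.one_ne_top tsub_le_self
  rw [integral_add_measure, integral_smul_measure, integral_smul_measure]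
  · simp
  · exact (integrable_dirac (by simp)).smul_measure hp'
  · exact (integrable_dirac (by simp)).smul_measure hq'

variable {K : ℕ}

lemma inv_natCast_le_one (hK : 1 ≤ K) : (K : ℝ≥0∞)⁻¹ ≤ 1 := by
  rw [ENNReal.inv_le_one]
  exact_mod_cast hK

/-- The joint law of the Bernoulli variables. -/
abbrev bpi (K : ℕ) : Measure (Fin K → ℝ) := Measure.pi fun _ : Fin K => bern (K : ℝ≥0∞)⁻¹

lemma bpi_prob (hK : 1 ≤ K) : IsProbabilityMeasure (bpi K) := by
  have := bern_prob (inv_natCast_le_one hK)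
  infer_instance

lemma bpi_ae (hK : 1 ≤ K) : ∀ᵐ h ∂(bpi K), ∀ i, 0 ≤ h i ∧ h i ≤ 1 := by
  have := bern_prob (inv_natCast_le_one hK)
  rw [ae_all_iff]
  intro i
  exact (measurePreserving_eval (fun _ : Fin K => bern (K : ℝ≥0∞)⁻¹) i).quasiMeasurePreserving.ae
    (bern_ae _)

lemma memLp_id_bern (hK : 1 ≤ K) : MemLp (fun t : ℝ => t) 2 (bern (K : ℝ≥0∞)⁻¹) := by
  have := bern_prob (inv_natCast_le_one hK)
  refine MemLp.of_bound measurable_id.aestronglyMeasurable 1 ?_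
  filter_upwards [bern_ae (K : ℝ≥0∞)⁻¹] with t ht
  rw [Real.norm_eq_abs, abs_of_nonneg ht.1]
  exact ht.2

lemma memLp_H (hK : 1 ≤ K) : MemLp (fun h : Fin K → ℝ => ∑ i, h i) 2 (bpi K) := by
  have := bern_prob (inv_natCast_le_one hK)
  refine memLp_finsetSum _ fun i _ => ?_
  exact (memLp_id_bern hK).comp_measurePreserving (measurePreserving_eval _ i)

lemma integral_H (hK : 1 ≤ K) : ∫ h, ∑ i, h i ∂(bpi K) = 1 := by
  have := bern_prob (inv_natCast_le_one hK)
  rw [integral_finsetSum]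
  · have : ∀ i : Fin K, ∫ h, h i ∂(bpi K) = (K : ℝ)⁻¹ := by
      intro i
      have := integral_comp_eval (μ := fun _ : Fin K => bern (K : ℝ≥0∞)⁻¹) (i := i)
        (f := fun t : ℝ => t) measurable_id.aestronglyMeasurable
      rw [this, bern_integral (inv_natCast_le_one hK)]
      simp
    simp_rw [this]
    simp
    field_simp
  · intro i _
    exact ((memLp_id_bern hK).comp_measurePreserving (measurePreserving_eval _ i)).integrable
      (by norm_num)

lemma integral_H_sq (hK : 1 ≤ K) : ∫ h, (∑ i, h i) ^ 2 ∂(bpi K) ≤ 2 := by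
  have := bern_prob (inv_natCast_le_one hK)
  have hv := variance_sum_pi (μ := fun _ : Fin K => bern (K : ℝ≥0∞)⁻¹)
    (X := fun _ t => t) (fun i => memLp_id_bern hK)
  have h2 := variance_eq_sub (memLp_H hK)
  have h3 : ∀ i : Fin K, Var[fun t : ℝ => t; bern (K : ℝ≥0∞)⁻¹] ≤ (K : ℝ)⁻¹ := by
    intro i
    refine (variance_le_expectation_sq measurable_id.aestronglyMeasurable).trans ?_
    simp only [Pi.pow_apply]
    rw [bern_integral (inv_natCast_le_one hK)]
    simp
  have h4 : Var[fun h : Fin K → ℝ => ∑ i, h i; bpi K] ≤ 1 := by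
    have e : (∑ i, fun ω : Fin K → ℝ => ω i) = fun h : Fin K → ℝ => ∑ i, h i := by
      ext h
      simp
    rw [e] at hv
    rw [hv]
    refine (Finset.sum_le_sum fun i _ => h3 i).trans ?_
    simp
    rw [mul_inv_cancel₀]
    exact_mod_cast (by omega : K ≠ 0)
  rw [integral_H hK] at h2
  simp only [Pi.pow_apply] at h2
  linarith

end Bern

/-! ### Gradient bounds -/

section Grad

variable {d : ℕ} {U : Euc d → ℝ} {m L : ℝ}

lemma grad_mono (hU : StrongAssumption U m L) (x y : Euc d) :
    m * ‖x - y‖ ^ 2 ≤ ⟪x - y, gradient U x - gradient U y⟫ := by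
  obtain ⟨_, _, _, h, _⟩ := hU
  have h1 := (h x y).1
  have h2 := (h y x).1
  rw [norm_sub_rev y x] at h2
  have e : ⟪x - y, gradient U x - gradient U y⟫
      = -⟪gradient U x, y - x⟫ - ⟪gradient U y, x - y⟫ := by
    simp only [inner_sub_left, inner_sub_right, real_inner_comm]
    ring
  rw [e]
  linarith

lemma grad_lip (hU : StrongAssumption U m L) (x y : Euc d) :
    ‖gradient U x - gradient U y‖ ≤ L * ‖x - y‖ := by
  obtain ⟨_, hm, hmL, h, _⟩ := hU
  have hL : 0 < L := by linarith
  set G := gradient U y - gradient U x with hG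
  have h1 := (h x (y - L⁻¹ • G)).1
  have h2 := (h y (y - L⁻¹ • G)).2
  have h3 := (h x y).2
  have h0 : 0 ≤ m / 2 * ‖x - (y - L⁻¹ • G)‖ ^ 2 := by positivity
  have e1 : ‖y - (y - L⁻¹ • G)‖ ^ 2 = L⁻¹ ^ 2 * ‖G‖ ^ 2 := by
    rw [sub_sub_cancel, norm_smul, mul_pow, Real.norm_eq_abs, sq_abs]
  have e2 : ⟪gradient U y, y - L⁻¹ • G - y⟫ = - L⁻¹ * ⟪gradient U y, G⟫ := by
    rw [sub_sub_cancel_left, inner_neg_right, inner_smul_right]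
    ring
  have e3 : ⟪gradient U x, y - L⁻¹ • G - x⟫ = ⟪gradient U x, y - x⟫
      - L⁻¹ * ⟪gradient U x, G⟫ := by
    rw [sub_right_comm, inner_sub_right, inner_smul_right]
  have e4 : ⟪gradient U y, G⟫ - ⟪gradient U x, G⟫ = ‖G‖ ^ 2 := by
    rw [← inner_sub_left, ← hG, real_inner_self_eq_norm_sq]
  rw [e1, e2] at h2
  rw [e3] at h1
  have key : ‖G‖ ^ 2 ≤ (L * ‖x - y‖) ^ 2 := by
    have a1 : L⁻¹ * ‖G‖ ^ 2 - L / 2 * (L⁻¹ ^ 2 * ‖G‖ ^ 2) ≤ L / 2 * ‖x - y‖ ^ 2 := by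
      have e5 : L⁻¹ * ‖G‖ ^ 2 = L⁻¹ * ⟪gradient U y, G⟫ - L⁻¹ * ⟪gradient U x, G⟫ := by
        rw [← e4]
        ring
      linarith
    have a2 : L⁻¹ * ‖G‖ ^ 2 - L / 2 * (L⁻¹ ^ 2 * ‖G‖ ^ 2) = ‖G‖ ^ 2 / (2 * L) := by
      field_simp
      ring
    rw [a2, div_le_iff₀ (by positivity)] at a1
    nlinarith
  rw [norm_sub_rev]
  exact abs_le_of_sq_le_sq' key (by positivity) |>.2

lemma grad_cont (hU : StrongAssumption U m L) : Continuous (gradient U) := by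
  have hL : 0 ≤ L := by linarith [hU.2.1, hU.2.2.1]
  refine LipschitzWith.continuous (K := ⟨L, hL⟩) (LipschitzWith.of_dist_le_mul fun x y => ?_)
  rw [dist_eq_norm, dist_eq_norm]
  exact grad_lip hU x y

end Grad

/-! ### One step estimates -/

section Step

variable {d K : ℕ} {U : Euc d → ℝ} {m L η : ℝ}

lemma mid_coef (hη : 0 ≤ η) (i : Fin K) :
    0 ≤ (i : ℝ) * η / (K : ℝ) ∧ (i : ℝ) * η / (K : ℝ) ≤ η := by
  have hK : (0 : ℝ) < K := by
    have := i.pos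
    exact_mod_cast this
  have hi : (i : ℝ) ≤ K := by exact_mod_cast i.2.le
  refine ⟨by positivity, ?_⟩
  rw [div_le_iff₀ hK]
  nlinarith

lemma mid_grad_bounds (hU : StrongAssumption U m L) (hη : 0 ≤ η) (hηL : η * L ≤ 1)
    (x y : Euc d) (g : Fin K → Euc d) (i : Fin K) :
    ‖gradient U (prlmcMid U η K x g i) - gradient U (prlmcMid U η K y g i)‖ ≤ 2 * L * ‖x - y‖ ∧
    (m - 4 * η * L ^ 2) * ‖x - y‖ ^ 2 ≤
      ⟪x - y, gradient U (prlmcMid U η K x g i) - gradient U (prlmcMid U η K y g i)⟫ := by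
  have hm : 0 < m := hU.2.1
  have hmL : m ≤ L := hU.2.2.1
  have hL : 0 < L := by linarith
  obtain ⟨hs0, hs1⟩ := mid_coef hη i
  set s := (i : ℝ) * η / (K : ℝ) with hs
  set a := gradient U x - gradient U y with ha
  set b := gradient U (prlmcMid U η K x g i) - gradient U (prlmcMid U η K y g i) with hb
  have hdiff : prlmcMid U η K x g i - prlmcMid U η K y g i = (x - y) - s • a := by
    simp only [prlmcMid, ← hs, ha, smul_sub]
    abel
  have ha1 : ‖a‖ ≤ L * ‖x - y‖ := grad_lip hU x y
  have hb1 : ‖b‖ ≤ L * ‖(x - y) - s • a‖ := by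
    rw [← hdiff]
    exact grad_lip hU _ _
  have hn : ‖(x - y) - s • a‖ ≤ 2 * ‖x - y‖ := by
    refine (norm_sub_le _ _).trans ?_
    rw [norm_smul, Real.norm_eq_abs, abs_of_nonneg hs0]
    have : s * ‖a‖ ≤ η * (L * ‖x - y‖) := mul_le_mul hs1 ha1 (norm_nonneg _) hη
    nlinarith [norm_nonneg (x - y)]
  have hb2 : ‖b‖ ≤ 2 * L * ‖x - y‖ := by nlinarith
  refine ⟨hb2, ?_⟩
  have hmono := grad_mono hU (prlmcMid U η K x g i) (prlmcMid U η K y g i)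
  rw [hdiff, ← hb] at hmono
  have e1 : ⟪(x - y) - s • a, b⟫ = ⟪x - y, b⟫ - s * ⟪a, b⟫ := by
    rw [inner_sub_left, real_inner_smul_left]
  have e2 : ‖(x - y) - s • a‖ ^ 2 = ‖x - y‖ ^ 2 - 2 * (s * ⟪x - y, a⟫) + ‖s • a‖ ^ 2 := by
    rw [norm_sub_sq_real, real_inner_smul_right]
  have c1 : ⟪x - y, a⟫ ≤ L * ‖x - y‖ ^ 2 := by
    refine (real_inner_le_norm _ _).trans ?_
    nlinarith [norm_nonneg (x - y)]
  have c2 : -(2 * L ^ 2 * ‖x - y‖ ^ 2) ≤ ⟪a, b⟫ := by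
    have h1 := (abs_le.1 (abs_real_inner_le_norm a b)).1
    have h2 : ‖a‖ * ‖b‖ ≤ (L * ‖x - y‖) * (2 * L * ‖x - y‖) :=
      mul_le_mul ha1 hb2 (norm_nonneg _) (by positivity)
    nlinarith
  have c3 : s * ⟪x - y, a⟫ ≤ η * (L * ‖x - y‖ ^ 2) :=
    (mul_le_mul_of_nonneg_left c1 hs0).trans (mul_le_mul_of_nonneg_right hs1 (by positivity))
  have c4 : -(η * (2 * L ^ 2 * ‖x - y‖ ^ 2)) ≤ s * ⟪a, b⟫ := by
    have h1 := mul_le_mul_of_nonneg_left c2 hs0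
    have h2 : s * (2 * L ^ 2 * ‖x - y‖ ^ 2) ≤ η * (2 * L ^ 2 * ‖x - y‖ ^ 2) :=
      mul_le_mul_of_nonneg_right hs1 (by positivity)
    linarith
  have c5 : m * (‖x - y‖ ^ 2 - 2 * (η * (L * ‖x - y‖ ^ 2))) ≤ m * ‖(x - y) - s • a‖ ^ 2 := by
    refine mul_le_mul_of_nonneg_left ?_ hm.le
    rw [e2]
    have := sq_nonneg ‖s • a‖
    linarith
  have c6 : m * (η * (L * ‖x - y‖ ^ 2)) ≤ L * (η * (L * ‖x - y‖ ^ 2)) :=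
    mul_le_mul_of_nonneg_right hmL (by positivity)
  rw [e1] at hmono
  nlinarith

lemma step_diff (x y : Euc d) (h : Fin K → ℝ) (g : Fin K → Euc d) (z : Euc d) :
    prlmcStep U η K x h g z - prlmcStep U η K y h g z
      = (x - y) - η • ((1 - ∑ i, h i) • (gradient U x - gradient U y)
        + ∑ i, h i • (gradient U (prlmcMid U η K x g i) - gradient U (prlmcMid U η K y g i))) := by
  simp only [prlmcStep, smul_sub, sub_smul, Finset.sum_sub_distrib, Finset.sum_smul, one_smul,
    smul_add]
  abel

lemma step_sq_bound (hU : StrongAssumption U m L) (hη : 0 ≤ η) (hηL : η * L ≤ 1)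
    (x y : Euc d) (h : Fin K → ℝ) (hh : ∀ i, 0 ≤ h i) (g : Fin K → Euc d) (z : Euc d) :
    ‖prlmcStep U η K x h g z - prlmcStep U η K y h g z‖ ^ 2 ≤
      (‖x - y‖ ^ 2 * (1 + η ^ 2 * L ^ 2) - 2 * η * ⟪x - y, gradient U x - gradient U y⟫)
      + (‖x - y‖ ^ 2 * (6 * η ^ 2 * L ^ 2 - 2 * η * (m - 4 * η * L ^ 2))
          + 2 * η * ⟪x - y, gradient U x - gradient U y⟫) * (∑ i, h i)
      + (9 * ‖x - y‖ ^ 2 * η ^ 2 * L ^ 2) * (∑ i, h i) ^ 2 := by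
  have hm : 0 < m := hU.2.1
  have hmL : m ≤ L := hU.2.2.1
  have hL : 0 < L := by linarith
  rw [step_diff]
  set H := ∑ i, h i with hH
  have hH0 : 0 ≤ H := Finset.sum_nonneg fun i _ => hh i
  set a := gradient U x - gradient U y with ha
  set S := ∑ i, h i • (gradient U (prlmcMid U η K x g i) - gradient U (prlmcMid U η K y g i))
    with hS
  have ha1 : ‖a‖ ≤ L * ‖x - y‖ := grad_lip hU x y
  have hS1 : ‖S‖ ≤ H * (2 * L * ‖x - y‖) := by
    rw [hS, hH, Finset.sum_mul]
    refine norm_sum_le_of_le _ fun i _ => ?_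
    rw [norm_smul, Real.norm_eq_abs, abs_of_nonneg (hh i)]
    exact mul_le_mul_of_nonneg_left (mid_grad_bounds hU hη hηL x y g i).1 (hh i)
  have hS2 : H * ((m - 4 * η * L ^ 2) * ‖x - y‖ ^ 2) ≤ ⟪x - y, S⟫ := by
    rw [hS, hH, Finset.sum_mul, inner_sum]
    refine Finset.sum_le_sum fun i _ => ?_
    rw [real_inner_smul_right]
    exact mul_le_mul_of_nonneg_left (mid_grad_bounds hU hη hηL x y g i).2 (hh i)
  have hV : ‖(1 - H) • a + S‖ ≤ L * ‖x - y‖ * (1 + 3 * H) := by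
    refine (norm_add_le _ _).trans ?_
    rw [norm_smul, Real.norm_eq_abs]
    have h1 : |1 - H| ≤ 1 + H := by
      rw [abs_le]
      constructor <;> linarith
    have h2 : |1 - H| * ‖a‖ ≤ (1 + H) * (L * ‖x - y‖) :=
      mul_le_mul h1 ha1 (norm_nonneg _) (by linarith)
    nlinarith
  have hV2 : ‖(1 - H) • a + S‖ ^ 2 ≤ (L * ‖x - y‖ * (1 + 3 * H)) ^ 2 :=
    pow_le_pow_left₀ (norm_nonneg _) hV 2
  rw [norm_sub_sq_real, real_inner_smul_right, inner_add_right, real_inner_smul_right, norm_smul,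
    mul_pow, Real.norm_eq_abs, sq_abs]
  have h3 : η ^ 2 * ‖(1 - H) • a + S‖ ^ 2 ≤ η ^ 2 * (L * ‖x - y‖ * (1 + 3 * H)) ^ 2 :=
    mul_le_mul_of_nonneg_left hV2 (sq_nonneg _)
  have h4 := mul_le_mul_of_nonneg_left hS2 hη
  nlinarith

lemma step_measurable (hU : StrongAssumption U m L) :
    Measurable fun p : Euc d × ((Fin K → ℝ) × (Fin K → Euc d) × Euc d) =>
      prlmcStep U η K p.1 p.2.1 p.2.2.1 p.2.2.2 := by
  have hc := grad_cont hU
  refine Continuous.measurable ?_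
  unfold prlmcStep prlmcMid
  fun_prop

lemma step_measurable' (hU : StrongAssumption U m L) (x : Euc d) :
    Measurable fun r : (Fin K → ℝ) × (Fin K → Euc d) × Euc d =>
      prlmcStep U η K x r.1 r.2.1 r.2.2 := by
  have hc := grad_cont hU
  refine Continuous.measurable ?_
  unfold prlmcStep prlmcMid
  fun_prop

lemma drift_measurable (hU : StrongAssumption U m L) (x : Euc d) :
    Measurable fun p : (Fin K → ℝ) × (Fin K → Euc d) => prlmcStep U η K x p.1 p.2 0 := by
  have hc := grad_cont hU
  refine Continuous.measurable ?_
  unfold prlmcStep prlmcMid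
  fun_prop

lemma noise_prob (hK : 1 ≤ K) : IsProbabilityMeasure (prlmcNoise d K) := by
  have := bpi_prob hK
  unfold prlmcNoise
  infer_instance

lemma noise_ae (hK : 1 ≤ K) : ∀ᵐ r ∂(prlmcNoise d K), ∀ i, 0 ≤ r.1 i ∧ r.1 i ≤ 1 := by
  have := bpi_prob hK
  exact Measure.quasiMeasurePreserving_fst.ae (bpi_ae hK)

lemma kernel_measurable (hK : 1 ≤ K) (hU : StrongAssumption U m L) :
    Measurable (prlmcKernel U η K) := by
  have := noise_prob (d := d) hK
  refine Measure.measurable_of_measurable_coe _ fun A hA => ?_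
  have hm := step_measurable (η := η) (K := K) hU
  have e : (fun x => prlmcKernel U η K x A) = fun x => prlmcNoise d K (Prod.mk x ⁻¹'
      ((fun p : Euc d × ((Fin K → ℝ) × (Fin K → Euc d) × Euc d) =>
      prlmcStep U η K p.1 p.2.1 p.2.2.1 p.2.2.2) ⁻¹' A)) := by
    ext x
    rw [prlmcKernel, Measure.map_apply (step_measurable' hU x) hA]
    rfl
  rw [e]
  exact measurable_measure_prodMk_left (hm hA)

lemma kernel_prob (hK : 1 ≤ K) (hU : StrongAssumption U m L) (x : Euc d) :
    IsProbabilityMeasure (prlmcKernel U η K x) := by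
  have := noise_prob (d := d) hK
  exact Measure.isProbabilityMeasure_map (step_measurable' hU x).aemeasurable

/-- Mean contraction under the synchronous coupling. -/
lemma step_contract (hK : 1 ≤ K) (hU : StrongAssumption U m L) (hη : 0 < η)
    (hηs : η * (33 * L ^ 2) ≤ m) (x y : Euc d) :
    Integrable (fun r => ‖prlmcStep U η K x r.1 r.2.1 r.2.2 - prlmcStep U η K y r.1 r.2.1 r.2.2‖)
      (prlmcNoise d K) ∧
    ∫ r, ‖prlmcStep U η K x r.1 r.2.1 r.2.2 - prlmcStep U η K y r.1 r.2.1 r.2.2‖ ∂(prlmcNoise d K)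
      ≤ Real.sqrt (1 - η * m) * ‖x - y‖ := by
  have hm : 0 < m := hU.2.1
  have hmL : m ≤ L := hU.2.2.1
  have hL : 0 < L := by linarith
  have hηL : η * L ≤ 1 := by
    have : (η * L) * L ≤ 1 * L := by nlinarith [mul_pos hη (mul_pos hL hL)]
    exact le_of_mul_le_mul_right this hL
  have := noise_prob (d := d) hK
  have hbp := bpi_prob hK
  set N := prlmcNoise d K with hN
  set q := ⟪x - y, gradient U x - gradient U y⟫ with hq
  set n2 := ‖x - y‖ ^ 2 with hn2
  have hn20 : 0 ≤ n2 := sq_nonneg _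
  set c0 := n2 * (1 + η ^ 2 * L ^ 2) - 2 * η * q with hc0
  set c1 := n2 * (6 * η ^ 2 * L ^ 2 - 2 * η * (m - 4 * η * L ^ 2)) + 2 * η * q with hc1
  set c2 := 9 * n2 * η ^ 2 * L ^ 2 with hc2
  have hc20 : 0 ≤ c2 := by positivity
  let D := fun r : (Fin K → ℝ) × (Fin K → Euc d) × Euc d =>
    ‖prlmcStep U η K x r.1 r.2.1 r.2.2 - prlmcStep U η K y r.1 r.2.1 r.2.2‖
  have hDm : Measurable D := ((step_measurable' hU x).sub (step_measurable' hU y)).norm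
  have hbd : ∀ᵐ r ∂N, D r ^ 2 ≤ c0 + c1 * (∑ i, r.1 i) + c2 * (∑ i, r.1 i) ^ 2 := by
    filter_upwards [noise_ae (d := d) hK] with r hr
    exact step_sq_bound hU hη.le hηL x y r.1 (fun i => (hr i).1) r.2.1 r.2.2
  have hI1 : Integrable (fun h : Fin K → ℝ => ∑ i, h i) (bpi K) :=
    (memLp_H hK).integrable (by norm_num)
  have hI2 : Integrable (fun h : Fin K → ℝ => (∑ i, h i) ^ 2) (bpi K) := (memLp_H hK).integrable_sq
  have hI01 : Integrable (fun h : Fin K → ℝ => c0 + c1 * (∑ i, h i)) (bpi K) :=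
    (integrable_const _).add (hI1.const_mul _)
  have hR : Integrable (fun h : Fin K → ℝ => c0 + c1 * (∑ i, h i) + c2 * (∑ i, h i) ^ 2) (bpi K) :=
    hI01.add (hI2.const_mul _)
  have hRN : Integrable (fun r : (Fin K → ℝ) × (Fin K → Euc d) × Euc d =>
      c0 + c1 * (∑ i, r.1 i) + c2 * (∑ i, r.1 i) ^ 2) N := hR.comp_fst _
  have hRint : ∫ r, (c0 + c1 * (∑ i, r.1 i) + c2 * (∑ i, r.1 i) ^ 2) ∂N ≤ (1 - η * m) * n2 := by
    have e : ∫ r, (c0 + c1 * (∑ i, r.1 i) + c2 * (∑ i, r.1 i) ^ 2) ∂N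
        = ∫ h, (c0 + c1 * (∑ i, h i) + c2 * (∑ i, h i) ^ 2) ∂(bpi K) := by
      rw [hN, prlmcNoise]
      rw [integral_fun_fst (fun h : Fin K → ℝ => c0 + c1 * (∑ i, h i) + c2 * (∑ i, h i) ^ 2)]
      simp
    rw [e, integral_add hI01 (hI2.const_mul _), integral_add (integrable_const _)
      (hI1.const_mul _), integral_const_mul, integral_const_mul, integral_H hK]
    simp only [integral_const, probReal_univ, smul_eq_mul, one_mul]
    have h1 := mul_le_mul_of_nonneg_left (integral_H_sq hK) hc20
    have h2 : η * n2 * (η * (33 * L ^ 2)) ≤ η * n2 * m :=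
      mul_le_mul_of_nonneg_left hηs (by positivity)
    rw [hc2] at h1 ⊢
    rw [hc0, hc1]
    nlinarith
  have hD2 : Integrable (fun r => D r ^ 2) N := by
    refine hRN.mono' (hDm.pow_const 2).aestronglyMeasurable ?_
    filter_upwards [hbd] with r hr
    rwa [Real.norm_eq_abs, abs_of_nonneg (sq_nonneg _)]
  have hD1 : Integrable D N := by
    refine ((integrable_const (1 : ℝ)).add hD2).mono' hDm.aestronglyMeasurable ?_
    refine Eventually.of_forall fun r => ?_
    have h0 : 0 ≤ D r := norm_nonneg _
    rw [Real.norm_eq_abs, abs_of_nonneg h0]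
    simp only [Pi.add_apply]
    nlinarith [sq_nonneg (D r - 1)]
  refine ⟨hD1, ?_⟩
  have h1 := sq_integral_le N D hD1 hD2
  have h2 : ∫ r, D r ^ 2 ∂N ≤ (1 - η * m) * n2 := (integral_mono_ae hD2 hRN hbd).trans hRint
  have h3 : Real.sqrt (1 - η * m) * ‖x - y‖ = Real.sqrt ((1 - η * m) * n2) := by
    rw [Real.sqrt_mul' _ hn20, hn2, Real.sqrt_sq (norm_nonneg _)]
  rw [h3]
  exact Real.le_sqrt_of_sq_le (h1.trans h2)

lemma kernel_contract (hK : 1 ≤ K) (hU : StrongAssumption U m L) (hη : 0 < η)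
    (hηs : η * (33 * L ^ 2) ≤ m) (c : ℝ) (hc : 0 ≤ c) (g : Euc d → ℝ) (hg : Measurable g)
    (hg0 : ∀ x, 0 ≤ g x) (hg1 : ∀ x, g x ≤ 1) (hgl : ∀ x y, |g x - g y| ≤ c * ‖x - y‖)
    (x y : Euc d) :
    |∫ z, g z ∂(prlmcKernel U η K x) - ∫ z, g z ∂(prlmcKernel U η K y)|
      ≤ c * Real.sqrt (1 - η * m) * ‖x - y‖ := by
  have := noise_prob (d := d) hK
  obtain ⟨hi, hb⟩ := step_contract hK hU hη hηs x y
  have hint : ∀ x, Integrable (fun r : (Fin K → ℝ) × (Fin K → Euc d) × Euc d =>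
      g (prlmcStep U η K x r.1 r.2.1 r.2.2)) (prlmcNoise d K) := by
    intro x
    refine Integrable.of_bound (hg.comp (step_measurable' hU x)).aestronglyMeasurable 1 ?_
    refine Eventually.of_forall fun r => ?_
    rw [Real.norm_eq_abs, abs_of_nonneg (hg0 _)]
    exact hg1 _
  have e : ∀ x, ∫ z, g z ∂(prlmcKernel U η K x)
      = ∫ r, g (prlmcStep U η K x r.1 r.2.1 r.2.2) ∂(prlmcNoise d K) := fun x =>
    integral_map (step_measurable' hU x).aemeasurable hg.aestronglyMeasurable
  rw [e, e, ← integral_sub (hint x) (hint y)]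
  refine abs_integral_le_integral_abs.trans ?_
  refine (integral_mono ((hint x).sub (hint y)).abs (hi.const_mul c) fun r => hgl _ _).trans ?_
  rw [integral_const_mul, mul_assoc]
  exact mul_le_mul_of_nonneg_left hb hc

set_option maxHeartbeats 800000 in
lemma kernel_smooth (hK : 1 ≤ K) (hU : StrongAssumption U m L) (hη : 0 < η)
    (hηs : η * (33 * L ^ 2) ≤ m) (A : Set (Euc d)) (hA : MeasurableSet A) (x y : Euc d) :
    |(prlmcKernel U η K x).real A - (prlmcKernel U η K y).real A|
      ≤ 2 / Real.sqrt (2 * η) * Real.sqrt (1 - η * m) * ‖x - y‖ := by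
  have := noise_prob (d := d) hK
  have hbp := bpi_prob hK
  obtain ⟨hi, hb⟩ := step_contract hK hU hη hηs x y
  set σ := Real.sqrt (2 * η) with hσ
  have hσ0 : 0 < σ := Real.sqrt_pos.2 (by linarith)
  set G : Measure (Fin K → Euc d) := Measure.pi fun _ : Fin K => _root_.stdGaussian d with hG
  -- drift part
  let a : Euc d → (Fin K → ℝ) × (Fin K → Euc d) → Euc d := fun x p =>
    prlmcStep U η K x p.1 p.2 0
  have ha : ∀ x h g z, prlmcStep U η K x h g z = a x (h, g) + σ • z := by
    intro x h g z
    simp [a, prlmcStep, hσ]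
  have ham : ∀ x, Measurable (a x) := fun x => drift_measurable hU x
  clear_value a
  set P := (bpi K).prod G with hP
  have hPN : prlmcNoise d K = (P.prod (_root_.stdGaussian d)).map MeasurableEquiv.prodAssoc := by
    rw [hP, Measure.prodAssoc_prod]
    rfl
  have hmm : ∀ x, MeasurableSet
      {p : ((Fin K → ℝ) × (Fin K → Euc d)) × Euc d | a x p.1 + σ • p.2 ∈ A} := by
    intro x
    have h1 := ham x
    exact (show Measurable fun p : ((Fin K → ℝ) × (Fin K → Euc d)) × Euc d =>
      a x p.1 + σ • p.2 by fun_prop) hA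
  have hreal : ∀ x, (prlmcKernel U η K x).real A
      = ∫ p, (_root_.stdGaussian d).real {z | a x p + σ • z ∈ A} ∂P := by
    intro x
    have e1 : prlmcKernel U η K x A
        = ∫⁻ p, (_root_.stdGaussian d) {z | a x p + σ • z ∈ A} ∂P := by
      rw [prlmcKernel, Measure.map_apply (step_measurable' hU x) hA, hPN,
        Measure.map_apply MeasurableEquiv.prodAssoc.measurable (step_measurable' hU x hA)]
      have e2 : (MeasurableEquiv.prodAssoc : ((Fin K → ℝ) × (Fin K → Euc d)) × Euc d ≃ᵐ _) ⁻¹'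
          ((fun r : (Fin K → ℝ) × (Fin K → Euc d) × Euc d =>
            prlmcStep U η K x r.1 r.2.1 r.2.2) ⁻¹' A)
          = {p : ((Fin K → ℝ) × (Fin K → Euc d)) × Euc d | a x p.1 + σ • p.2 ∈ A} := by
        ext p
        rw [Set.mem_preimage, Set.mem_preimage, ha]
        rfl
      rw [e2, Measure.prod_apply (hmm x)]
      rfl
    rw [measureReal_def, e1]
    exact (integral_toReal (measurable_measure_prodMk_left (hmm x)).aemeasurable
      (Eventually.of_forall fun p => measure_lt_top _ _)).symm
  have hint : ∀ x, Integrable (fun p => (_root_.stdGaussian d).real {z | a x p + σ • z ∈ A}) P := by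
    intro x
    refine Integrable.of_bound
      (measurable_measure_prodMk_left (hmm x)).ennreal_toReal.aestronglyMeasurable 1 ?_
    refine Eventually.of_forall fun p => ?_
    rw [Real.norm_eq_abs, abs_of_nonneg measureReal_nonneg]
    exact measureReal_le_one (μ := _root_.stdGaussian d)
  -- transfer of the contraction estimate
  have hDe : ∀ r : (Fin K → ℝ) × (Fin K → Euc d) × Euc d,
      ‖prlmcStep U η K x r.1 r.2.1 r.2.2 - prlmcStep U η K y r.1 r.2.1 r.2.2‖
      = ‖a x (r.1, r.2.1) - a y (r.1, r.2.1)‖ := by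
    intro r
    rw [ha, ha, add_sub_add_right_eq_sub]
  simp_rw [hDe] at hi hb
  rw [hPN] at hi hb
  rw [integral_map_equiv] at hb
  rw [integrable_map_equiv] at hi
  have hb' : ∫ p, ‖a x p - a y p‖ ∂P ≤ Real.sqrt (1 - η * m) * ‖x - y‖ := by
    refine le_trans (le_of_eq ?_) hb
    have := integral_fun_fst (μ := P) (ν := _root_.stdGaussian d) (fun p => ‖a x p - a y p‖)
    rw [probReal_univ, one_smul] at this
    rw [← this]
    rfl
  have hi' : Integrable (fun p => ‖a x p - a y p‖) P := by
    have h0 : (_root_.stdGaussian d) ≠ 0 := IsProbabilityMeasure.ne_zero _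
    exact (Integrable.comp_fst_iff (f := fun p => ‖a x p - a y p‖) h0).1 hi
  rw [hreal, hreal, ← integral_sub (hint x) (hint y)]
  refine abs_integral_le_integral_abs.trans ?_
  refine (integral_mono ((hint x).sub (hint y)).abs (hi'.const_mul (2 / σ))
    fun p => gaussian_tv σ hσ0 _ _ A hA).trans ?_
  rw [integral_const_mul, mul_assoc]
  exact mul_le_mul_of_nonneg_left hb' (by positivity)

lemma stdGaussian_integrable_norm (d : ℕ) : Integrable (fun z => ‖z‖) (_root_.stdGaussian d) := by
  have hT : Measurable ⇑(EuclideanSpace.equiv (Fin d) ℝ).symm := by fun_prop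
  unfold _root_.stdGaussian
  rw [integrable_map_measure (by fun_prop) hT.aemeasurable]
  have h1 : Integrable (fun z : Fin d → ℝ => ∑ i, |z i|)
      (Measure.pi fun _ : Fin d => gaussianReal 0 1) := by
    refine integrable_finsetSum _ fun i _ => ?_
    have := ((memLp_id_gaussianReal (μ := 0) (v := 1) 1).integrable (by norm_num)).abs
    exact integrable_comp_eval (μ := fun _ : Fin d => gaussianReal 0 1) (i := i) this
  refine h1.mono' (by fun_prop) (Eventually.of_forall fun z => ?_)
  simp only [Function.comp, norm_norm]
  rw [EuclideanSpace.norm_eq]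
  have hs : 0 ≤ ∑ i, |z i| := Finset.sum_nonneg fun i _ => abs_nonneg _
  refine Real.sqrt_le_iff.2 ⟨hs, ?_⟩
  have := Finset.sum_sq_le_sq_sum_of_nonneg (s := Finset.univ) (f := fun i => |z i|)
    (fun i _ => abs_nonneg _)
  simpa using this

lemma kernel_moment (hK : 1 ≤ K) (hU : StrongAssumption U m L) (hη : 0 < η) (x : Euc d) :
    Integrable (fun y => ‖y - x‖) (prlmcKernel U η K x) := by
  have hm : 0 < m := hU.2.1
  have hmL : m ≤ L := hU.2.2.1
  have hL : 0 < L := by linarith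
  have := noise_prob (d := d) hK
  have hbp := bpi_prob hK
  have hsm := step_measurable' (η := η) (K := K) hU x
  unfold prlmcKernel
  rw [integrable_map_measure (by fun_prop) hsm.aemeasurable]
  set s : Fin K → ℝ := fun i => Real.sqrt (2 * (i : ℝ) * η / (K : ℝ)) with hs
  have hz : Integrable (fun r : (Fin K → ℝ) × (Fin K → Euc d) × Euc d => ‖r.2.2‖)
      (prlmcNoise d K) :=
    (Integrable.comp_snd (stdGaussian_integrable_norm d) _).comp_snd _
  have hgi : ∀ i, Integrable (fun r : (Fin K → ℝ) × (Fin K → Euc d) × Euc d => ‖r.2.1 i‖)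
      (prlmcNoise d K) := by
    intro i
    have : Integrable (fun g : Fin K → Euc d => ‖g i‖)
        (Measure.pi fun _ : Fin K => _root_.stdGaussian d) :=
      integrable_comp_eval (μ := fun _ : Fin K => _root_.stdGaussian d) (i := i)
        (stdGaussian_integrable_norm d)
    exact (this.comp_fst _).comp_snd _
  have hdom : Integrable (fun r : (Fin K → ℝ) × (Fin K → Euc d) × Euc d =>
      η * ‖gradient U x‖ + η * (∑ i, L * (η * ‖gradient U x‖ + s i * ‖r.2.1 i‖))
        + Real.sqrt (2 * η) * ‖r.2.2‖) (prlmcNoise d K) := by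
    refine ((integrable_const _).add ((integrable_finsetSum _ fun i _ => ?_).const_mul _)).add
      (hz.const_mul _)
    exact ((integrable_const _).add ((hgi i).const_mul _)).const_mul _
  refine hdom.mono' ((hsm.sub measurable_const).norm).aestronglyMeasurable ?_
  filter_upwards [noise_ae (d := d) hK] with r hr
  simp only [Function.comp, norm_norm]
  have e : prlmcStep U η K x r.1 r.2.1 r.2.2 - x = -(η • gradient U x)
      + η • ∑ i : Fin K, r.1 i • (gradient U x - gradient U (prlmcMid U η K x r.2.1 i))
      + Real.sqrt (2 * η) • r.2.2 := by
    simp only [prlmcStep]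
    abel
  rw [e]
  refine norm_add_le_of_le (norm_add_le_of_le ?_ ?_) ?_
  · rw [norm_neg, norm_smul, Real.norm_eq_abs, abs_of_pos hη]
  · rw [norm_smul, Real.norm_eq_abs, abs_of_pos hη]
    refine mul_le_mul_of_nonneg_left (norm_sum_le_of_le _ fun i _ => ?_) hη.le
    rw [norm_smul, Real.norm_eq_abs, abs_of_nonneg (hr i).1]
    refine (mul_le_of_le_one_left (norm_nonneg _) (hr i).2).trans ?_
    refine (grad_lip hU _ _).trans (mul_le_mul_of_nonneg_left ?_ hL.le)
    obtain ⟨h0, h1⟩ := mid_coef hη.le i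
    have e2 : x - prlmcMid U η K x r.2.1 i
        = ((i : ℝ) * η / (K : ℝ)) • gradient U x - s i • r.2.1 i := by
      simp only [prlmcMid, hs]
      abel
    rw [e2]
    refine norm_sub_le_of_le ?_ ?_
    · rw [norm_smul, Real.norm_eq_abs, abs_of_nonneg h0]
      exact mul_le_mul_of_nonneg_right h1 (norm_nonneg _)
    · rw [norm_smul, Real.norm_eq_abs, abs_of_nonneg (Real.sqrt_nonneg _)]
  · rw [norm_smul, Real.norm_eq_abs, abs_of_nonneg (Real.sqrt_nonneg _)]

end Step

/-- Under Assumption 1, for any step size `η ∈ (0, η₀)` (below the threshold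
where a unique stationary distribution `π_η` exists) and any initial state `x`, there is a
constant `δ > 1` (depending on `η`) with `∑_{n} δ^n d_TV(L(X̃_n), π_η) < ∞`; consequently
`d_TV(L(X̃_n), π_η) = o(δ^{-n})`, i.e. `δ^n d_TV(L(X̃_n), π_η) → 0`. -/
theorem stmt1 (m L : ℝ) (hm : 0 < m) (hmL : m ≤ L) :
    ∃ η₀ : ℝ, η₀ ∈ Set.Ioo (0 : ℝ) 1 ∧
      ∀ (d K : ℕ), 1 ≤ K → ∀ U : Euc d → ℝ, StrongAssumption U m L →
        ∀ η : ℝ, η ∈ Set.Ioo (0 : ℝ) η₀ →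
          ∃ πη : Measure (Euc d), IsProbabilityMeasure πη ∧
            πη.bind (prlmcKernel U η K) = πη ∧
            (∀ μ : Measure (Euc d), IsProbabilityMeasure μ →
              μ.bind (prlmcKernel U η K) = μ → μ = πη) ∧
            ∃ δ : ℝ, 1 < δ ∧ ∀ x : Euc d,
              (∑' n : ℕ, ENNReal.ofReal (δ ^ n) *
                  dTV (prlmcIter U η K (Measure.dirac x) n) πη) < ⊤ ∧
              Tendsto (fun n : ℕ => ENNReal.ofReal (δ ^ n) *
                  dTV (prlmcIter U η K (Measure.dirac x) n) πη) atTop (𝓝 0) := by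
  have hL : 0 < L := by linarith
  have hq : 0 < m / (33 * L ^ 2) := by positivity
  refine ⟨min (1 / 2) (m / (33 * L ^ 2)), ⟨lt_min (by norm_num) hq,
    (min_le_left _ _).trans_lt (by norm_num)⟩, ?_⟩
  intro d K hK U hU η hη
  have hη0 : 0 < η := hη.1
  have hηs : η * (33 * L ^ 2) ≤ m := by
    have h1 : η ≤ m / (33 * L ^ 2) := (hη.2.trans_le (min_le_right _ _)).le
    rwa [le_div_iff₀ (by positivity)] at h1
  have hηm : η * m < 1 := by
    have h1 : (η * m) * 33 * L ≤ 1 * L := by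
      have : (η * m) * (33 * L) ≤ (η * L) * (33 * L) := by gcongr
      nlinarith
    have h2 : η * m * 33 ≤ 1 := le_of_mul_le_mul_right h1 hL
    linarith
  have hηm0 : 0 < η * m := mul_pos hη0 hm
  exact abstract_main (kernel_measurable hK hU) (kernel_prob hK hU) (Real.sqrt (1 - η * m))
    (2 / Real.sqrt (2 * η) * Real.sqrt (1 - η * m)) (Real.sqrt_pos.2 (by linarith))
    (by rw [Real.sqrt_lt' one_pos]; linarith) (by positivity)
    (fun c hc g hg h0 h1 hl x y => kernel_contract hK hU hη0 hηs c hc g hg h0 h1 hl x y)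
    (fun A hA x y => kernel_smooth hK hU hη0 hηs A hA x y)
    (fun x => kernel_moment hK hU hη0 x)

end
end

section
/- Let (P_t)_{t≥0} be the Markov semigroup of the Langevin diffusion, i.e. P_t h(x) = E[h(X_t^x)]. Under Assumptions 1 and 3, for every h ∈ C²(ℝ^d, ℝ) with ‖∇h‖ < ∞ and ‖∇²h‖ < ∞ and every t ≥ 0: (i) ‖∇P_t h‖ ≤ ‖∇h‖ e^{−mt}; (ii) there exists a constant C > 0 independent of t and h with ‖∇²P_t h‖ ≤ C(‖∇h‖ + ‖∇²h‖) e^{−mt/2}, where ‖∇f‖ = sup_x |∇f(x)| and ‖∇²f‖ = sup_x ‖∇²f(x)‖_op. -/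
open MeasureTheory ProbabilityTheory Filter
open scoped ENNReal NNReal RealInnerProductSpace Topology BigOperators

noncomputable section

theorem aux_four {E F : Type*} [NormedAddCommGroup E] [NormedSpace ℝ E]
    [NormedAddCommGroup F] [NormedSpace ℝ F] (G : E → F) (K : ℝ) (hG : ContDiff ℝ 2 G)
    (hK : ∀ x, ‖iteratedFDeriv ℝ 2 G x‖ ≤ K) (z b c : E) :
    ‖G (z + b + c) - G (z + b) - G (z + c) + G z‖ ≤ K * ‖b‖ * ‖c‖ := by
  have hd : Differentiable ℝ G := hG.differentiable (by norm_num)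
  have hdd : Differentiable ℝ (fderiv ℝ G) :=
    (hG.fderiv_right (m := 1) (by norm_num)).differentiable (by norm_num)
  have hK' : ∀ x, ‖fderiv ℝ (fderiv ℝ G) x‖ ≤ K := by
    intro x
    have := hK x
    rwa [← norm_iteratedFDeriv_fderiv, norm_iteratedFDeriv_one] at this
  have h1 : ∀ x y, ‖fderiv ℝ G y - fderiv ℝ G x‖ ≤ K * ‖y - x‖ := fun x y =>
    convex_univ.norm_image_sub_le_of_norm_fderiv_le (𝕜 := ℝ) (fun x _ => hdd x)
      (fun x _ => hK' x) (Set.mem_univ x) (Set.mem_univ y)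
  have hφ : ∀ x, HasFDerivAt (fun x => G (x + b) - G x)
      (fderiv ℝ G (x + b) - fderiv ℝ G x) x := by
    intro x
    have h2 : HasFDerivAt (fun x => G (x + b)) (fderiv ℝ G (x + b)) x :=
      (hasFDerivAt_comp_add_right b).2 (hd (x + b)).hasFDerivAt
    exact h2.sub (hd x).hasFDerivAt
  have h3 := convex_univ.norm_image_sub_le_of_norm_hasFDerivWithin_le (𝕜 := ℝ)
    (f := fun x => G (x + b) - G x) (C := K * ‖b‖)
    (fun x _ => (hφ x).hasFDerivWithinAt)
    (fun x _ => by simpa using h1 x (x + b)) (Set.mem_univ z) (Set.mem_univ (z + c))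
  have e : G (z + b + c) - G (z + b) - G (z + c) + G z
      = (G (z + c + b) - G (z + c)) - (G (z + b) - G z) := by
    rw [add_right_comm z b c]; abel
  rw [e]
  simpa using h3

theorem aux_hess {d : ℕ} (f : Euc d → ℝ) (K A : ℝ) (hK : 0 ≤ K) (hA : 0 ≤ A)
    (hl : ∀ x y, |f x - f y| ≤ A * ‖x - y‖)
    (hf : ∀ x u v, |f (x + u + v) - f (x + u) - f (x + v) + f x| ≤ K * ‖u‖ * ‖v‖)
    (y : Euc d) : ‖iteratedFDeriv ℝ 2 f y‖ ≤ K := by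
  rw [← norm_iteratedFDeriv_fderiv, norm_iteratedFDeriv_one]
  by_cases hdf : DifferentiableAt ℝ (fderiv ℝ f) y
  swap
  · rw [fderiv_zero_of_not_differentiableAt hdf]; simpa using hK
  have hlip : LipschitzWith ⟨A, hA⟩ f := LipschitzWith.of_dist_le_mul fun x y => by
    rw [Real.dist_eq, dist_eq_norm]; exact hl x y
  have hdense : Dense {x | DifferentiableAt ℝ f x} :=
    Measure.dense_of_ae (μ := (volume : Measure (Euc d))) hlip.ae_differentiableAt
  have hS : ∀ z w, DifferentiableAt ℝ f z → DifferentiableAt ℝ f w →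
      ‖fderiv ℝ f w - fderiv ℝ f z‖ ≤ K * ‖w - z‖ := by
    intro z w hz hw
    have h1 : HasFDerivAt (fun v => f (w + v) - f (z + v)) (fderiv ℝ f w - fderiv ℝ f z) 0 := by
      have a1 : HasFDerivAt (fun v => f (w + v)) (fderiv ℝ f w) 0 := by
        rw [hasFDerivAt_comp_add_left]; simpa using hw.hasFDerivAt
      have a2 : HasFDerivAt (fun v => f (z + v)) (fderiv ℝ f z) 0 := by
        rw [hasFDerivAt_comp_add_left]; simpa using hz.hasFDerivAt
      exact a1.sub a2
    refine h1.le_of_lip' (by positivity) (Eventually.of_forall fun v => ?_)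
    have := hf z (w - z) v
    rw [Real.norm_eq_abs]
    simp only [add_sub_cancel, add_zero, sub_zero] at this ⊢
    convert this using 2
    ring
  set T := fderiv ℝ (fderiv ℝ f) y
  have hT : HasFDerivAt (fderiv ℝ f) T y := hdf.hasFDerivAt
  refine T.opNorm_le_bound hK fun v => ?_
  have key : ∀ v : Euc d, ∃ w : ℕ → Euc d, (∀ n, DifferentiableAt ℝ f (y + w n)) ∧
      Tendsto (fun n : ℕ => (n : ℝ) • w n) atTop (𝓝 v) := by
    intro v
    have : ∀ n : ℕ, ∃ x, DifferentiableAt ℝ f x ∧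
        dist (y + (n : ℝ)⁻¹ • v) x < (1 / ((n : ℝ) + 1)) ^ 2 := by
      intro n
      obtain ⟨x, hx, hx'⟩ := hdense.exists_dist_lt (y + (n : ℝ)⁻¹ • v)
        (ε := (1 / ((n : ℝ) + 1)) ^ 2) (by positivity)
      exact ⟨x, hx, hx'⟩
    choose x hx hx' using this
    refine ⟨fun n => x n - y, fun n => by simpa using hx n, ?_⟩
    rw [tendsto_iff_norm_sub_tendsto_zero]
    refine squeeze_zero' (Eventually.of_forall fun n => norm_nonneg _) ?_
      tendsto_one_div_add_atTop_nhds_zero_nat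
    filter_upwards [eventually_gt_atTop 0] with n hn
    have hn' : (0 : ℝ) < n := by exact_mod_cast hn
    have e : (n : ℝ) • (x n - y) - v = (n : ℝ) • (x n - (y + (n : ℝ)⁻¹ • v)) := by
      simp only [smul_sub, smul_add, smul_smul, mul_inv_cancel₀ hn'.ne', one_smul]; abel
    rw [e, norm_smul, Real.norm_of_nonneg hn'.le]
    have h1 := (hx' n).le
    rw [dist_comm, dist_eq_norm] at h1
    calc (n : ℝ) * _ ≤ ((n : ℝ) + 1) * (1 / ((n : ℝ) + 1)) ^ 2 := by gcongr; linarith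
      _ = 1 / ((n : ℝ) + 1) := by field_simp
  obtain ⟨w, hw, hwv⟩ := key v
  obtain ⟨z, hz, hzv⟩ := key 0
  have hc : ∀ (w : ℕ → Euc d) (v : Euc d), Tendsto (fun n : ℕ => (n : ℝ) • w n) atTop (𝓝 v) →
      Tendsto w atTop (𝓝 0) := by
    intro w v hw
    have h1 := (tendsto_inv_atTop_nhds_zero_nat (𝕜 := ℝ)).smul hw
    rw [zero_smul] at h1
    refine h1.congr' ?_
    filter_upwards [eventually_gt_atTop 0] with n hn
    have hn' : (n : ℝ) ≠ 0 := by exact_mod_cast hn.ne'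
    rw [smul_smul, inv_mul_cancel₀ hn', one_smul]
  have l1 : Tendsto (fun n : ℕ => (n : ℝ) • (fderiv ℝ f (y + w n) - fderiv ℝ f y)) atTop (𝓝 (T v)) :=
    (hasFDerivWithinAt_univ.2 hT).lim (hc _ _ hwv) (.of_forall fun _ => Set.mem_univ _) hwv
  have l2 : Tendsto (fun n : ℕ => (n : ℝ) • (fderiv ℝ f (y + z n) - fderiv ℝ f y)) atTop (𝓝 (T 0)) :=
    (hasFDerivWithinAt_univ.2 hT).lim (hc _ _ hzv) (.of_forall fun _ => Set.mem_univ _) hzv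
  have l3 := (l1.sub l2).norm
  have l4 := ((hwv.sub hzv).norm).const_mul K
  simp only [map_zero, sub_zero] at l3 l4
  refine le_of_tendsto_of_tendsto' l3 l4 fun n => ?_
  rw [← smul_sub, ← smul_sub, norm_smul, norm_smul, sub_sub_sub_cancel_right]
  have := hS _ _ (hz n) (hw n)
  rw [add_sub_add_left_eq_sub] at this
  calc _ ≤ ‖(n : ℝ)‖ * (K * ‖w n - z n‖) := by gcongr
    _ = _ := by ring

theorem aux_mono {d : ℕ} {U : Euc d → ℝ} {m L : ℝ} (hU : StrongAssumption U m L)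
    (x y : Euc d) : m * ‖x - y‖ ^ 2 ≤ ⟪x - y, gradient U x - gradient U y⟫ := by
  have h1 := (hU.2.2.2.1 x y).1
  have h2 := (hU.2.2.2.1 y x).1
  rw [norm_sub_rev y x] at h2
  have e1 : ⟪gradient U x, y - x⟫ = - ⟪x - y, gradient U x⟫ := by
    rw [real_inner_comm, ← neg_sub x y, inner_neg_left]
  have e2 : ⟪gradient U y, x - y⟫ = ⟪x - y, gradient U y⟫ := real_inner_comm _ _
  rw [inner_sub_right]
  linarith

theorem aux_contr {d : ℕ} {m : ℝ} (Z g : ℝ → Euc d) 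
    (hZ : ∀ t, 0 ≤ t → HasDerivWithinAt Z (- g t) (Set.Ici 0) t)
    (hg : ∀ t, 0 ≤ t → m * ‖Z t‖ ^ 2 ≤ ⟪Z t, g t⟫) (t : ℝ) (ht : 0 ≤ t) :
    ‖Z t‖ ≤ Real.exp (-m * t) * ‖Z 0‖ := by
  have hd : ∀ t, 0 ≤ t → HasDerivWithinAt (fun t => Real.exp (2 * m * t) * ‖Z t‖ ^ 2)
      (Real.exp (2 * m * t) * (2 * m) * ‖Z t‖ ^ 2
        + Real.exp (2 * m * t) * (2 * ⟪Z t, - g t⟫)) (Set.Ici 0) t := by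
    intro t ht
    have h1 : HasDerivAt (fun t => Real.exp (2 * m * t)) (Real.exp (2 * m * t) * (2 * m)) t := by
      simpa using ((hasDerivAt_id t).const_mul (2 * m)).exp
    exact h1.hasDerivWithinAt.mul (hZ t ht).norm_sq
  have ha : AntitoneOn (fun t => Real.exp (2 * m * t) * ‖Z t‖ ^ 2) (Set.Ici 0) := by
    refine antitoneOn_of_hasDerivWithinAt_nonpos (convex_Ici 0)
      (fun t ht => (hd t ht).continuousWithinAt)
      (fun t ht => (hd t (interior_subset ht)).mono interior_subset) ?_
    intro t ht
    have := hg t (interior_subset ht)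
    have he := Real.exp_pos (2 * m * t)
    rw [inner_neg_right]
    nlinarith
  have h := ha (Set.mem_Ici.2 le_rfl) (Set.mem_Ici.2 ht) ht
  simp only [mul_zero, Real.exp_zero, one_mul] at h
  refine abs_le_of_sq_le_sq' ?_ (by positivity) |>.2
  have e : Real.exp (-m * t) ^ 2 * Real.exp (2 * m * t) = 1 := by
    rw [← Real.exp_nat_mul, ← Real.exp_add]; simp; ring
  calc ‖Z t‖ ^ 2 = Real.exp (-m * t) ^ 2 * (Real.exp (2 * m * t) * ‖Z t‖ ^ 2) := by
        rw [← mul_assoc, e, one_mul]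
    _ ≤ Real.exp (-m * t) ^ 2 * ‖Z 0‖ ^ 2 := by gcongr
    _ = _ := by ring

theorem aux_second {d : ℕ} {m A : ℝ} (hm : 0 < m) (hA : 0 ≤ A) (Z g : ℝ → Euc d)
    (hZ : ∀ t, 0 ≤ t → HasDerivWithinAt Z (- g t) (Set.Ici 0) t) (h0 : Z 0 = 0)
    (hg : ∀ t, 0 ≤ t → m * ‖Z t‖ ^ 2 - ‖Z t‖ * (A * Real.exp (-m * t) ^ 2) ≤ ⟪Z t, g t⟫)
    (t : ℝ) (ht : 0 ≤ t) :
    ‖Z t‖ ≤ A / m * Real.exp (-m * t / 2) := by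
  have hd : ∀ t, 0 ≤ t → HasDerivWithinAt
      (fun t => Real.exp (m * t) * ‖Z t‖ ^ 2 + A ^ 2 / (3 * m ^ 2) * Real.exp (-3 * m * t))
      ((Real.exp (m * t) * m * ‖Z t‖ ^ 2 + Real.exp (m * t) * (2 * ⟪Z t, - g t⟫))
        + A ^ 2 / (3 * m ^ 2) * (Real.exp (-3 * m * t) * (-3 * m))) (Set.Ici 0) t := by
    intro t ht
    have h1 : HasDerivAt (fun t => Real.exp (m * t)) (Real.exp (m * t) * m) t := by
      simpa using ((hasDerivAt_id t).const_mul m).exp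
    have h2 : HasDerivAt (fun t => Real.exp (-3 * m * t)) (Real.exp (-3 * m * t) * (-3 * m)) t := by
      simpa using ((hasDerivAt_id t).const_mul (-3 * m)).exp
    exact (h1.hasDerivWithinAt.mul (hZ t ht).norm_sq).add (h2.hasDerivWithinAt.const_mul _)
  have ha : AntitoneOn (fun t => Real.exp (m * t) * ‖Z t‖ ^ 2
      + A ^ 2 / (3 * m ^ 2) * Real.exp (-3 * m * t)) (Set.Ici 0) := by
    refine antitoneOn_of_hasDerivWithinAt_nonpos (convex_Ici 0)
      (fun t ht => (hd t ht).continuousWithinAt)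
      (fun t ht => (hd t (interior_subset ht)).mono interior_subset) ?_
    intro t ht
    have h1 := hg t (interior_subset ht)
    have he := Real.exp_pos (m * t)
    rw [inner_neg_right]
    have e3 : Real.exp (-3 * m * t) = Real.exp (m * t) * (Real.exp (-m * t) ^ 2) ^ 2 := by
      rw [← pow_mul, ← Real.exp_nat_mul, ← Real.exp_add]; congr 1; push_cast; ring
    rw [e3]
    set q := Real.exp (-m * t) ^ 2
    set r := Real.exp (m * t)
    set n := ‖Z t‖
    have e4 : A ^ 2 / (3 * m ^ 2) * (r * q ^ 2 * (-3 * m)) = - (r * ((A * q) ^ 2 / m)) := by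
      field_simp
    rw [e4]
    have h2 : 2 * n * (A * q) ≤ m * n ^ 2 + (A * q) ^ 2 / m := by
      have : m * n ^ 2 + (A * q) ^ 2 / m - 2 * n * (A * q) = (m * n - A * q) ^ 2 / m := by
        field_simp; ring
      have : 0 ≤ (m * n - A * q) ^ 2 / m := by positivity
      linarith
    have h3 : 0 ≤ r * (- m * n ^ 2 + 2 * ⟪Z t, g t⟫ + (A * q) ^ 2 / m) :=
      mul_nonneg he.le (by linarith)
    linarith
  have h := ha (Set.mem_Ici.2 le_rfl) (Set.mem_Ici.2 ht) ht
  simp only [mul_zero, Real.exp_zero, one_mul, h0, norm_zero, mul_one] at h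
  have h5 : 0 ≤ A ^ 2 / (3 * m ^ 2) * Real.exp (-3 * m * t) := by positivity
  have h6 : A ^ 2 / (3 * m ^ 2) ≤ (A / m) ^ 2 := by
    rw [div_pow]; gcongr; nlinarith [sq_nonneg m]
  have h7 : Real.exp (m * t) * ‖Z t‖ ^ 2 ≤ (A / m) ^ 2 := by
    simp only [zero_pow two_ne_zero, zero_add] at h; linarith
  refine abs_le_of_sq_le_sq' ?_ (by positivity) |>.2
  have e : Real.exp (-m * t / 2) ^ 2 * Real.exp (m * t) = 1 := by
    rw [← Real.exp_nat_mul, ← Real.exp_add]; simp; ring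
  calc ‖Z t‖ ^ 2 = Real.exp (-m * t / 2) ^ 2 * (Real.exp (m * t) * ‖Z t‖ ^ 2) := by
        rw [← mul_assoc, e, one_mul]
    _ ≤ Real.exp (-m * t / 2) ^ 2 * (A / m) ^ 2 := by gcongr
    _ = _ := by ring

/-- Pathwise solution. -/
def PathSol {d : ℕ} (U : Euc d → ℝ) (b Y : ℝ → Euc d) (x : Euc d) : Prop :=
  Continuous Y ∧ ∀ t, 0 ≤ t →
    Y t = x - (∫ s in (0:ℝ)..t, gradient U (Y s)) + Real.sqrt 2 • b t

theorem aux_gcont {d : ℕ} {U : Euc d → ℝ} (h : ContDiff ℝ 1 U) : Continuous (gradient U) :=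
  (InnerProductSpace.toDual ℝ (Euc d)).symm.continuous.comp (h.continuous_fderiv (by norm_num))

theorem aux_int {d : ℕ} {U : Euc d → ℝ} (h : ContDiff ℝ 1 U) {Y : ℝ → Euc d} (hY : Continuous Y)
    (t : ℝ) : HasDerivAt (fun t => ∫ s in (0:ℝ)..t, gradient U (Y s)) (gradient U (Y t)) t :=
  ((aux_gcont h).comp hY).integral_hasStrictDerivAt 0 t |>.hasDerivAt

theorem path_contr {d : ℕ} {U : Euc d → ℝ} {m L : ℝ} (hU : StrongAssumption U m L)
    {b Y Z : ℝ → Euc d} {x y : Euc d} (hY : PathSol U b Y x) (hZ : PathSol U b Z y)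
    (t : ℝ) (ht : 0 ≤ t) : ‖Y t - Z t‖ ≤ Real.exp (-m * t) * ‖x - y‖ := by
  have e : ∀ t, 0 ≤ t → Y t - Z t = x - y - ((∫ s in (0:ℝ)..t, gradient U (Y s))
      - ∫ s in (0:ℝ)..t, gradient U (Z s)) := by
    intro t ht
    rw [hY.2 t ht, hZ.2 t ht]; abel
  have h := aux_contr (m := m) (fun t => Y t - Z t) (fun t => gradient U (Y t) - gradient U (Z t))
    (fun t ht => ?_) (fun t _ => aux_mono hU _ _) t ht
  · have h0 := e 0 le_rfl
    simp only [intervalIntegral.integral_same, sub_zero] at h0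
    simpa only [h0] using h
  · have := ((aux_int hU.1 hY.1 t).sub (aux_int hU.1 hZ.1 t)).const_sub (x - y)
    exact this.hasDerivWithinAt.congr (fun s hs => e s hs) (e t ht)

theorem grad_four {d : ℕ} {U : Euc d → ℝ} {Lt : ℝ} (hU3 : ThirdDerivBounded U Lt)
    (z b c : Euc d) : ‖gradient U (z + b + c) - gradient U (z + b) - gradient U (z + c)
      + gradient U z‖ ≤ Lt * ‖b‖ * ‖c‖ := by
  have := aux_four (fderiv ℝ U) Lt (hU3.1.fderiv_right (by norm_num))
    (fun x => by rw [norm_iteratedFDeriv_fderiv]; exact hU3.2 x) z b c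
  unfold gradient
  rw [← map_sub, ← map_sub, ← map_add, LinearIsometryEquiv.norm_map]
  exact this

theorem path_second {d : ℕ} {U : Euc d → ℝ} {m L Lt : ℝ} (hU : StrongAssumption U m L)
    (hU3 : ThirdDerivBounded U Lt) {b Y1 Y2 Y3 Y4 : ℝ → Euc d} {x u v : Euc d}
    (h1 : PathSol U b Y1 (x + u + v)) (h2 : PathSol U b Y2 (x + u)) (h3 : PathSol U b Y3 (x + v))
    (h4 : PathSol U b Y4 x) (t : ℝ) (ht : 0 ≤ t) :
    ‖Y1 t - Y2 t - Y3 t + Y4 t‖ ≤ Lt * ‖u‖ * ‖v‖ / m * Real.exp (-m * t / 2) := by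
  have hLt : 0 ≤ Lt := (norm_nonneg _).trans (hU3.2 0)
  have e : ∀ t, 0 ≤ t → Y1 t - Y2 t - Y3 t + Y4 t = 0 - ((∫ s in (0:ℝ)..t, gradient U (Y1 s))
      - (∫ s in (0:ℝ)..t, gradient U (Y2 s)) - (∫ s in (0:ℝ)..t, gradient U (Y3 s))
      + ∫ s in (0:ℝ)..t, gradient U (Y4 s)) := by
    intro t ht
    rw [h1.2 t ht, h2.2 t ht, h3.2 t ht, h4.2 t ht]; abel
  refine aux_second hU.2.1 (by positivity) (fun t => Y1 t - Y2 t - Y3 t + Y4 t)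
    (fun t => gradient U (Y1 t) - gradient U (Y2 t) - gradient U (Y3 t) + gradient U (Y4 t))
    (fun t ht => ?_) ?_ (fun t ht => ?_) t ht
  · have := ((((aux_int hU.1 h1.1 t).sub (aux_int hU.1 h2.1 t)).sub (aux_int hU.1 h3.1 t)).add
      (aux_int hU.1 h4.1 t)).const_sub 0
    exact this.hasDerivWithinAt.congr (fun s hs => e s hs) (e t ht)
  · simpa using e 0 le_rfl
  · have c2 := path_contr hU h2 h4 t ht
    have c3 := path_contr hU h3 h4 t ht
    simp only [add_sub_cancel_left] at c2 c3
    have f4 := grad_four hU3 (Y4 t) (Y2 t - Y4 t) (Y3 t - Y4 t)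
    have mo := aux_mono hU (Y1 t) (Y4 t + (Y2 t - Y4 t) + (Y3 t - Y4 t))
    have eD : Y1 t - (Y4 t + (Y2 t - Y4 t) + (Y3 t - Y4 t)) = Y1 t - Y2 t - Y3 t + Y4 t := by abel
    rw [eD] at mo
    simp only [add_sub_cancel] at f4 mo
    set p := Y2 t + (Y3 t - Y4 t)
    set D := Y1 t - Y2 t - Y3 t + Y4 t
    have eg : gradient U (Y1 t) - gradient U (Y2 t) - gradient U (Y3 t) + gradient U (Y4 t)
      = (gradient U (Y1 t) - gradient U p) +
        (gradient U p - gradient U (Y2 t) - gradient U (Y3 t) + gradient U (Y4 t)) := by abel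
    rw [eg, inner_add_right]
    set R := gradient U p - gradient U (Y2 t) - gradient U (Y3 t) + gradient U (Y4 t)
    have hR : ‖R‖ ≤ Lt * ‖u‖ * ‖v‖ * Real.exp (-m * t) ^ 2 := by
      calc ‖R‖ ≤ Lt * ‖Y2 t - Y4 t‖ * ‖Y3 t - Y4 t‖ := f4
        _ ≤ Lt * (Real.exp (-m * t) * ‖u‖) * (Real.exp (-m * t) * ‖v‖) := by gcongr
        _ = _ := by ring
    have i1 := neg_le_of_abs_le (abs_real_inner_le_norm D R)
    have i2 := mul_le_mul_of_nonneg_left hR (norm_nonneg D)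
    linarith

theorem h_lip {d : ℕ} {h : Euc d → ℝ} {M1 : ℝ} (hh : ContDiff ℝ 2 h)
    (h1 : ∀ y, ‖gradient h y‖ ≤ M1) (x y : Euc d) : |h x - h y| ≤ M1 * ‖x - y‖ := by
  refine convex_univ.norm_image_sub_le_of_norm_fderiv_le (𝕜 := ℝ)
    (fun x _ => hh.differentiable (by norm_num) x) (fun x _ => ?_) (Set.mem_univ y) (Set.mem_univ x)
  have := h1 x
  rwa [gradient, LinearIsometryEquiv.norm_map] at this

theorem path_h {d : ℕ} {U : Euc d → ℝ} {m L Lt : ℝ} (hU : StrongAssumption U m L)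
    (hU3 : ThirdDerivBounded U Lt) {b Y1 Y2 Y3 Y4 : ℝ → Euc d} {x u v : Euc d}
    (h1 : PathSol U b Y1 (x + u + v)) (h2 : PathSol U b Y2 (x + u)) (h3 : PathSol U b Y3 (x + v))
    (h4 : PathSol U b Y4 x) {h : Euc d → ℝ} {M1 M2 : ℝ} (hh : ContDiff ℝ 2 h)
    (hM1 : ∀ y, ‖gradient h y‖ ≤ M1) (hM2 : ∀ y, ‖iteratedFDeriv ℝ 2 h y‖ ≤ M2)
    (t : ℝ) (ht : 0 ≤ t) :
    |h (Y1 t) - h (Y2 t) - h (Y3 t) + h (Y4 t)| ≤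
      (Lt / m + 1) * (M1 + M2) * Real.exp (-m * t / 2) * ‖u‖ * ‖v‖ := by
  have hm := hU.2.1
  have hLt : 0 ≤ Lt := (norm_nonneg _).trans (hU3.2 0)
  have hM1' : 0 ≤ M1 := (norm_nonneg _).trans (hM1 0)
  have hM2' : 0 ≤ M2 := (norm_nonneg _).trans (hM2 0)
  have c2 := path_contr hU h2 h4 t ht
  have c3 := path_contr hU h3 h4 t ht
  simp only [add_sub_cancel_left] at c2 c3
  have f4 := aux_four h M2 hh hM2 (Y4 t) (Y2 t - Y4 t) (Y3 t - Y4 t)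
  have mo := h_lip hh hM1 (Y1 t) (Y4 t + (Y2 t - Y4 t) + (Y3 t - Y4 t))
  have eD : Y1 t - (Y4 t + (Y2 t - Y4 t) + (Y3 t - Y4 t)) = Y1 t - Y2 t - Y3 t + Y4 t := by abel
  rw [eD] at mo
  simp only [add_sub_cancel, Real.norm_eq_abs] at f4 mo
  have s := path_second hU hU3 h1 h2 h3 h4 t ht
  set p := Y2 t + (Y3 t - Y4 t)
  set E := Real.exp (-m * t / 2) with hE
  have hE0 : 0 < E := Real.exp_pos _
  have hEE : Real.exp (-m * t) ^ 2 ≤ E := by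
    rw [hE, ← Real.exp_nat_mul]
    apply Real.exp_le_exp.2
    push_cast
    nlinarith [mul_nonneg hm.le ht]
  have a1 : |h (Y1 t) - h p| ≤ M1 * (Lt / m * E * ‖u‖ * ‖v‖) := by
    refine mo.trans (mul_le_mul_of_nonneg_left (s.trans (le_of_eq ?_)) hM1')
    ring
  have a2 : |h p - h (Y2 t) - h (Y3 t) + h (Y4 t)| ≤ M2 * (E * ‖u‖ * ‖v‖) := by
    calc _ ≤ M2 * ‖Y2 t - Y4 t‖ * ‖Y3 t - Y4 t‖ := f4
      _ ≤ M2 * (Real.exp (-m * t) * ‖u‖) * (Real.exp (-m * t) * ‖v‖) := by gcongr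
      _ = M2 * (Real.exp (-m * t) ^ 2 * ‖u‖ * ‖v‖) := by ring
      _ ≤ _ := by gcongr
  have a3 : |h (Y1 t) - h (Y2 t) - h (Y3 t) + h (Y4 t)| ≤
      |h (Y1 t) - h p| + |h p - h (Y2 t) - h (Y3 t) + h (Y4 t)| := by
    refine le_trans (le_of_eq ?_) (abs_add_le _ _)
    congr 1; ring
  have r1 : 0 ≤ M1 * (E * ‖u‖ * ‖v‖) := by positivity
  have r2 : 0 ≤ M2 * (Lt / m * E * ‖u‖ * ‖v‖) := by positivity
  linarith

theorem aux_integral {Ω : Type} [MeasurableSpace Ω] (P : Measure Ω) [IsProbabilityMeasure P]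
    (f : Ω → ℝ) (K : ℝ) (h : ∀ᵐ ω ∂P, |f ω| ≤ K) : |∫ ω, f ω ∂P| ≤ K := by
  have := norm_integral_le_of_norm_le_const (μ := P) (f := f) (C := K) h
  simpa using this

/-- Under Assumptions 1 and 3, the Langevin semigroup
`P_t h(x) = E[h(X_t^x)]` satisfies `‖∇P_t h‖ ≤ ‖∇h‖ e^{−mt}` and
`‖∇²P_t h‖ ≤ C (‖∇h‖ + ‖∇²h‖) e^{−mt/2}` for every `h ∈ C²` with bounded first and second
derivatives (bounds `M1`, `M2`), with `C` independent of `t` and `h`. -/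
theorem stmt14 (d : ℕ) (m L Lt : ℝ) (U : Euc d → ℝ)
    (hU : StrongAssumption U m L) (hU3 : ThirdDerivBounded U Lt)
    (Ω : Type) [MeasurableSpace Ω] (P : Measure Ω) [IsProbabilityMeasure P]
    (B : ℝ → Ω → Euc d) (X : Euc d → ℝ → Ω → Euc d)
    (hB : IsBrownianMotion P B) (hX : ∀ y : Euc d, SolvesLangevin U P B (X y) y) :
    (∀ (h : Euc d → ℝ) (M1 M2 : ℝ), ContDiff ℝ 2 h →
      (∀ y, ‖gradient h y‖ ≤ M1) → (∀ y, ‖iteratedFDeriv ℝ 2 h y‖ ≤ M2) →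
      ∀ t : ℝ, 0 ≤ t → ∀ y : Euc d,
        ‖gradient (fun z => ∫ ω, h (X z t ω) ∂P) y‖ ≤ M1 * Real.exp (-m * t)) ∧
    ∃ C > (0 : ℝ), ∀ (h : Euc d → ℝ) (M1 M2 : ℝ), ContDiff ℝ 2 h →
      (∀ y, ‖gradient h y‖ ≤ M1) → (∀ y, ‖iteratedFDeriv ℝ 2 h y‖ ≤ M2) →
      ∀ t : ℝ, 0 ≤ t → ∀ y : Euc d,
        ‖iteratedFDeriv ℝ 2 (fun z => ∫ ω, h (X z t ω) ∂P) y‖ ≤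
          C * (M1 + M2) * Real.exp (-m * t / 2) := by
  classical
  have hm := hU.2.1
  have hLt : 0 ≤ Lt := (norm_nonneg _).trans (hU3.2 0)
  have hP : ∀ y, ∀ᵐ ω ∂P, PathSol U (fun t => B t ω) (fun t => X y t ω) y := fun y => (hX y).2
  have hnat : ∀ (h : Euc d → ℝ) (M1 : ℝ), ContDiff ℝ 2 h →
      (∀ y, ‖gradient h y‖ ≤ M1) → ∀ t : ℝ, 0 ≤ t → ∀ y z : Euc d,
      ∀ᵐ ω ∂P, |h (X y t ω) - h (X z t ω)| ≤ M1 * Real.exp (-m * t) * ‖y - z‖ := by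
    intro h M1 hh hM1 t ht y z
    have hM1' : 0 ≤ M1 := (norm_nonneg _).trans (hM1 0)
    filter_upwards [hP y, hP z] with ω hy hz
    rw [mul_assoc]
    exact (h_lip hh hM1 _ _).trans
      (mul_le_mul_of_nonneg_left (path_contr hU hy hz t ht) hM1')
  have hint : ∀ (h : Euc d → ℝ) (M1 : ℝ), ContDiff ℝ 2 h →
      (∀ y, ‖gradient h y‖ ≤ M1) → ∀ t : ℝ, 0 ≤ t →
      (∀ y, Integrable (fun ω => h (X y t ω)) P) ∨
        (fun z => ∫ ω, h (X z t ω) ∂P) = fun _ => 0 := by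
    intro h M1 hh hM1 t ht
    by_cases hi : ∃ z, Integrable (fun ω => h (X z t ω)) P
    · left
      obtain ⟨z, hz⟩ := hi
      intro y
      have hd : Integrable (fun ω => h (X y t ω) - h (X z t ω)) P := by
        refine Integrable.of_bound ?_ _ (hnat h M1 hh hM1 t ht y z)
        exact ((hh.continuous.measurable.comp ((hX y).1 t)).sub
          (hh.continuous.measurable.comp ((hX z).1 t))).aestronglyMeasurable
      refine (hd.add hz).congr (Eventually.of_forall fun ω => ?_)
      simp
    · right
      push Not at hi
      funext z
      exact integral_undef (hi z)
  have hlip : ∀ (h : Euc d → ℝ) (M1 : ℝ), ContDiff ℝ 2 h →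
      (∀ y, ‖gradient h y‖ ≤ M1) → ∀ t : ℝ, 0 ≤ t → ∀ y z : Euc d,
      |(∫ ω, h (X y t ω) ∂P) - ∫ ω, h (X z t ω) ∂P| ≤ M1 * Real.exp (-m * t) * ‖y - z‖ := by
    intro h M1 hh hM1 t ht y z
    have hM1' : 0 ≤ M1 := (norm_nonneg _).trans (hM1 0)
    rcases hint h M1 hh hM1 t ht with hi | hi
    · rw [← integral_sub (hi y) (hi z)]
      exact aux_integral P _ _ (hnat h M1 hh hM1 t ht y z)
    · have hi' := fun z => congrFun hi z
      rw [hi', hi']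
      simp only [sub_self, abs_zero]
      positivity
  constructor
  · intro h M1 M2 hh hM1 hM2 t ht y
    have hM1' : 0 ≤ M1 := (norm_nonneg _).trans (hM1 0)
    rw [gradient, LinearIsometryEquiv.norm_map]
    have hl : LipschitzWith ⟨M1 * Real.exp (-m * t), by positivity⟩
        (fun z => ∫ ω, h (X z t ω) ∂P) := LipschitzWith.of_dist_le_mul fun x y => by
      rw [Real.dist_eq, dist_eq_norm]; exact hlip h M1 hh hM1 t ht x y
    exact norm_fderiv_le_of_lipschitz ℝ hl
  · refine ⟨Lt / m + 1, by positivity, ?_⟩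
    intro h M1 M2 hh hM1 hM2 t ht y
    have hM1' : 0 ≤ M1 := (norm_nonneg _).trans (hM1 0)
    have hM2' : 0 ≤ M2 := (norm_nonneg _).trans (hM2 0)
    refine aux_hess _ _ (M1 * Real.exp (-m * t)) (by positivity) (by positivity)
      (hlip h M1 hh hM1 t ht) ?_ y
    intro x u v
    rcases hint h M1 hh hM1 t ht with hi | hi
    · have e : (∫ ω, (h (X (x + u + v) t ω) - h (X (x + u) t ω) - h (X (x + v) t ω)
          + h (X x t ω)) ∂P) = (∫ ω, h (X (x + u + v) t ω) ∂P) - (∫ ω, h (X (x + u) t ω) ∂P)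
          - (∫ ω, h (X (x + v) t ω) ∂P) + ∫ ω, h (X x t ω) ∂P := by
        have i1 := hi (x + u + v)
        have i2 := hi (x + u)
        have i3 := hi (x + v)
        have i12 : Integrable (fun ω => h (X (x + u + v) t ω) - h (X (x + u) t ω)) P := i1.sub i2
        have i123 : Integrable (fun ω => h (X (x + u + v) t ω) - h (X (x + u) t ω)
          - h (X (x + v) t ω)) P := i12.sub i3
        rw [integral_add i123 (hi x), integral_sub i12 i3, integral_sub i1 i2]
      rw [← e]
      refine aux_integral P _ _ ?_
      filter_upwards [hP (x + u + v), hP (x + u), hP (x + v), hP x] with ω w1 w2 w3 w4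
      exact path_h hU hU3 w1 w2 w3 w4 hh hM1 hM2 t ht
    · have hi' := fun z => congrFun hi z
      simp only [hi']
      simp only [sub_self, add_zero, abs_zero]
      positivity
end
end
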